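/- There is a positive constant c > 0 such that for every ε > 0 the following holds: if n is sufficiently large with respect to ε, then for every real number a, Pr(|per M_n − a| ≤ n^{n/2−εn}) ≤ n^{−c}. In particular, Pr(per M_n = a) ≤ n^{−c} for every real a. -/

import Mathlib

/-!
The rows and columns of the symmetric sign matrix are revealed one at a time, and submatrix
permanents ("minors") of the leading `t × t` block are followed. Each new row and column expresses a
minor of the larger block as a linear, bilinear or quadratic form in fresh signs whose coefficients
are minors of the old block, so a single large coefficient keeps the form large with a definite
probability. Since the matrix is symmetric, the new row and the new column carry the same signs, and
the pairs of deleted sets `(I, J)` have to be handled with care: only pairs with `I ≠ J` are kept.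

*Growth.* Let `k = n - 1 - 2 j` with `j ≈ γ n`. For a set `A` of rows, the sum of the squares of all
minors with rows `A` gains a factor `θ = n ^ (1 - ε / 2)` each time a new row joins `A`, unless an
event of probability at most a prescribed constant `η` occurs (a second moment computation for the
quadratic chaos, combined with the Littlewood–Offord inequality). A union bound over the failing
rounds shows that, up to an exponentially small probability, at time `k` some minor with only a few
deleted rows and columns exceeds `Λ ≈ n ^ (n / 2 - ε n)`.

*Descent.* A minor of the `t × t` block is heavy if it is at least `Λ (2 / 3) ^ t` in absolute
value. The `potential` is the least weight `#I + 3 (#(I \ J) - 2)` of the deleted sets of a heavy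
minor. It goes up by at most `1` per round, and it goes down with a probability large enough to give
a supermartingale: two missing indices are added back at once, or, when `#(I \ J) ≥ 2`, among three
minors linked by exchanging deleted indices two must have a large sum, and such a sum is a mixed
coefficient of a quadratic form. Thus the `lyapunov` function of the potential contracts until the
potential is `1`, that is, until there is an off-diagonal heavy minor with one deleted row and one
deleted column.

*Density.* From potential `1`, the minor deleting the two newest indices is heavy two rounds later
with probability at least `1 / 4`; if a positive proportion of the first-order minors is heavy
(`IsDense`), this probability is `1 - O(n ^ (-1/2))`, by the Littlewood–Offord inequality applied
twice. By exchangeability of the indices all off-diagonal first-order minors have the same law, so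
the expectation of the Lyapunov function on the event that heavy minors are not dense contracts by a
constant factor every two rounds, up to an error `O(n ^ (-1/2))`.

*Last row.* When heavy first-order minors are dense, the permanent is a quadratic form in the last
row with many large coefficients. Decoupling (squaring the probability and resampling half of the
signs) reduces it to a bilinear form, and costs a square root: the probability of a small ball is
`O(n ^ (-1/4))`. With the other errors, this is below `n ^ (-1/8)` for large `n`.
-/

open Finset

/-- The real number (`1` or `-1`) associated to a Boolean: a Rademacher value. -/
noncomputable def rad (b : Bool) : ℝ := if b then 1 else -1

/-- The permanent of a square real matrix. -/
noncomputable def perm {n : ℕ} (M : Matrix (Fin n) (Fin n) ℝ) : ℝ :=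
  ∑ σ : Equiv.Perm (Fin n), ∏ i, M i (σ i)

/-- The symmetric `n × n` sign matrix determined by Boolean data `ω` (the entries on and
above the diagonal are `rad (ω i j)` for `i ≤ j`; below-diagonal entries are given by
symmetry). As `ω` ranges uniformly over all Boolean data, this is exactly the random
symmetric matrix `M_n` with i.i.d. Rademacher entries on and above the diagonal. -/
noncomputable def symMat (n : ℕ) (ω : Fin n → Fin n → Bool) : Matrix (Fin n) (Fin n) ℝ :=
  fun i j => if i ≤ j then rad (ω i j) else rad (ω j i)

open Classical in
/-- The probability of the event `P` for the random symmetric Rademacher matrix `M_n`. -/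
noncomputable def prob (n : ℕ) (P : Matrix (Fin n) (Fin n) ℝ → Prop) : ℝ :=
  ((univ.filter fun ω : Fin n → Fin n → Bool => P (symMat n ω)).card : ℝ) / 2 ^ (n * n)

namespace PermanentAnticoncentration

open scoped BigOperators

section SubmatrixPermanents

variable {ι κ R : Type*} [DecidableEq ι] [DecidableEq κ] [CommSemiring R]

/-- The permanent of the submatrix of `M` with rows `A` and columns `B`. As a sum over the
bijections `A ≃ B` it is `0` when `A` and `B` have different sizes. -/
noncomputable def subPer (M : Matrix ι κ R) (A : Finset ι) (B : Finset κ) : R :=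
  ∑ e : A ≃ B, ∏ a : A, M a (e a)

lemma subPer_univ {n : ℕ} (M : Matrix (Fin n) (Fin n) ℝ) : subPer M univ univ = perm M := by
  let univEquiv : (univ : Finset (Fin n)) ≃ Fin n := Equiv.subtypeUnivEquiv mem_univ
  refine Fintype.sum_equiv (univEquiv.equivCongr univEquiv) _ _ fun e => ?_
  exact Fintype.prod_equiv univEquiv _ _ fun a => by simp [univEquiv]

lemma subPer_congr {M N : Matrix ι κ R} {A : Finset ι} {B : Finset κ}
    (h : ∀ a ∈ A, ∀ b ∈ B, M a b = N a b) : subPer M A B = subPer N A B :=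
  Fintype.sum_congr _ _ fun e => Fintype.prod_congr _ _ fun a => h a.1 a.2 (e a).1 (e a).2

lemma subPer_transpose (M : Matrix ι κ R) (A : Finset ι) (B : Finset κ) :
    subPer M.transpose B A = subPer M A B :=
  Fintype.sum_equiv ⟨Equiv.symm, Equiv.symm, fun _ => rfl, fun _ => rfl⟩ _ _ fun e =>
    Fintype.prod_equiv e _ _ fun a => by simp

lemma subPer_map {ι' κ' : Type*} [DecidableEq ι'] [DecidableEq κ'] (f : ι ↪ ι') (g : κ ↪ κ')
    (M : Matrix ι' κ' R) (A : Finset ι) (B : Finset κ) :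
    subPer M (A.map f) (B.map g) = subPer (M.submatrix f g) A B := by
  refine (Fintype.sum_equiv ((A.equivMap f).equivCongr (B.equivMap g)) _ _ fun e => ?_).symm
  exact Fintype.prod_equiv (A.equivMap f) _ _ fun a => by simp

lemma subPer_insert_left (M : Matrix ι κ R) {A : Finset ι} {u : ι} (hu : u ∉ A) (B : Finset κ) :
    subPer M (insert u A) B = ∑ b ∈ B, M u b * subPer M A (B.erase b) := by
  let optionEquiv := subtypeInsertEquivOption hu
  have sum_option : subPer M (insert u A) B =
      ∑ e : Option A ≃ B, M u (e none) * ∏ a : A, M a (e (some a)) := by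
    refine Fintype.sum_equiv (optionEquiv.equivCongr (Equiv.refl _)) _ _ fun e => ?_
    exact (Fintype.prod_equiv optionEquiv _
      (fun o => M (optionEquiv.symm o) (e (optionEquiv.symm o))) fun a => by simp).trans
      (Fintype.prod_option _)
  rw [sum_option, ← sum_coe_sort B fun b => M u b * subPer M A (B.erase b),
    ← sum_fiberwise univ (fun e : Option A ≃ B => e none)]
  refine Fintype.sum_congr _ _ fun b => ?_
  rw [subPer, mul_sum, ← sum_subtype_eq_sum_filter, subtype_univ]
  let eraseEquiv : {c : B // c ≠ b} ≃ B.erase (b : κ) :=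
    { toFun := fun c => ⟨c, mem_erase.2 ⟨fun h => c.2 (Subtype.ext h), c.1.2⟩⟩
      invFun := fun c => ⟨⟨c, mem_of_mem_erase c.2⟩, fun h =>
        ne_of_mem_erase c.2 (congrArg Subtype.val h)⟩ }
  refine Fintype.sum_equiv
    ((Equiv.optionSubtype b).trans ((Equiv.refl A).equivCongr eraseEquiv)) _ _ fun e => ?_
  rw [e.2]
  rfl

lemma subPer_insert_right (M : Matrix ι κ R) (A : Finset ι) {B : Finset κ} {v : κ} (hv : v ∉ B) :
    subPer M A (insert v B) = ∑ a ∈ A, M a v * subPer M (A.erase a) B := by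
  simp only [← subPer_transpose M, subPer_insert_left _ hv, Matrix.transpose_apply]

lemma subPer_insert_insert (M : Matrix ι ι R) {A B : Finset ι} {w : ι} (hA : w ∉ A) (hB : w ∉ B) :
    subPer M (insert w A) (insert w B) = M w w * subPer M A B +
      ∑ b ∈ B, ∑ a ∈ A, M w b * M a w * subPer M (A.erase a) (B.erase b) := by
  rw [subPer_insert_left M hA, sum_insert hB, erase_insert hB]
  congr 1
  refine sum_congr rfl fun b hb => ?_
  rw [erase_insert_of_ne (ne_of_mem_of_not_mem hb hB).symm,
    subPer_insert_right M A (notMem_mono (erase_subset b B) hB), mul_sum]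
  exact sum_congr rfl fun a _ => (mul_assoc _ _ _).symm

lemma subPer_sub_of_eq_off_entry {S : Type*} [CommRing S] {M N : Matrix ι κ S} {A : Finset ι}
    {B : Finset κ} {u : ι} {v : κ} (hu : u ∉ A) (hv : v ∉ B)
    (h : ∀ a ∈ insert u A, ∀ b ∈ insert v B, a ≠ u ∨ b ≠ v → M a b = N a b) :
    subPer M (insert u A) (insert v B) - subPer N (insert u A) (insert v B) =
      (M u v - N u v) * subPer N A B := by
  have hA : ∀ a ∈ A, ∀ b ∈ insert v B, M a b = N a b := fun a ha b hb =>
    h a (mem_insert_of_mem ha) b hb (Or.inl (ne_of_mem_of_not_mem ha hu))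
  have minor_eq : ∀ B' ⊆ insert v B, subPer M A B' = subPer N A B' := fun B' hB' =>
    subPer_congr fun a ha b hb => hA a ha b (hB' hb)
  have tail_eq : ∑ b ∈ B, M u b * subPer M A ((insert v B).erase b) =
      ∑ b ∈ B, N u b * subPer N A ((insert v B).erase b) := sum_congr rfl fun b hb => by
    rw [h u (mem_insert_self u A) b (mem_insert_of_mem hb) (Or.inr (ne_of_mem_of_not_mem hb hv)),
      minor_eq _ (erase_subset _ _)]
  rw [subPer_insert_left M hu, subPer_insert_left N hu, sum_insert hv, sum_insert hv,
    erase_insert hv, minor_eq B (subset_insert v B), tail_eq]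
  ring

end SubmatrixPermanents

section Averages

variable {α β : Type*} [Fintype α] [Fintype β]

open Classical in
/-- The Iverson bracket: the indicator of a proposition as a real number. -/
noncomputable def ind (p : Prop) : ℝ := if p then 1 else 0

lemma ind_pos {p : Prop} (h : p) : ind p = 1 := if_pos h

lemma ind_neg {p : Prop} (h : ¬ p) : ind p = 0 := if_neg h

lemma ind_nonneg (p : Prop) : 0 ≤ ind p := by
  unfold ind
  split_ifs <;> norm_num

lemma ind_le_one (p : Prop) : ind p ≤ 1 := by
  unfold ind
  split_ifs <;> norm_num

lemma ind_mono {p q : Prop} (h : p → q) : ind p ≤ ind q := by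
  by_cases hp : p
  · rw [ind_pos hp, ind_pos (h hp)]
  · exact (ind_neg hp).trans_le (ind_nonneg q)

lemma ind_not (p : Prop) : ind (¬ p) = 1 - ind p := by
  by_cases hp : p <;> simp [ind, hp]

lemma ind_and (p q : Prop) : ind (p ∧ q) = ind p * ind q := by
  by_cases hp : p <;> by_cases hq : q <;> simp [ind, hp, hq]

lemma sum_ind {γ : Type*} (s : Finset γ) (p : γ → Prop) [DecidablePred p] :
    ∑ c ∈ s, ind (p c) = #(s.filter p) := by
  rw [natCast_card_filter]
  exact sum_congr rfl fun c _ => by unfold ind; split_ifs <;> rfl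

/-- The probability of the event `p` for the uniform measure on the finite type `α`. -/
noncomputable def pr (p : α → Prop) : ℝ := 𝔼 a, ind (p a)

lemma pr_mono {p q : α → Prop} (h : ∀ a, p a → q a) : pr p ≤ pr q :=
  expect_le_expect fun a _ => ind_mono (h a)

lemma pr_nonneg (p : α → Prop) : 0 ≤ pr p := expect_nonneg fun _ _ => ind_nonneg _

lemma expect_le_of_forall_le [Nonempty α] {f : α → ℝ} {c : ℝ} (h : ∀ a, f a ≤ c) : 𝔼 a, f a ≤ c :=
  expect_le univ_nonempty fun a _ => h a

lemma pr_le_one [Nonempty α] (p : α → Prop) : pr p ≤ 1 :=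
  expect_le_of_forall_le fun _ => ind_le_one _

lemma pr_not [Nonempty α] (p : α → Prop) : pr (fun a => ¬ p a) = 1 - pr p := by
  simp only [pr, ind_not, expect_sub_distrib, Fintype.expect_const]

lemma pr_eq_card_div (p : α → Prop) [DecidablePred p] :
    pr p = (univ.filter p).card / Fintype.card α := by
  rw [pr, Fintype.expect_eq_sum_div_card, sum_ind]

lemma sq_expect_le_expect_sq [Nonempty α] (f : α → ℝ) : (𝔼 a, f a) ^ 2 ≤ 𝔼 a, f a ^ 2 := by
  simpa using expect_mul_sq_le_sq_mul_sq univ f fun _ => 1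

lemma pr_le_expect_div {f : α → ℝ} (hf : ∀ a, 0 ≤ f a) {r : ℝ} (hr : 0 < r) :
    pr (fun a => r ≤ f a) ≤ (𝔼 a, f a) / r := by
  rw [le_div_iff₀ hr, pr, expect_mul]
  refine expect_le_expect fun a _ => ?_
  by_cases h : r ≤ f a
  · rwa [ind_pos h, one_mul]
  · rw [ind_neg h, zero_mul]
    exact hf a

/-- Resampling: the first component of an involution of `α × β` applied to a uniform pair is again
uniform. -/
lemma expect_resample [Nonempty β] {Φ : α × β → α × β} (hΦ : Function.Involutive Φ) (F : α → ℝ) :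
    𝔼 a, F a = 𝔼 a, 𝔼 b, F (Φ (a, b)).1 :=
  calc 𝔼 a, F a = 𝔼 p : α × β, F p.1 := by
        rw [← univ_product_univ, expect_product]
        simp only [Fintype.expect_const]
    _ = 𝔼 p : α × β, F (Φ p).1 :=
        Fintype.expect_equiv hΦ.toPerm _ _ fun p => by simp [hΦ p]
    _ = 𝔼 a, 𝔼 b, F (Φ (a, b)).1 := by
        rw [← univ_product_univ, expect_product' _ _ fun a b => F (Φ (a, b)).1]

end Averages

section Cube

variable {ι : Type*} [Fintype ι]

lemma rad_true : rad true = 1 := if_pos rfl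

lemma rad_false : rad false = -1 := if_neg Bool.false_ne_true

lemma rad_mul_self (b : Bool) : rad b * rad b = 1 := by cases b <;> simp [rad]

lemma abs_rad (b : Bool) : |rad b| = 1 := by cases b <;> simp [rad]

lemma rad_not (b : Bool) : rad (!b) = - rad b := by cases b <;> simp [rad]

lemma rad_injective : Function.Injective rad := by
  intro b c h
  cases b <;> cases c <;> simp [rad] at h ⊢ <;> norm_num at h

lemma abs_rad_sub_rad {b c : Bool} (h : b ≠ c) : |rad b - rad c| = 2 := by
  obtain rfl := Bool.eq_not_of_ne h
  rw [rad_not, ← neg_add', abs_neg, ← two_mul, abs_mul, abs_rad]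
  norm_num

variable [DecidableEq ι]

lemma expect_piecewise (S : Finset ι) (f : (ι → Bool) → ℝ) :
    𝔼 x, f x = 𝔼 x, 𝔼 y, f (S.piecewise y x) := by
  refine expect_resample
    (Φ := fun p : (ι → Bool) × (ι → Bool) => (S.piecewise p.2 p.1, S.piecewise p.1 p.2)) ?_ f
  rintro ⟨x, y⟩
  ext i <;> by_cases h : i ∈ S <;> simp [h]

lemma pr_le_half_pow (S : Finset ι) (p : (ι → Bool) → Prop)
    (h : ∀ x y, p x → p y → (∀ i ∉ S, x i = y i) → x = y) : pr p ≤ (1 / 2) ^ #S := by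
  classical
  have card_le : #(univ.filter p) ≤ 2 ^ (Fintype.card ι - #S) :=
    calc #(univ.filter p) ≤ #(univ : Finset ((Sᶜ : Finset ι) → Bool)) := by
          refine card_le_card_of_injOn (fun x i => x i) (fun _ _ => mem_coe.2 (mem_univ _)) ?_
          intro x hx y hy hxy
          exact h x y (by simpa using hx) (by simpa using hy) fun i hi =>
            congrFun hxy ⟨i, mem_compl.2 hi⟩
      _ = 2 ^ (Fintype.card ι - #S) := by simp
  rw [pr_eq_card_div, div_le_iff₀ (by positivity)]
  calc (#(univ.filter p) : ℝ) ≤ 2 ^ (Fintype.card ι - #S) := by exact_mod_cast card_le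
    _ = (1 / 2) ^ #S * Fintype.card (ι → Bool) := by
        rw [pow_sub₀ _ two_ne_zero (card_le_univ S)]
        simp [mul_comm]

/-- The `g i` are all small for at most one assignment of the coordinates in `S`. -/
lemma le_pr_exists_le_abs (S : Finset ι) (g : ι → (ι → Bool) → ℝ) {r : ℝ}
    (h : ∀ i ∈ S, ∀ x y, (∀ k ∉ S, x k = y k) → x i ≠ y i → 2 * r ≤ |g i x - g i y|) :
    1 - (1 / 2) ^ #S ≤ pr fun x => ∃ i ∈ S, r ≤ |g i x| := by
  have pr_all_small : pr (fun x => ¬ ∃ i ∈ S, r ≤ |g i x|) ≤ (1 / 2) ^ #S := by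
    refine pr_le_half_pow S _ fun x y hx hy hxy => funext fun i => ?_
    by_cases hi : i ∈ S
    · by_contra hne
      push Not at hx hy
      linarith [h i hi x y hxy hne, hx i hi, hy i hi, abs_sub (g i x) (g i y)]
    · exact hxy i hi
  rw [pr_not] at pr_all_small
  linarith

end Cube

section LittlewoodOfford

lemma centralBinom_sq_le (k : ℕ) : (2 * k + 1) * k.centralBinom ^ 2 ≤ 16 ^ k := by
  induction k with
  | zero => simp
  | succ k ih =>
    have recurrence : ((k + 1) * (k + 1).centralBinom) ^ 2 =
        (2 * (2 * k + 1) * k.centralBinom) ^ 2 := by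
      rw [Nat.succ_mul_centralBinom_succ k]
    refine Nat.le_of_mul_le_mul_left (c := (k + 1) ^ 2) ?_ (by positivity)
    calc (k + 1) ^ 2 * ((2 * (k + 1) + 1) * (k + 1).centralBinom ^ 2)
        = (2 * k + 3) * ((k + 1) * (k + 1).centralBinom) ^ 2 := by ring
      _ = 4 * ((2 * k + 3) * (2 * k + 1)) * ((2 * k + 1) * k.centralBinom ^ 2) := by
        rw [recurrence]
        ring
      _ ≤ 4 * (4 * (k + 1) ^ 2) * 16 ^ k := by
        refine Nat.mul_le_mul (Nat.mul_le_mul_left _ ?_) ih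
        nlinarith
      _ = (k + 1) ^ 2 * 16 ^ (k + 1) := by ring

lemma mul_choose_half_sq_le (m : ℕ) : m * m.choose (m / 2) ^ 2 ≤ 4 ^ m := by
  obtain ⟨k, rfl | rfl⟩ := Nat.even_or_odd' m
  · calc 2 * k * (2 * k).choose (2 * k / 2) ^ 2
        ≤ (2 * k + 1) * k.centralBinom ^ 2 := by
          rw [Nat.mul_div_cancel_left _ two_pos, Nat.centralBinom]
          gcongr
          exact Nat.le_succ _
      _ ≤ 4 ^ (2 * k) := (centralBinom_sq_le k).trans_eq (by rw [pow_mul]; norm_num)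
  · have half_eq : (2 * k + 1) / 2 = k := by omega
    have centralBinom_succ : (k + 1).centralBinom = 2 * (2 * k + 1).choose k := by
      rw [Nat.centralBinom, show 2 * (k + 1) = 2 * k + 1 + 1 by ring, Nat.choose_succ_succ,
        Nat.choose_symm_half, ← two_mul]
    have le_pow := centralBinom_sq_le (k + 1)
    have pow_eq : (4 : ℕ) ^ (2 * k + 1) = 4 * 16 ^ k := by
      rw [pow_succ, pow_mul]
      norm_num [mul_comm]
    rw [centralBinom_succ, pow_succ 16] at le_pow
    rw [half_eq, pow_eq]
    nlinarith

lemma choose_half_div_le {m : ℕ} {s : ℝ} (hs : 0 < s) (hm : s ≤ m) :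
    (m.choose (m / 2) : ℝ) / 2 ^ m ≤ 1 / √s := by
  have mul_sq_le : (m : ℝ) * m.choose (m / 2) ^ 2 ≤ 4 ^ m := by
    exact_mod_cast mul_choose_half_sq_le m
  rw [div_le_div_iff₀ (by positivity) (Real.sqrt_pos.2 hs), one_mul]
  refine le_of_sq_le_sq ?_ (by positivity)
  rw [mul_pow, Real.sq_sqrt hs.le, mul_comm, pow_right_comm]
  norm_num
  exact (mul_le_mul_of_nonneg_right hm (sq_nonneg _)).trans mul_sq_le

variable {ι : Type*} [Fintype ι]

/-- The indices whose summand in the signed sum `∑ i, rad (x i) * c i` is `|c i|`. -/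
noncomputable def alignedSet (c : ι → ℝ) (x : ι → Bool) : Finset ι :=
  univ.filter fun i => rad (x i) * c i = |c i|

lemma rad_mul_eq_ite [DecidableEq ι] (c : ι → ℝ) (x : ι → Bool) (i : ι) :
    rad (x i) * c i = if i ∈ alignedSet c x then |c i| else -|c i| := by
  split_ifs with hi
  · exact (mem_filter.1 hi).2
  · have abs_eq : |rad (x i) * c i| = |c i| := by rw [abs_mul, abs_rad, one_mul]
    refine (eq_or_eq_neg_of_abs_eq abs_eq).resolve_left fun h => hi ?_
    exact mem_filter.2 ⟨mem_univ i, h⟩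

lemma alignedSet_injective {c : ι → ℝ} (hc : ∀ i, c i ≠ 0) : Function.Injective (alignedSet c) := by
  classical
  intro x y hxy
  funext i
  refine rad_injective (mul_right_cancel₀ (hc i) ?_)
  rw [rad_mul_eq_ite c x, rad_mul_eq_ite c y, hxy]

lemma sum_rad_mul_add_le_of_alignedSet_ssubset {c : ι → ℝ} {ρ : ℝ} (hc : ∀ i, ρ ≤ |c i|)
    {x y : ι → Bool} (h : alignedSet c x ⊂ alignedSet c y) :
    ∑ i, rad (x i) * c i + 2 * ρ ≤ ∑ i, rad (y i) * c i := by
  classical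
  obtain ⟨j, hjy, hjx⟩ := exists_of_ssubset h
  have nonneg_sub : ∀ i ∈ univ, 0 ≤ rad (y i) * c i - rad (x i) * c i := by
    intro i _
    rw [rad_mul_eq_ite c x, rad_mul_eq_ite c y]
    have := abs_nonneg (c i)
    by_cases hx : i ∈ alignedSet c x
    · rw [if_pos hx, if_pos (h.1 hx), sub_self]
    · rw [if_neg hx]
      split_ifs <;> linarith
  have le_single : 2 * ρ ≤ rad (y j) * c j - rad (x j) * c j := by
    rw [rad_mul_eq_ite c x, rad_mul_eq_ite c y, if_pos hjy, if_neg hjx]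
    linarith [hc j]
  have le_sum := le_single.trans (single_le_sum nonneg_sub (mem_univ j))
  rw [sum_sub_distrib] at le_sum
  linarith

variable [DecidableEq ι]

/-- The sets `alignedSet c x` of the assignments `x` whose sum lies in the interval form an
antichain, to which Sperner's theorem applies. -/
lemma pr_sum_rad_mul_mem_Ico_le_choose (c : ι → ℝ) {ρ : ℝ} (hρ : 0 < ρ) (hc : ∀ i, ρ ≤ |c i|)
    (a : ℝ) :
    pr (fun x : ι → Bool => ∑ i, rad (x i) * c i ∈ Set.Ico a (a + 2 * ρ)) ≤
      ((Fintype.card ι).choose (Fintype.card ι / 2) : ℝ) / 2 ^ Fintype.card ι := by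
  have aligned_injective : Function.Injective (alignedSet c) := alignedSet_injective fun i h => by
    have := hc i
    rw [h, abs_zero] at this
    exact this.not_gt hρ
  rw [pr_eq_card_div, ← card_image_of_injective _ aligned_injective, Fintype.card_fun,
    Fintype.card_bool, Nat.cast_pow, Nat.cast_two]
  gcongr
  refine IsAntichain.sperner fun A hA B hB hAB hsub => ?_
  obtain ⟨x, hx, rfl⟩ := mem_image.1 (mem_coe.1 hA)
  obtain ⟨y, hy, rfl⟩ := mem_image.1 (mem_coe.1 hB)
  have := sum_rad_mul_add_le_of_alignedSet_ssubset hc (hsub.ssubset_of_ne hAB)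
  linarith [(mem_filter.1 hx).2.1, (mem_filter.1 hy).2.2]

lemma exists_mem_Ico_of_abs_lt {v ρ R : ℝ} (hρ : 0 < ρ) (hv : |v| < R) :
    ∃ k ∈ range ⌈R / ρ⌉₊, v ∈ Set.Ico (-R + 2 * ρ * k) (-R + 2 * ρ * k + 2 * ρ) := by
  rw [abs_lt] at hv
  have shift_nonneg : 0 ≤ (v + R) / (2 * ρ) := div_nonneg (by linarith) (by linarith)
  have floor_mul_le : (⌊(v + R) / (2 * ρ)⌋₊ : ℝ) * (2 * ρ) ≤ v + R := by
    rw [← le_div_iff₀ (by linarith)]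
    exact Nat.floor_le shift_nonneg
  have lt_succ_floor_mul : v + R < (⌊(v + R) / (2 * ρ)⌋₊ + 1) * (2 * ρ) := by
    rw [← div_lt_iff₀ (by linarith)]
    exact Nat.lt_floor_add_one _
  have le_ceil_mul : R ≤ ⌈R / ρ⌉₊ * ρ := by
    rw [← div_le_iff₀ hρ]
    exact Nat.le_ceil _
  refine ⟨⌊(v + R) / (2 * ρ)⌋₊, mem_range.2 ?_, by linarith, by linarith⟩
  have : (⌊(v + R) / (2 * ρ)⌋₊ : ℝ) * (2 * ρ) < ⌈R / ρ⌉₊ * (2 * ρ) := by linarith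
  exact_mod_cast lt_of_mul_lt_mul_right this (by linarith)

/-- The Erdős–Littlewood–Offord inequality. -/
lemma pr_sum_rad_mul_mem_Ico_le (c : ι → ℝ) {ρ s : ℝ} (hρ : 0 < ρ) (hs : 0 < s) {S : Finset ι}
    (hS : s ≤ #S) (hc : ∀ i ∈ S, ρ ≤ |c i|) (a : ℝ) :
    pr (fun x : ι → Bool => ∑ i, rad (x i) * c i ∈ Set.Ico a (a + 2 * ρ)) ≤ 1 / √s := by
  let splitCoords := Equiv.piEquivPiSubtypeProd (· ∈ S) fun _ => Bool
  have sum_split : ∀ (x : S → Bool) (y : {i // i ∉ S} → Bool),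
      ∑ i, rad (splitCoords.symm (x, y) i) * c i =
        ∑ i : S, rad (x i) * c i + ∑ i : {i // i ∉ S}, rad (y i) * c i := by
    intro x y
    rw [← Fintype.sum_subtype_add_sum_subtype (· ∈ S)]
    congr 1
    · exact sum_congr (by ext; simp) fun i _ => by
        simp [splitCoords, Equiv.piEquivPiSubtypeProd]
    · exact Fintype.sum_congr _ _ fun i => by
        simp [splitCoords, Equiv.piEquivPiSubtypeProd, i.2]
  rw [pr, ← Fintype.expect_equiv splitCoords.symm _ _ fun _ => rfl, ← univ_product_univ,
    expect_product, expect_comm]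
  refine expect_le_of_forall_le fun y => ?_
  calc 𝔼 x : S → Bool,
        ind (∑ i, rad (splitCoords.symm (x, y) i) * c i ∈ Set.Ico a (a + 2 * ρ))
      ≤ pr fun x : S → Bool => ∑ i : S, rad (x i) * c i ∈
          Set.Ico (a - ∑ i, rad (y i) * c i) (a - ∑ i, rad (y i) * c i + 2 * ρ) := by
        refine expect_le_expect fun x _ => ind_mono fun h => ?_
        rw [sum_split, Set.mem_Ico] at h
        constructor <;> linarith [h.1, h.2]
    _ ≤ _ := pr_sum_rad_mul_mem_Ico_le_choose (fun i : S => c i) hρ (fun i => hc i i.2) _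
    _ ≤ 1 / √s := choose_half_div_le hs (by simpa using hS)

lemma pr_abs_sum_rad_mul_add_lt_le (c : ι → ℝ) {ρ s : ℝ} (hρ : 0 < ρ) (hs : 0 < s)
    {S : Finset ι} (hS : s ≤ #S) (hc : ∀ i ∈ S, ρ ≤ |c i|) (a : ℝ) :
    pr (fun x : ι → Bool => |∑ i, rad (x i) * c i + a| < ρ) ≤ 1 / √s := by
  refine (pr_mono fun x h => ?_).trans (pr_sum_rad_mul_mem_Ico_le c hρ hs hS hc (-a - ρ))
  rw [abs_lt] at h
  constructor <;> linarith [h.1, h.2]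

lemma pr_abs_sum_rad_mul_lt_le (c : ι → ℝ) {ρ s R : ℝ} (hρ : 0 < ρ) (hs : 0 < s) (hR : 0 ≤ R)
    {S : Finset ι} (hS : s ≤ #S) (hc : ∀ i ∈ S, ρ ≤ |c i|) :
    pr (fun x : ι → Bool => |∑ i, rad (x i) * c i| < R) ≤ (R / ρ + 1) / √s := by
  have ind_le_sum : ∀ x : ι → Bool, ind (|∑ i, rad (x i) * c i| < R) ≤
      ∑ k ∈ range ⌈R / ρ⌉₊, ind (∑ i, rad (x i) * c i ∈
        Set.Ico (-R + 2 * ρ * k) (-R + 2 * ρ * k + 2 * ρ)) := by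
    intro x
    by_cases h : |∑ i, rad (x i) * c i| < R
    · obtain ⟨k, hk, hx⟩ := exists_mem_Ico_of_abs_lt hρ h
      rw [ind_pos h, ← ind_pos hx]
      exact single_le_sum (f := fun j : ℕ => ind (∑ i, rad (x i) * c i ∈
        Set.Ico (-R + 2 * ρ * j) (-R + 2 * ρ * j + 2 * ρ))) (fun _ _ => ind_nonneg _) hk
    · rw [ind_neg h]
      exact sum_nonneg fun _ _ => ind_nonneg _
  calc pr (fun x : ι → Bool => |∑ i, rad (x i) * c i| < R)
      ≤ ∑ k ∈ range ⌈R / ρ⌉₊, pr (fun x : ι → Bool => ∑ i, rad (x i) * c i ∈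
          Set.Ico (-R + 2 * ρ * k) (-R + 2 * ρ * k + 2 * ρ)) :=
        (expect_le_expect fun x _ => ind_le_sum x).trans_eq (expect_sum_comm _ _ _)
    _ ≤ ∑ k ∈ range ⌈R / ρ⌉₊, 1 / √s :=
        sum_le_sum fun k _ => pr_sum_rad_mul_mem_Ico_le c hρ hs hS hc _
    _ = ⌈R / ρ⌉₊ / √s := by rw [sum_const, card_range, nsmul_eq_mul, mul_one_div]
    _ ≤ (R / ρ + 1) / √s := by
        gcongr
        exact (Nat.ceil_lt_add_one (by positivity)).le

end LittlewoodOfford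

section SymmetricSigns

variable {ι : Type*}

/-- Symmetric Boolean arrays. Drawing one uniformly is the same as drawing the entries on and above
the diagonal independently, and spares the choice of an order on the indices. -/
def SymSigns (ι : Type*) := {f : ι → ι → Bool // ∀ i j, f i j = f j i}

instance [Fintype ι] [DecidableEq ι] : Fintype (SymSigns ι) :=
  inferInstanceAs (Fintype {f : ι → ι → Bool // ∀ i j, f i j = f j i})

instance : Nonempty (SymSigns ι) := ⟨⟨fun _ _ => true, fun _ _ => rfl⟩⟩

/-- The symmetric `±1` matrix of a symmetric Boolean array. -/
noncomputable def signMatrix (ω : SymSigns ι) : Matrix ι ι ℝ := fun i j => rad (ω.1 i j)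

lemma signMatrix_comm (ω : SymSigns ι) (i j : ι) : signMatrix ω i j = signMatrix ω j i := by
  rw [signMatrix, ω.2, signMatrix]

/-- Simultaneous relabelling of the rows and columns. -/
def relabel (σ : Equiv.Perm ι) : SymSigns ι ≃ SymSigns ι where
  toFun ω := ⟨fun i j => ω.1 (σ i) (σ j), fun _ _ => ω.2 _ _⟩
  invFun ω := ⟨fun i j => ω.1 (σ.symm i) (σ.symm j), fun _ _ => ω.2 _ _⟩
  left_inv ω := Subtype.ext (by simp)
  right_inv ω := Subtype.ext (by simp)

variable [DecidableEq ι]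

lemma subPer_signMatrix_comm (ω : SymSigns ι) (A B : Finset ι) :
    subPer (signMatrix ω) A B = subPer (signMatrix ω) B A := by
  rw [← subPer_transpose]
  exact subPer_congr fun a _ b _ => signMatrix_comm ω b a

lemma subPer_signMatrix_relabel (σ : Equiv.Perm ι) (ω : SymSigns ι) (A B : Finset ι) :
    subPer (signMatrix (relabel σ ω)) A B =
      subPer (signMatrix ω) (A.map σ.toEmbedding) (B.map σ.toEmbedding) :=
  (subPer_map σ.toEmbedding σ.toEmbedding (signMatrix ω) A B).symm

/-- The array `ω` with the signs in row and column `w` replaced by `x`. -/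
def resample (ω : SymSigns ι) (w : ι) (x : ι → Bool) : SymSigns ι :=
  ⟨fun i j => if i = w then x j else if j = w then x i else ω.1 i j, by
    intro i j
    by_cases hi : i = w <;> by_cases hj : j = w <;> simp [hi, hj, ω.2 i j]⟩

section Resample

variable (ω : SymSigns ι) {w : ι} (x : ι → Bool)

lemma signMatrix_resample_left (w j : ι) : signMatrix (resample ω w x) w j = rad (x j) := by
  simp [signMatrix, resample]

lemma signMatrix_resample_right (w j : ι) : signMatrix (resample ω w x) j w = rad (x j) := by
  rw [signMatrix_comm, signMatrix_resample_left]

lemma signMatrix_resample_of_ne {i j : ι} (hi : i ≠ w) (hj : j ≠ w) :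
    signMatrix (resample ω w x) i j = signMatrix ω i j := by
  simp [signMatrix, resample, hi, hj]

variable {A B : Finset ι} (hA : w ∉ A) (hB : w ∉ B)

include hA hB

lemma subPer_resample_of_notMem :
    subPer (signMatrix (resample ω w x)) A B = subPer (signMatrix ω) A B :=
  subPer_congr fun _ ha _ hb =>
    signMatrix_resample_of_ne ω x (ne_of_mem_of_not_mem ha hA) (ne_of_mem_of_not_mem hb hB)

lemma subPer_resample_insert_left :
    subPer (signMatrix (resample ω w x)) (insert w A) B =
      ∑ b ∈ B, rad (x b) * subPer (signMatrix ω) A (B.erase b) := by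
  rw [subPer_insert_left _ hA]
  refine sum_congr rfl fun b _ => ?_
  rw [signMatrix_resample_left,
    subPer_resample_of_notMem ω x hA (notMem_mono (erase_subset b B) hB)]

lemma subPer_resample_insert_insert :
    subPer (signMatrix (resample ω w x)) (insert w A) (insert w B) =
      rad (x w) * subPer (signMatrix ω) A B +
        ∑ b ∈ B, ∑ a ∈ A,
          rad (x b) * rad (x a) * subPer (signMatrix ω) (A.erase a) (B.erase b) := by
  rw [subPer_insert_insert _ hA hB, signMatrix_resample_left, subPer_resample_of_notMem ω x hA hB]
  congr 1
  refine sum_congr rfl fun b _ => sum_congr rfl fun a _ => ?_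
  rw [signMatrix_resample_left, signMatrix_resample_right, subPer_resample_of_notMem ω x
    (notMem_mono (erase_subset a A) hA) (notMem_mono (erase_subset b B) hB)]

end Resample

variable [Fintype ι]

lemma expect_relabel (σ : Equiv.Perm ι) (F : SymSigns ι → ℝ) :
    𝔼 ω, F (relabel σ ω) = 𝔼 ω, F ω :=
  Fintype.expect_equiv (relabel σ) _ _ fun _ => rfl

lemma expect_resample_row (w : ι) (F : SymSigns ι → ℝ) :
    𝔼 ω, F ω = 𝔼 ω, 𝔼 x, F (resample ω w x) := by
  refine expect_resample
    (Φ := fun p : SymSigns ι × (ι → Bool) => (resample p.1 w p.2, p.1.1 w)) ?_ F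
  rintro ⟨ω, x⟩
  refine Prod.ext (Subtype.ext (funext₂ fun i j => ?_)) (funext fun j => ?_)
  · by_cases hi : i = w <;> by_cases hj : j = w <;> simp [resample, hi, hj, ω.2]
  · simp [resample]

end SymmetricSigns

section UpperTriangle

variable {n : ℕ}

/-- The symmetric array with the same entries as `f` on and above the diagonal. -/
def symmetrize (f : Fin n → Fin n → Bool) : SymSigns (Fin n) :=
  ⟨fun i j => if i ≤ j then f i j else f j i, by
    intro i j
    rcases lt_trichotomy i j with h | h | h
    · simp [h.le, not_le.2 h]
    · simp [h]
    · simp [h.le, not_le.2 h]⟩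

lemma signMatrix_symmetrize (f : Fin n → Fin n → Bool) :
    signMatrix (symmetrize f) = symMat n f := by
  funext i j
  simp only [signMatrix, symMat, symmetrize]
  split_ifs <;> rfl

lemma expect_symmetrize (F : SymSigns (Fin n) → ℝ) : 𝔼 f, F (symmetrize f) = 𝔼 ω, F ω := by
  have symmetrize_overwrite : ∀ (f : Fin n → Fin n → Bool) (ω : SymSigns (Fin n)),
      symmetrize (fun i j => if i ≤ j then ω.1 i j else f i j) = ω := by
    intro f ω
    refine Subtype.ext (funext₂ fun i j => ?_)
    by_cases h : i ≤ j
    · simp [symmetrize, h]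
    · simp [symmetrize, h, (not_le.1 h).le, ω.2 j i]
  rw [expect_resample (β := SymSigns (Fin n))
    (Φ := fun p : (Fin n → Fin n → Bool) × SymSigns (Fin n) =>
      (fun i j => if i ≤ j then p.2.1 i j else p.1 i j, symmetrize p.1))]
  · simp only [symmetrize_overwrite, Fintype.expect_const]
  · rintro ⟨f, ω⟩
    refine Prod.ext (funext₂ fun i j => ?_) (symmetrize_overwrite f ω)
    by_cases h : i ≤ j <;> simp [symmetrize, h]

lemma prob_eq_pr (P : Matrix (Fin n) (Fin n) ℝ → Prop) :
    prob n P = pr fun ω : SymSigns (Fin n) => P (signMatrix ω) := by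
  classical
  rw [pr, ← expect_symmetrize]
  simp only [signMatrix_symmetrize]
  rw [← pr, pr_eq_card_div, prob]
  congr 1
  simp [pow_mul]

lemma prob_mono {P Q : Matrix (Fin n) (Fin n) ℝ → Prop} (h : ∀ M, P M → Q M) :
    prob n P ≤ prob n Q := by
  rw [prob_eq_pr, prob_eq_pr]
  exact pr_mono fun ω => h _

end UpperTriangle

section InitialSegments

variable {n t : ℕ}

/-- The set of the first `t` indices. -/
def initSeg (n t : ℕ) : Finset (Fin n) := univ.filter fun i => i.val < t

lemma mem_initSeg {i : Fin n} : i ∈ initSeg n t ↔ i.val < t := by simp [initSeg]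

lemma initSeg_succ (ht : t < n) : initSeg n (t + 1) = insert ⟨t, ht⟩ (initSeg n t) := by
  ext i
  simp only [mem_initSeg, mem_insert, Fin.ext_iff]
  omega

lemma notMem_initSeg (ht : t < n) : (⟨t, ht⟩ : Fin n) ∉ initSeg n t := by simp [mem_initSeg]

lemma card_initSeg (ht : t ≤ n) : #(initSeg n t) = t := by
  rw [initSeg, Fin.card_filter_val_lt, min_eq_right ht]

lemma initSeg_self (n : ℕ) : initSeg n n = univ := by
  ext i
  simp [mem_initSeg]

lemma initSeg_mono {s : ℕ} (h : s ≤ t) : initSeg n s ⊆ initSeg n t := fun _ hi =>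
  mem_initSeg.2 ((mem_initSeg.1 hi).trans_le h)

lemma map_initSeg {σ : Equiv.Perm (Fin n)} (hσ : ∀ i, σ i ∈ initSeg n t ↔ i ∈ initSeg n t) :
    (initSeg n t).map σ.toEmbedding = initSeg n t := by
  ext i
  rw [mem_map_equiv, ← hσ, Equiv.apply_symm_apply]

end InitialSegments

section Potential

variable {n t : ℕ} {Λ : ℝ} {ω ω' : SymSigns (Fin n)} {I J : Finset (Fin n)}

/-- The size above which a minor of the leading `t × t` block counts as large. It shrinks by
`2 / 3` in each round, which leaves room for the losses in the triangle inequality. -/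
noncomputable def threshold (Λ : ℝ) (t : ℕ) : ℝ := Λ * (2 / 3) ^ t

lemma threshold_pos (hΛ : 0 < Λ) (t : ℕ) : 0 < threshold Λ t := by
  unfold threshold
  positivity

lemma threshold_succ (Λ : ℝ) (t : ℕ) : threshold Λ (t + 1) = 2 / 3 * threshold Λ t := by
  unfold threshold
  ring

lemma threshold_antitone (hΛ : 0 < Λ) : Antitone (threshold Λ) :=
  antitone_nat_of_succ_le fun t => by
    rw [threshold_succ]
    linarith [threshold_pos hΛ t]

/-- Deleting the rows `I` and the columns `J` from the leading `t × t` block leaves a large minor.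
Only distinct `I` and `J` are allowed. -/
structure IsHeavyPair (Λ : ℝ) (t : ℕ) (ω : SymSigns (Fin n)) (I J : Finset (Fin n)) : Prop where
  row_subset : I ⊆ initSeg n t
  col_subset : J ⊆ initSeg n t
  card_eq : #I = #J
  nonempty_sdiff : (I \ J).Nonempty
  le_abs : threshold Λ t ≤ |subPer (signMatrix ω) (initSeg n t \ I) (initSeg n t \ J)|

lemma IsHeavyPair.congr
    (h : ∀ i ∈ initSeg n t, ∀ j ∈ initSeg n t, signMatrix ω i j = signMatrix ω' i j)
    (heavy : IsHeavyPair Λ t ω I J) : IsHeavyPair Λ t ω' I J :=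
  { heavy with
    le_abs := heavy.le_abs.trans_eq <| congrArg _ <| subPer_congr fun a ha b hb =>
      h a (sdiff_subset ha) b (sdiff_subset hb) }

lemma IsHeavyPair.map_of_relabel {σ : Equiv.Perm (Fin n)}
    (hσ : ∀ i, σ i ∈ initSeg n t ↔ i ∈ initSeg n t) (heavy : IsHeavyPair Λ t (relabel σ ω) I J) :
    IsHeavyPair Λ t ω (I.map σ.toEmbedding) (J.map σ.toEmbedding) where
  row_subset := (map_subset_map.2 heavy.row_subset).trans_eq (map_initSeg hσ)
  col_subset := (map_subset_map.2 heavy.col_subset).trans_eq (map_initSeg hσ)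
  card_eq := by rw [card_map, card_map, heavy.card_eq]
  nonempty_sdiff := by
    rw [← Finset.map_sdiff]
    exact heavy.nonempty_sdiff.map
  le_abs := by
    have := heavy.le_abs
    rwa [subPer_signMatrix_relabel, Finset.map_sdiff, Finset.map_sdiff, map_initSeg hσ] at this

/-- The weight of a pair of deleted sets. The subtraction is truncated: only the excess of
`#(I \ J)` over `2` is penalized. -/
def weight (I J : Finset (Fin n)) : ℕ := #I + 3 * (#(I \ J) - 2)

lemma weight_map (σ : Equiv.Perm (Fin n)) (I J : Finset (Fin n)) :
    weight (I.map σ.toEmbedding) (J.map σ.toEmbedding) = weight I J := by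
  rw [weight, ← Finset.map_sdiff, card_map, card_map, weight]

/-- The least weight of a heavy pair; it is `4 * n + 1`, which exceeds all weights, if there is no
heavy pair. -/
noncomputable def potential (Λ : ℝ) (t : ℕ) (ω : SymSigns (Fin n)) : ℕ :=
  sInf (insert (4 * n + 1) {v | ∃ I J, IsHeavyPair Λ t ω I J ∧ weight I J = v})

lemma potential_le_cap (Λ : ℝ) (t : ℕ) (ω : SymSigns (Fin n)) : potential Λ t ω ≤ 4 * n + 1 :=
  Nat.sInf_le (Set.mem_insert _ _)

lemma IsHeavyPair.potential_le (h : IsHeavyPair Λ t ω I J) : potential Λ t ω ≤ weight I J :=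
  Nat.sInf_le (Set.mem_insert_of_mem _ ⟨I, J, h, rfl⟩)

lemma exists_isHeavyPair (h : potential Λ t ω ≠ 4 * n + 1) :
    ∃ I J, IsHeavyPair Λ t ω I J ∧ weight I J = potential Λ t ω :=
  (Nat.sInf_mem (Set.insert_nonempty (4 * n + 1)
    {v | ∃ I J, IsHeavyPair Λ t ω I J ∧ weight I J = v})).resolve_left h

lemma one_le_potential : 1 ≤ potential Λ t ω := by
  by_cases h : potential Λ t ω = 4 * n + 1
  · omega
  · obtain ⟨I, J, heavy, weight_eq⟩ := exists_isHeavyPair h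
    have := card_pos.2 (heavy.nonempty_sdiff.mono sdiff_subset)
    rw [← weight_eq, weight]
    omega

lemma potential_le_potential
    (h : ∀ I J, IsHeavyPair Λ t ω' I J → ∃ I' J', IsHeavyPair Λ t ω I' J' ∧
      weight I' J' = weight I J) : potential Λ t ω ≤ potential Λ t ω' := by
  by_cases hcap : potential Λ t ω' = 4 * n + 1
  · exact hcap ▸ potential_le_cap Λ t ω
  · obtain ⟨I, J, heavy, weight_eq⟩ := exists_isHeavyPair hcap
    obtain ⟨I', J', heavy', weight_eq'⟩ := h I J heavy
    exact heavy'.potential_le.trans_eq (weight_eq'.trans weight_eq)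

lemma potential_congr
    (h : ∀ i ∈ initSeg n t, ∀ j ∈ initSeg n t, signMatrix ω i j = signMatrix ω' i j) :
    potential Λ t ω = potential Λ t ω' :=
  le_antisymm
    (potential_le_potential fun _ _ heavy =>
      ⟨_, _, heavy.congr fun i hi j hj => (h i hi j hj).symm, rfl⟩)
    (potential_le_potential fun _ _ heavy => ⟨_, _, heavy.congr h, rfl⟩)

lemma potential_resample (ω : SymSigns (Fin n)) {w : Fin n} (hw : w ∉ initSeg n t)
    (x : Fin n → Bool) : potential Λ t (resample ω w x) = potential Λ t ω :=
  potential_congr fun _ hi _ hj =>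
    signMatrix_resample_of_ne ω x (ne_of_mem_of_not_mem hi hw) (ne_of_mem_of_not_mem hj hw)

lemma potential_relabel {σ : Equiv.Perm (Fin n)} (hσ : ∀ i, σ i ∈ initSeg n t ↔ i ∈ initSeg n t)
    (ω : SymSigns (Fin n)) : potential Λ t (relabel σ ω) = potential Λ t ω := by
  have potential_le_relabel : ∀ {τ : Equiv.Perm (Fin n)},
      (∀ i, τ i ∈ initSeg n t ↔ i ∈ initSeg n t) →
        ∀ ω : SymSigns (Fin n), potential Λ t ω ≤ potential Λ t (relabel τ ω) :=
    fun hτ ω => potential_le_potential fun I J heavy =>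
      ⟨_, _, heavy.map_of_relabel hτ, weight_map _ I J⟩
  refine le_antisymm ?_ (potential_le_relabel hσ ω)
  have hσ' : ∀ i, σ.symm i ∈ initSeg n t ↔ i ∈ initSeg n t := fun i => by
    rw [← hσ, Equiv.apply_symm_apply]
  exact (potential_le_relabel hσ' _).trans_eq (congrArg _ ((relabel σ).symm_apply_apply ω))

end Potential

section Gains

lemma expect_update {ι : Type*} [Fintype ι] [DecidableEq ι] (p : ι) (f : (ι → Bool) → ℝ) :
    𝔼 x, f x = 𝔼 x, 𝔼 s, f (Function.update x p s) := by
  refine expect_resample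
    (Φ := fun y : (ι → Bool) × Bool => (Function.update y.1 p y.2, y.1 p)) ?_ f
  rintro ⟨x, s⟩
  simp

/-- If the mixed coefficient of `x p * x q` in `F` is at least `r`, then `F` cannot be small for all
four choices of `x p` and `x q`. -/
lemma one_fourth_le_pr_of_mixed_coeff {ι : Type*} [Fintype ι] [DecidableEq ι]
    (F : (ι → Bool) → ℝ) (p q : ι) {c r : ℝ} (hr : r ≤ |c|)
    (hF : ∀ x, ∑ s, ∑ u, rad s * rad u * F (Function.update (Function.update x p s) q u) = 4 * c) :
    1 / 4 ≤ pr fun x => r ≤ |F x| := by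
  rw [pr, expect_update q, expect_update p]
  refine le_expect univ_nonempty fun x _ => ?_
  obtain ⟨s, u, large⟩ : ∃ s u, r ≤ |F (Function.update (Function.update x p s) q u)| := by
    by_contra! small
    have four_mul_le : 4 * |c| ≤ ∑ s, ∑ u, |F (Function.update (Function.update x p s) q u)| := by
      rw [← Nat.abs_ofNat 4, ← abs_mul, ← hF x]
      refine (abs_sum_le_sum_abs _ _).trans (sum_le_sum fun s _ => ?_)
      refine (abs_sum_le_sum_abs _ _).trans_eq (sum_congr rfl fun u _ => ?_)
      rw [abs_mul, abs_mul, abs_rad, abs_rad, one_mul, one_mul]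
    simp only [Fintype.sum_bool] at four_mul_le
    linarith [small true true, small true false, small false true, small false false]
  have one_le_sum : (1 : ℝ) ≤ ∑ s, ∑ u,
      ind (r ≤ |F (Function.update (Function.update x p s) q u)|) := by
    rw [← ind_pos large]
    exact (single_le_sum (f := fun u => ind (r ≤ |F (Function.update (Function.update x p s) q u)|))
      (fun _ _ => ind_nonneg _) (mem_univ u)).trans
      (single_le_sum (f := fun s => ∑ u,
        ind (r ≤ |F (Function.update (Function.update x p s) q u)|))
        (fun _ _ => sum_nonneg fun _ _ => ind_nonneg _) (mem_univ s))
  simp only [Fintype.expect_eq_sum_div_card, ← sum_div, Fintype.card_bool]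
  linarith

variable {ι : Type*} [DecidableEq ι] (ω : SymSigns ι) {w : ι} {A B : Finset ι} {r : ℝ}

lemma signMatrix_resample_congr {x y : ι → Bool} {i j : ι} (hj : i = w → x j = y j)
    (hi : j = w → x i = y i) :
    signMatrix (resample ω w x) i j = signMatrix (resample ω w y) i j := by
  by_cases hiw : i = w
  · rw [hiw, signMatrix_resample_left, signMatrix_resample_left, hj hiw]
  · by_cases hjw : j = w
    · rw [hjw, signMatrix_resample_right, signMatrix_resample_right, hi hjw]
    · rw [signMatrix_resample_of_ne ω x hiw hjw, signMatrix_resample_of_ne ω y hiw hjw]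

variable [Fintype ι]

lemma half_le_pr_le_abs_subPer_insert_insert (hA : w ∉ A) (hB : w ∉ B)
    (hr : r ≤ |subPer (signMatrix ω) A B|) :
    1 / 2 ≤ pr fun x =>
      r ≤ |subPer (signMatrix (resample ω w x)) (insert w A) (insert w B)| := by
  have one_sub_le := le_pr_exists_le_abs {w}
    (fun _ x => subPer (signMatrix (resample ω w x)) (insert w A) (insert w B)) (r := r)
    fun i hi x y hxy hne => by
      obtain rfl := mem_singleton.1 hi
      have eq_of_ne : ∀ k, k ≠ i → x k = y k := fun k hk => hxy k (by simpa using hk)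
      rw [subPer_sub_of_eq_off_entry hA hB fun a _ b _ hab => signMatrix_resample_congr ω
          (fun ha => eq_of_ne b (hab.resolve_left (not_not.2 ha)))
          (fun hb => eq_of_ne a (hab.resolve_right (not_not.2 hb))),
        signMatrix_resample_left, signMatrix_resample_left, subPer_resample_of_notMem ω y hA hB,
        abs_mul, abs_rad_sub_rad hne]
      gcongr
  simp only [card_singleton, mem_singleton, exists_eq_left] at one_sub_le
  linarith

variable {I J : Finset ι}

lemma le_pr_exists_le_abs_subPer_insert (hA : w ∉ A) (hB : w ∉ B) (hI : w ∉ I)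
    (hIA : Disjoint I A) (hr : r ≤ |subPer (signMatrix ω) A B|) :
    1 - (1 / 2) ^ #I ≤ pr fun x =>
      ∃ i ∈ I, r ≤ |subPer (signMatrix (resample ω w x)) (insert i A) (insert w B)| := by
  refine le_pr_exists_le_abs I
    (fun i x => subPer (signMatrix (resample ω w x)) (insert i A) (insert w B))
    fun i hi x y hxy hne => ?_
  have hwi : w ≠ i := (ne_of_mem_of_not_mem hi hI).symm
  rw [subPer_sub_of_eq_off_entry (disjoint_left.1 hIA hi) hB,
    signMatrix_resample_right, signMatrix_resample_right, subPer_resample_of_notMem ω y hA hB,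
    abs_mul, abs_rad_sub_rad hne]
  · gcongr
  · intro a ha b _ hab
    refine signMatrix_resample_congr ω (fun haw => ?_) (fun hbw => ?_)
    · subst haw
      exact absurd ha (by simp [hwi, hA])
    · have haA := mem_of_mem_insert_of_ne ha (hab.resolve_right (not_not.2 hbw))
      exact hxy a (disjoint_right.1 hIA haA)

lemma le_pr_exists_le_abs_subPer_insert_insert {x : ι → Bool} {i : ι} (hA : w ∉ A)
    (hJ : w ∉ J) (hwi : w ≠ i) (hi : i ∉ J) (hJA : Disjoint J A) (hJB : Disjoint J B)
    (hr : r ≤ |subPer (signMatrix (resample ω w x)) (insert i A) (insert w B)|) :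
    1 - (1 / 2) ^ #J ≤ pr fun y => ∃ j ∈ J,
      r ≤ |subPer (signMatrix (resample ω w (J.piecewise y x))) (insert w (insert i A))
        (insert w (insert j B))| := by
  refine le_pr_exists_le_abs J (fun j y => subPer (signMatrix (resample ω w (J.piecewise y x)))
    (insert w (insert i A)) (insert w (insert j B))) fun j hj y z _ hne => ?_
  have hwA : w ∉ insert i A := by simp [hwi, hA]
  have notMem_J : ∀ a ∈ insert i A, a ∉ J := by
    intro a ha
    rcases mem_insert.1 ha with rfl | ha
    exacts [hi, disjoint_right.1 hJA ha]
  have notMem_J' : ∀ b ∈ insert w B, b ∉ J := by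
    intro b hb
    rcases mem_insert.1 hb with rfl | hb
    exacts [hJ, disjoint_right.1 hJB hb]
  have cofactor_eq : subPer (signMatrix (resample ω w (J.piecewise z x))) (insert i A)
      (insert w B) = subPer (signMatrix (resample ω w x)) (insert i A) (insert w B) := by
    refine subPer_congr fun a ha b _ => signMatrix_resample_congr ω (fun haw => ?_) (fun _ => ?_)
    · exact absurd ha (haw ▸ hwA)
    · exact piecewise_eq_of_notMem _ _ _ (notMem_J a ha)
  simp only [Finset.insert_comm w _ B]
  rw [subPer_sub_of_eq_off_entry hwA fun hjB => notMem_J' j hjB hj, cofactor_eq,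
    signMatrix_resample_left, signMatrix_resample_left, piecewise_eq_of_mem _ _ _ hj,
    piecewise_eq_of_mem _ _ _ hj, abs_mul, abs_rad_sub_rad hne]
  · gcongr
  · intro a ha b hb hab
    refine signMatrix_resample_congr ω (fun haw => ?_) (fun hbw => ?_)
    · have hbB := mem_of_mem_insert_of_ne hb (hab.resolve_left (not_not.2 haw))
      rw [piecewise_eq_of_notMem _ _ _ (notMem_J' b hbB),
        piecewise_eq_of_notMem _ _ _ (notMem_J' b hbB)]
    · have haJ : a ∉ J := by
        rcases mem_insert.1 ha with rfl | ha
        exacts [hJ, notMem_J a ha]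
      rw [piecewise_eq_of_notMem _ _ _ haJ, piecewise_eq_of_notMem _ _ _ haJ]

/-- The rows in `I` are tried first, using only the signs `x i` with `i ∈ I`; once one of them
succeeds, the columns in `J` are tried. -/
lemma le_pr_exists_exists_le_abs_subPer (hA : w ∉ A) (hB : w ∉ B) (hI : w ∉ I) (hJ : w ∉ J)
    (hIA : Disjoint I A) (hJA : Disjoint J A) (hJB : Disjoint J B) (hIJ : Disjoint I J)
    (hr : r ≤ |subPer (signMatrix ω) A B|) :
    (1 - (1 / 2) ^ #I) * (1 - (1 / 2) ^ #J) ≤ pr fun x => ∃ i ∈ I, ∃ j ∈ J,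
      r ≤ |subPer (signMatrix (resample ω w x)) (insert w (insert i A))
        (insert w (insert j B))| := by
  rw [pr, expect_piecewise J]
  calc (1 - (1 / 2) ^ #I) * (1 - (1 / 2) ^ #J)
      ≤ (𝔼 x, ind (∃ i ∈ I, r ≤
          |subPer (signMatrix (resample ω w x)) (insert i A) (insert w B)|)) *
          (1 - (1 / 2 : ℝ) ^ #J) := by
        refine mul_le_mul_of_nonneg_right (le_pr_exists_le_abs_subPer_insert ω hA hB hI hIA hr) ?_
        exact sub_nonneg.2 (pow_le_one₀ (by norm_num) (by norm_num))
    _ ≤ _ := by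
        rw [expect_mul]
        refine expect_le_expect fun x _ => ?_
        by_cases hx : ∃ i ∈ I, r ≤
          |subPer (signMatrix (resample ω w x)) (insert i A) (insert w B)|
        · rw [ind_pos hx, one_mul]
          obtain ⟨i, hi, hix⟩ := hx
          have := le_pr_exists_le_abs_subPer_insert_insert ω hA hJ
            (ne_of_mem_of_not_mem hi hI).symm (disjoint_left.1 hIJ hi) hJA hJB hix
          exact this.trans (pr_mono fun y hy => ⟨i, hi, hy⟩)
        · rw [ind_neg hx, zero_mul]
          exact pr_nonneg _

/-- The mixed coefficient of `x p * x q` in the expansion along row and column `w` is the sum of the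
two minors. -/
lemma one_fourth_le_pr_le_abs_subPer {p q : ι} (hA : w ∉ A) (hB : w ∉ B) (hpq : p ≠ q)
    (hpA : p ∈ A) (hpB : p ∈ B) (hqA : q ∈ A) (hqB : q ∈ B)
    (hr : r ≤ |subPer (signMatrix ω) (A.erase p) (B.erase q) +
      subPer (signMatrix ω) (A.erase q) (B.erase p)|) :
    1 / 4 ≤ pr fun x =>
      r ≤ |subPer (signMatrix (resample ω w x)) (insert w A) (insert w B)| := by
  refine one_fourth_le_pr_of_mixed_coeff _ p q hr fun x => ?_
  have hwp : w ≠ p := (ne_of_mem_of_not_mem hpA hA).symm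
  have hwq : w ≠ q := (ne_of_mem_of_not_mem hqA hA).symm
  let x₀ : ι → ℝ := fun i => if i = p ∨ i = q then 0 else rad (x i)
  have rad_update : ∀ s u i, rad (Function.update (Function.update x p s) q u i) =
      x₀ i + rad s * (if i = p then 1 else 0) + rad u * (if i = q then 1 else 0) := by
    intro s u i
    by_cases hiq : i = q
    · subst hiq
      simp [x₀, hpq.symm]
    · by_cases hip : i = p
      · subst hip
        simp [x₀, hpq]
      · simp [x₀, hip, hiq]
  have sum_mixed : ∑ b ∈ B, ∑ a ∈ A,
      4 * ((if b = p then 1 else 0) * (if a = q then 1 else 0) +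
        (if b = q then 1 else 0) * (if a = p then 1 else 0)) *
        subPer (signMatrix ω) (A.erase a) (B.erase b) =
      4 * (subPer (signMatrix ω) (A.erase p) (B.erase q) +
        subPer (signMatrix ω) (A.erase q) (B.erase p)) := by
    simp only [mul_add, add_mul, sum_add_distrib, mul_ite, ite_mul, mul_one, mul_zero, zero_mul]
    simp [hpA, hpB, hqA, hqB]
    ring
  have sum_diag : ∑ s, ∑ u, rad s * rad u *
      rad (Function.update (Function.update x p s) q u w) = 0 := by
    simp only [rad_update, hwp, hwq, if_false, Fintype.sum_bool, rad_true, rad_false]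
    ring
  have sum_offDiag : ∀ a b, ∑ s, ∑ u, rad s * rad u *
      (rad (Function.update (Function.update x p s) q u b) *
        rad (Function.update (Function.update x p s) q u a)) =
      4 * ((if b = p then 1 else 0) * (if a = q then 1 else 0) +
        (if b = q then 1 else 0) * (if a = p then 1 else 0)) := by
    intro a b
    simp only [rad_update, Fintype.sum_bool, rad_true, rad_false]
    ring
  rw [← sum_mixed]
  simp only [← sum_offDiag]
  rw [← zero_add (∑ b ∈ B, _), ← zero_mul (subPer (signMatrix ω) A B), ← sum_diag]
  simp only [subPer_resample_insert_insert ω _ hA hB, Fintype.sum_bool, add_mul, mul_add, mul_sum,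
    sum_add_distrib, mul_assoc]

end Gains

section Drift

variable {n t : ℕ} {Λ : ℝ} {ω : SymSigns (Fin n)} {I J : Finset (Fin n)}

lemma initSeg_succ_sdiff (ht : t < n) (hI : I ⊆ initSeg n t) :
    initSeg n (t + 1) \ I = insert ⟨t, ht⟩ (initSeg n t \ I) := by
  rw [initSeg_succ ht, insert_sdiff_of_notMem _ (notMem_mono hI (notMem_initSeg ht))]

lemma notMem_initSeg_sdiff (ht : t < n) (I : Finset (Fin n)) :
    (⟨t, ht⟩ : Fin n) ∉ initSeg n t \ I :=
  notMem_mono sdiff_subset (notMem_initSeg ht)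

lemma isHeavyPair_succ (ht : t < n) (hI : I ⊆ initSeg n t) (hJ : J ⊆ initSeg n t)
    (hIJ : #I = #J) (hne : (I \ J).Nonempty)
    (h : 2 / 3 * threshold Λ t ≤ |subPer (signMatrix ω) (insert ⟨t, ht⟩ (initSeg n t \ I))
      (insert ⟨t, ht⟩ (initSeg n t \ J))|) : IsHeavyPair Λ (t + 1) ω I J where
  row_subset := hI.trans (initSeg_mono t.le_succ)
  col_subset := hJ.trans (initSeg_mono t.le_succ)
  card_eq := hIJ
  nonempty_sdiff := hne
  le_abs := by rwa [initSeg_succ_sdiff ht hI, initSeg_succ_sdiff ht hJ, threshold_succ]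

namespace IsHeavyPair

variable (heavy : IsHeavyPair Λ t ω I J)
include heavy

lemma notMem_row (ht : t < n) : (⟨t, ht⟩ : Fin n) ∉ I :=
  notMem_mono heavy.row_subset (notMem_initSeg ht)

lemma notMem_col (ht : t < n) : (⟨t, ht⟩ : Fin n) ∉ J :=
  notMem_mono heavy.col_subset (notMem_initSeg ht)

lemma insert_sdiff_insert (ht : t < n) :
    insert (⟨t, ht⟩ : Fin n) I \ insert ⟨t, ht⟩ J = I \ J := by
  rw [Finset.insert_sdiff_insert, sdiff_insert_of_notMem (heavy.notMem_row ht)]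

lemma insert_insert (hΛ : 0 < Λ) (ht : t < n) :
    IsHeavyPair Λ (t + 1) ω (insert ⟨t, ht⟩ I) (insert ⟨t, ht⟩ J) where
  row_subset := by
    rw [initSeg_succ ht]
    exact insert_subset_insert _ heavy.row_subset
  col_subset := by
    rw [initSeg_succ ht]
    exact insert_subset_insert _ heavy.col_subset
  card_eq := by
    rw [card_insert_of_notMem (heavy.notMem_row ht), card_insert_of_notMem (heavy.notMem_col ht),
      heavy.card_eq]
  nonempty_sdiff := by
    rw [heavy.insert_sdiff_insert ht]
    exact heavy.nonempty_sdiff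
  le_abs := by
    rw [initSeg_succ ht, Finset.insert_sdiff_insert, Finset.insert_sdiff_insert,
      sdiff_insert_of_notMem (notMem_initSeg ht), sdiff_insert_of_notMem (notMem_initSeg ht)]
    exact (threshold_antitone hΛ t.le_succ).trans heavy.le_abs

lemma weight_insert_insert (ht : t < n) :
    weight (insert ⟨t, ht⟩ I) (insert ⟨t, ht⟩ J) = weight I J + 1 := by
  rw [weight, heavy.insert_sdiff_insert ht, card_insert_of_notMem (heavy.notMem_row ht), weight]
  omega

lemma potential_lt : potential Λ t ω < 4 * n + 1 := by
  have potential_le := heavy.potential_le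
  have card_le : #I ≤ n := card_finset_fin_le I
  have card_sdiff_le : #(I \ J) ≤ n := card_finset_fin_le (I \ J)
  rw [weight] at potential_le
  omega

end IsHeavyPair

lemma potential_resample_succ_le (hΛ : 0 < Λ) (ht : t < n) (ω : SymSigns (Fin n))
    (x : Fin n → Bool) : potential Λ (t + 1) (resample ω ⟨t, ht⟩ x) ≤ potential Λ t ω + 1 := by
  rw [← potential_resample (Λ := Λ) ω (notMem_initSeg ht) x]
  by_cases hcap : potential Λ t (resample ω ⟨t, ht⟩ x) = 4 * n + 1
  · exact (potential_le_cap _ _ _).trans (hcap.ge.trans (Nat.le_succ _))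
  · obtain ⟨I, J, heavy, weight_eq⟩ := exists_isHeavyPair hcap
    rw [← weight_eq, ← heavy.weight_insert_insert ht]
    exact (heavy.insert_insert hΛ ht).potential_le

lemma potential_eq_cap_of_le (hΛ : 0 < Λ) {s : ℕ} (hst : s ≤ t) (ht : t ≤ n)
    (h : potential Λ t ω = 4 * n + 1) : potential Λ s ω = 4 * n + 1 := by
  induction t, hst using Nat.le_induction with
  | base => exact h
  | succ t _ ih =>
    refine ih (by omega) (by_contra fun hcap => ?_)
    obtain ⟨I, J, heavy, -⟩ := exists_isHeavyPair hcap
    exact (heavy.insert_insert hΛ (by omega)).potential_lt.ne h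

lemma IsHeavyPair.half_le_pr_potential_le (hΛ : 0 < Λ) (ht : t < n)
    (heavy : IsHeavyPair Λ t ω I J) :
    1 / 2 ≤ pr fun x => potential Λ (t + 1) (resample ω ⟨t, ht⟩ x) ≤ weight I J := by
  refine (half_le_pr_le_abs_subPer_insert_insert ω (notMem_initSeg_sdiff ht I)
    (notMem_initSeg_sdiff ht J) heavy.le_abs).trans (pr_mono fun x hx => ?_)
  refine (isHeavyPair_succ ht heavy.row_subset heavy.col_subset heavy.card_eq
    heavy.nonempty_sdiff (le_trans ?_ hx)).potential_le
  linarith [threshold_pos hΛ t]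

section Fill

variable {I₁ J₁ : Finset (Fin n)}

/-- Adding back a row from `I₁` and a column from `J₁` leaves `#(I \ J)` at most `2`, so that the
excess does not contribute to the new weight. -/
lemma IsHeavyPair.le_pr_potential_le_of_fill (hΛ : 0 < Λ) (ht : t < n)
    (heavy : IsHeavyPair Λ t ω I J) (hI₁ : I₁ ⊆ I) (hJ₁ : J₁ ⊆ I ∩ J) (hdisj : Disjoint I₁ J₁)
    (hsdiff : ∀ i ∈ I₁, ∀ j ∈ J₁, #(I.erase i \ J.erase j) ∈ Set.Icc 1 2) {k l : ℕ}
    (hk : k ≤ #I₁) (hl : l ≤ #J₁) :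
    (1 - (1 / 2) ^ k) * (1 - (1 / 2) ^ l) ≤
      pr fun x => potential Λ (t + 1) (resample ω ⟨t, ht⟩ x) ≤ #I - 1 := by
  have hJI : J₁ ⊆ I := hJ₁.trans inter_subset_left
  have hJJ : J₁ ⊆ J := hJ₁.trans inter_subset_right
  have one_sub_pow_le : ∀ {a b : ℕ}, a ≤ b → 1 - (1 / 2 : ℝ) ^ a ≤ 1 - (1 / 2) ^ b :=
    fun hab => sub_le_sub_left (pow_le_pow_of_le_one (by norm_num) (by norm_num) hab) 1
  have one_sub_pow_nonneg : ∀ a : ℕ, 0 ≤ 1 - (1 / 2 : ℝ) ^ a := fun a =>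
    sub_nonneg.2 (pow_le_one₀ (by norm_num) (by norm_num))
  calc (1 - (1 / 2) ^ k) * (1 - (1 / 2) ^ l)
      ≤ (1 - (1 / 2) ^ #I₁) * (1 - (1 / 2 : ℝ) ^ #J₁) :=
        mul_le_mul (one_sub_pow_le hk) (one_sub_pow_le hl) (one_sub_pow_nonneg l)
          (one_sub_pow_nonneg _)
    _ ≤ _ := le_pr_exists_exists_le_abs_subPer ω (notMem_initSeg_sdiff ht I)
        (notMem_initSeg_sdiff ht J) (notMem_mono hI₁ (heavy.notMem_row ht))
        (notMem_mono hJI (heavy.notMem_row ht)) (disjoint_sdiff.mono_left hI₁)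
        (disjoint_sdiff.mono_left hJI) (disjoint_sdiff.mono_left hJJ) hdisj heavy.le_abs
    _ ≤ _ := pr_mono fun x ⟨i, hi, j, hj, hx⟩ => ?_
  obtain ⟨one_le, le_two⟩ := hsdiff i hi j hj
  rw [← sdiff_erase (heavy.row_subset (hI₁ hi)), ← sdiff_erase (heavy.col_subset (hJJ hj))] at hx
  refine (isHeavyPair_succ ht ((erase_subset _ _).trans heavy.row_subset)
    ((erase_subset _ _).trans heavy.col_subset) ?_ (card_pos.1 one_le)
    (le_trans ?_ hx)).potential_le.trans ?_
  · rw [card_erase_of_mem (hI₁ hi), card_erase_of_mem (hJJ hj), heavy.card_eq]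
  · linarith [threshold_pos hΛ t]
  · rw [weight, card_erase_of_mem (hI₁ hi)]
    omega

lemma erase_sdiff_erase {i j : Fin n} (hj : j ∈ I) (hij : i ≠ j) :
    I.erase i \ J.erase j = insert j ((I \ J).erase i) := by
  rw [sdiff_erase (mem_erase.2 ⟨hij.symm, hj⟩), erase_sdiff_comm]

lemma IsHeavyPair.le_pr_potential_le_of_fill_sdiff (hΛ : 0 < Λ) (ht : t < n)
    (heavy : IsHeavyPair Λ t ω I J) (le_two : #(I \ J) ≤ 2) {k l : ℕ} (hk : k ≤ #(I \ J))
    (hl : l ≤ #(I ∩ J)) :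
    (1 - (1 / 2) ^ k) * (1 - (1 / 2) ^ l) ≤
      pr fun x => potential Λ (t + 1) (resample ω ⟨t, ht⟩ x) ≤ #I - 1 := by
  have hdisj : Disjoint (I \ J) (I ∩ J) := disjoint_sdiff_inter I J
  refine heavy.le_pr_potential_le_of_fill hΛ ht sdiff_subset Subset.rfl hdisj
    (fun i hi j hj => ?_) hk hl
  have hj_notMem : j ∉ (I \ J).erase i := fun h => disjoint_right.1 hdisj hj (mem_of_mem_erase h)
  rw [erase_sdiff_erase (mem_of_mem_inter_left hj) (disjoint_iff_ne.1 hdisj i hi j hj),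
    card_insert_of_notMem hj_notMem, card_erase_add_one hi]
  exact ⟨card_pos.2 ⟨i, hi⟩, le_two⟩

/-- The indices deleted on both sides are split into two halves, one for rows and one for
columns. -/
lemma IsHeavyPair.le_pr_potential_le_of_fill_inter (hΛ : 0 < Λ) (ht : t < n)
    (heavy : IsHeavyPair Λ t ω I J) (card_eq_one : #(I \ J) = 1) {k : ℕ} (hk : 2 * k ≤ #(I ∩ J)) :
    (1 - (1 / 2) ^ k) * (1 - (1 / 2) ^ k) ≤
      pr fun x => potential Λ (t + 1) (resample ω ⟨t, ht⟩ x) ≤ #I - 1 := by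
  obtain ⟨D, hD, card_D⟩ := exists_subset_card_eq (show k ≤ #(I ∩ J) by omega)
  refine heavy.le_pr_potential_le_of_fill hΛ ht (hD.trans inter_subset_left)
    (sdiff_subset (t := D)) disjoint_sdiff (fun i hi j hj => ?_) card_D.ge ?_
  · have hj' := mem_inter.1 (sdiff_subset hj)
    have hi' := mem_inter.1 (hD hi)
    rw [erase_sdiff_erase hj'.1 (fun h => (mem_sdiff.1 hj).2 (h ▸ hi)),
      erase_eq_of_notMem fun h => (mem_sdiff.1 h).2 hi'.2,
      card_insert_of_notMem fun h => (mem_sdiff.1 h).2 hj'.2, card_eq_one]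
    exact ⟨one_le_two, le_rfl⟩
  · rw [card_sdiff_of_subset hD, card_D]
    omega

end Fill

section Exchange

lemma one_fourth_le_pr_potential_le_of_exchange (ht : t < n) {p q : Fin n} (hpq : p ≠ q)
    (hI : I ⊆ initSeg n t) (hJ : J ⊆ initSeg n t) (hIJ : #I = #J) (hne : (I \ J).Nonempty)
    (hpI : p ∈ initSeg n t \ I) (hpJ : p ∈ initSeg n t \ J) (hqI : q ∈ initSeg n t \ I)
    (hqJ : q ∈ initSeg n t \ J)
    (h : 2 / 3 * threshold Λ t ≤
      |subPer (signMatrix ω) (initSeg n t \ insert p I) (initSeg n t \ insert q J) +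
        subPer (signMatrix ω) (initSeg n t \ insert q I) (initSeg n t \ insert p J)|) :
    1 / 4 ≤ pr fun x => potential Λ (t + 1) (resample ω ⟨t, ht⟩ x) ≤ weight I J := by
  simp only [sdiff_insert] at h
  exact (one_fourth_le_pr_le_abs_subPer ω (notMem_initSeg_sdiff ht I) (notMem_initSeg_sdiff ht J)
    hpq hpI hpJ hqI hqJ h).trans
      (pr_mono fun x hx => (isHeavyPair_succ ht hI hJ hIJ hne hx).potential_le)

/-- The three minors obtained by distributing `a`, `b`, `c` over the deleted rows and columns are
linked in pairs by exchanges. If the first one is large, then some pairwise sum is at least `2 / 3`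
of the threshold. -/
lemma one_fourth_le_pr_potential_le_of_triangle (ht : t < n) {K L : Finset (Fin n)}
    {a b c : Fin n} (hK : K ⊆ initSeg n t) (hL : L ⊆ initSeg n t) (card_eq : #K = #L + 1)
    (hne : (K \ L).Nonempty) (hab : a ≠ b) (hac : a ≠ c) (hbc : b ≠ c)
    (mem_seg : ∀ p ∈ ({a, b, c} : Finset (Fin n)), p ∈ initSeg n t ∧ p ∉ K ∧ p ∉ L)
    (h : threshold Λ t ≤
      |subPer (signMatrix ω) (initSeg n t \ insert a K) (initSeg n t \ insert b (insert c L))|) :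
    1 / 4 ≤ pr fun x => potential Λ (t + 1) (resample ω ⟨t, ht⟩ x) ≤ weight K L := by
  let minor : Fin n → Fin n → Fin n → ℝ := fun p q r =>
    subPer (signMatrix ω) (initSeg n t \ insert p K) (initSeg n t \ insert q (insert r L))
  have minor_comm : ∀ p q r, minor p q r = minor p r q := fun p q r => by
    simp only [minor, insert_comm q r]
  have of_exchange : ∀ {p q r}, p ≠ q → p ≠ r → q ≠ r → p ∈ ({a, b, c} : Finset (Fin n)) →
      q ∈ ({a, b, c} : Finset (Fin n)) → r ∈ ({a, b, c} : Finset (Fin n)) →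
      2 / 3 * threshold Λ t ≤ |minor p q r + minor q p r| →
      1 / 4 ≤ pr fun x => potential Λ (t + 1) (resample ω ⟨t, ht⟩ x) ≤ weight K L := by
    intro p q r hpq hpr hqr hp hq hr sum_large
    obtain ⟨hp, hpK, hpL⟩ := mem_seg p hp
    obtain ⟨hq, hqK, hqL⟩ := mem_seg q hq
    obtain ⟨hr, hrK, hrL⟩ := mem_seg r hr
    have sdiff_eq : K \ insert r L = K \ L := sdiff_insert_of_notMem hrK L
    rw [show weight K L = weight K (insert r L) by rw [weight, weight, sdiff_eq]]
    refine one_fourth_le_pr_potential_le_of_exchange ht hpq hK (insert_subset hr hL) ?_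
      (by rwa [sdiff_eq]) ?_ ?_ ?_ ?_ sum_large
    · rw [card_insert_of_notMem hrL, card_eq]
    all_goals simp [hp, hpK, hpL, hq, hqK, hqL, hpr, hqr]
  have sum_large : 2 / 3 * threshold Λ t ≤ |minor a b c + minor b a c| ∨
      2 / 3 * threshold Λ t ≤ |minor a c b + minor c a b| ∨
      2 / 3 * threshold Λ t ≤ |minor b c a + minor c b a| := by
    rw [minor_comm a c b, minor_comm b c a, minor_comm c b a]
    by_contra! small
    obtain ⟨small_ab, small_ac, small_bc⟩ := small
    rw [abs_lt] at small_ab small_ac small_bc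
    rcases le_abs.1 h with h | h <;> linarith
  rcases sum_large with h | h | h
  · exact of_exchange hab hac hbc (by simp) (by simp) (by simp) h
  · exact of_exchange hac hab hbc.symm (by simp) (by simp) (by simp) h
  · exact of_exchange hbc hab.symm hac.symm (by simp) (by simp) (by simp) h

lemma IsHeavyPair.one_fourth_le_pr_potential_le (ht : t < n) (heavy : IsHeavyPair Λ t ω I J)
    (two_le : 2 ≤ #(I \ J)) :
    1 / 4 ≤ pr fun x => potential Λ (t + 1) (resample ω ⟨t, ht⟩ x) ≤
      #I - 1 + 3 * (#(I \ J) - 1 - 2) := by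
  obtain ⟨i, hi⟩ := heavy.nonempty_sdiff
  obtain ⟨j, hj, j', hj', hjj'⟩ := one_lt_card.1 (two_le.trans_eq (card_sdiff_comm heavy.card_eq))
  have sdiff_eq : I.erase i \ (J.erase j).erase j' = (I \ J).erase i := by
    grind
  have card_erase : #((I \ J).erase i) = #(I \ J) - 1 := card_erase_of_mem hi
  rw [mem_sdiff] at hi hj hj'
  have hj'_mem : j' ∈ J.erase j := mem_erase.2 ⟨hjj'.symm, hj'.1⟩
  rw [show #I - 1 + 3 * (#(I \ J) - 1 - 2) = weight (I.erase i) ((J.erase j).erase j') by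
    rw [weight, sdiff_eq, card_erase, card_erase_of_mem hi.1]]
  refine one_fourth_le_pr_potential_le_of_triangle ht (a := i) (b := j) (c := j')
    ((erase_subset _ _).trans heavy.row_subset)
    (((erase_subset _ _).trans (erase_subset _ _)).trans heavy.col_subset) ?_ ?_
    (fun h => hi.2 (h ▸ hj.1)) (fun h => hi.2 (h ▸ hj'.1)) hjj' ?_ ?_
  · rw [card_erase_add_one hj'_mem, card_erase_of_mem hi.1, card_erase_of_mem hj.1, heavy.card_eq]
  · rw [sdiff_eq, ← card_pos, card_erase]
    omega
  · have := heavy.row_subset hi.1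
    have := heavy.col_subset hj.1
    have := heavy.col_subset hj'.1
    simp [*]
  · rw [insert_erase hi.1, insert_erase hj'_mem, insert_erase hj.1]
    exact heavy.le_abs

end Exchange

section CaseAnalysis

lemma IsHeavyPair.drift_of_card_sdiff_eq_one (hΛ : 0 < Λ) (ht : t < n)
    (heavy : IsHeavyPair Λ t ω I J) (card_eq_one : #(I \ J) = 1) (two_le : 2 ≤ #I) :
    (#I ≤ 4 ∧ 1 / 4 ≤ pr fun x => potential Λ (t + 1) (resample ω ⟨t, ht⟩ x) ≤ #I - 1) ∨
      9 / 16 ≤ pr fun x => potential Λ (t + 1) (resample ω ⟨t, ht⟩ x) ≤ #I - 1 := by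
  have card_add := card_sdiff_add_card_inter I J
  by_cases inter_eq_one : #(I ∩ J) = 1
  · refine Or.inl ⟨by omega, le_trans ?_ (heavy.le_pr_potential_le_of_fill_sdiff hΛ ht
      (by omega) card_eq_one.ge inter_eq_one.ge)⟩
    norm_num
  by_cases le_four : #I ≤ 4
  · refine Or.inl ⟨le_four, le_trans ?_ (heavy.le_pr_potential_le_of_fill_inter hΛ ht
      card_eq_one (k := 1) (by omega))⟩
    norm_num
  · refine Or.inr (le_trans ?_ (heavy.le_pr_potential_le_of_fill_inter hΛ ht
      card_eq_one (k := 2) (by omega)))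
    norm_num

lemma IsHeavyPair.drift_of_card_sdiff_eq_two (hΛ : 0 < Λ) (ht : t < n)
    (heavy : IsHeavyPair Λ t ω I J) (card_eq_two : #(I \ J) = 2) :
    (#I ≤ 4 ∧ 1 / 4 ≤ pr fun x => potential Λ (t + 1) (resample ω ⟨t, ht⟩ x) ≤ #I - 1) ∨
      9 / 16 ≤ pr fun x => potential Λ (t + 1) (resample ω ⟨t, ht⟩ x) ≤ #I - 1 := by
  have card_add := card_sdiff_add_card_inter I J
  by_cases inter_eq_zero : #(I ∩ J) = 0
  · have := heavy.one_fourth_le_pr_potential_le ht card_eq_two.ge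
    rw [card_eq_two] at this
    exact Or.inl ⟨by omega, this⟩
  by_cases le_four : #I ≤ 4
  · refine Or.inl ⟨le_four, le_trans ?_ (heavy.le_pr_potential_le_of_fill_sdiff hΛ ht
      card_eq_two.le (k := 2) (l := 1) card_eq_two.ge (by omega))⟩
    norm_num
  · refine Or.inr (le_trans ?_ (heavy.le_pr_potential_le_of_fill_sdiff hΛ ht
      card_eq_two.le (k := 2) (l := 3) card_eq_two.ge (by omega)))
    norm_num

lemma potential_drift (hΛ : 0 < Λ) (ht : t < n) (hcap : potential Λ t ω ≠ 4 * n + 1)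
    (two_le : 2 ≤ potential Λ t ω) :
    ((potential Λ t ω ≤ 4 ∧ 1 / 4 ≤
      pr fun x => potential Λ (t + 1) (resample ω ⟨t, ht⟩ x) ≤ potential Λ t ω - 1) ∨
    9 / 16 ≤
      pr fun x => potential Λ (t + 1) (resample ω ⟨t, ht⟩ x) ≤ potential Λ t ω - 1) ∨
    (6 ≤ potential Λ t ω ∧ 1 / 4 ≤
      pr fun x => potential Λ (t + 1) (resample ω ⟨t, ht⟩ x) ≤ potential Λ t ω - 4) := by
  obtain ⟨I, J, heavy, weight_eq⟩ := exists_isHeavyPair hcap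
  have card_le : #(I \ J) ≤ #I := card_le_card sdiff_subset
  have one_le := heavy.nonempty_sdiff.card_pos
  rw [← weight_eq] at two_le ⊢
  rcases (show #(I \ J) = 1 ∨ #(I \ J) = 2 ∨ 3 ≤ #(I \ J) by omega) with h | h | h
  · rw [show weight I J = #I by rw [weight]; omega] at two_le ⊢
    exact Or.inl (heavy.drift_of_card_sdiff_eq_one hΛ ht h two_le)
  · rw [show weight I J = #I by rw [weight]; omega]
    exact Or.inl (heavy.drift_of_card_sdiff_eq_two hΛ ht h)
  · refine Or.inr ⟨by rw [weight]; omega, ?_⟩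
    rw [show weight I J - 4 = #I - 1 + 3 * (#(I \ J) - 1 - 2) by rw [weight]; omega]
    exact heavy.one_fourth_le_pr_potential_le ht (by omega)

end CaseAnalysis

end Drift

section Lyapunov

/-- The Lyapunov function of the potential: nearly flat up to `4`, then slowly exponential. The
constants are chosen so that it contracts in each case of `potential_drift`. -/
noncomputable def lyapunov (v : ℕ) : ℝ :=
  if v ≤ 1 then 1 else if v = 2 then 11 / 10 else if v = 3 then 1 + 13 / 120 else
    (1 + 79 / 720 - 1 / 216) + 1 / 216 * (21 / 20) ^ (v - 4)

/-- A majorant of `lyapunov`, larger only at the bottom, bounding the expectation of `lyapunov`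
after one step. -/
noncomputable def lyapunovUpper (v : ℕ) : ℝ := if v ≤ 1 then 21 / 20 else lyapunov v

/-- The proportion of `lyapunov` that is lost in each step. -/
noncomputable def lyapunovRate : ℝ := 1 / 100000

lemma lyapunovRate_pos : 0 < lyapunovRate := by norm_num [lyapunovRate]

lemma lyapunovRate_lt_one : lyapunovRate < 1 := by norm_num [lyapunovRate]

lemma lyapunov_one : lyapunov 1 = 1 := by norm_num [lyapunov]

lemma lyapunov_two : lyapunov 2 = 11 / 10 := by norm_num [lyapunov]

lemma lyapunov_add_four (k : ℕ) :
    lyapunov (k + 4) = (1 + 79 / 720 - 1 / 216) + 1 / 216 * (21 / 20) ^ k := by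
  rw [lyapunov, if_neg (by omega), if_neg (by omega), if_neg (by omega), Nat.add_sub_cancel]

lemma one_le_lyapunov_base_pow (k : ℕ) : (1 : ℝ) ≤ (21 / 20) ^ k := one_le_pow₀ (by norm_num)

lemma lyapunov_mono : Monotone lyapunov := by
  refine monotone_nat_of_le_succ fun v => ?_
  match v with
  | 0 | 1 | 2 | 3 => norm_num [lyapunov]
  | k + 4 =>
    rw [show k + 4 + 1 = (k + 1) + 4 by ring, lyapunov_add_four, lyapunov_add_four, pow_succ]
    linarith [one_le_lyapunov_base_pow k]

lemma one_le_lyapunov (v : ℕ) : 1 ≤ lyapunov v :=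
  le_of_eq_of_le (by norm_num [lyapunov]) (lyapunov_mono v.zero_le)

lemma lyapunov_le_pow (v : ℕ) : lyapunov v ≤ 2 * (21 / 20) ^ v := by
  match v with
  | 0 | 1 | 2 | 3 => norm_num [lyapunov]
  | k + 4 =>
    rw [lyapunov_add_four, pow_add]
    have := one_le_lyapunov_base_pow k
    norm_num at this ⊢
    linarith

lemma lyapunovUpper_of_two_le {v : ℕ} (h : 2 ≤ v) : lyapunovUpper v = lyapunov v := by
  rw [lyapunovUpper, if_neg (by omega)]

lemma lyapunovUpper_mono : Monotone lyapunovUpper := by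
  refine monotone_nat_of_le_succ fun v => ?_
  match v with
  | 0 | 1 => norm_num [lyapunovUpper, lyapunov]
  | k + 2 =>
    rw [lyapunovUpper_of_two_le (by omega), lyapunovUpper_of_two_le (by omega)]
    exact lyapunov_mono (Nat.le_succ _)

lemma lyapunov_le_lyapunovUpper (v : ℕ) : lyapunov v ≤ lyapunovUpper v := by
  unfold lyapunovUpper
  split_ifs with h
  · refine (lyapunov_mono h).trans ?_
    norm_num [lyapunov_one]
  · exact le_rfl

lemma lyapunovUpper_quarter_le {v : ℕ} (two_le : 2 ≤ v) (le_four : v ≤ 4) :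
    1 / 4 * lyapunovUpper (v - 1) + 3 / 4 * lyapunovUpper (v + 1) ≤
      (1 - lyapunovRate) * lyapunov v := by
  interval_cases v <;> norm_num [lyapunovUpper, lyapunov, lyapunovRate]

lemma lyapunovUpper_nine_sixteenths_le {v : ℕ} (five_le : 5 ≤ v) :
    9 / 16 * lyapunovUpper (v - 1) + 7 / 16 * lyapunovUpper (v + 1) ≤
      (1 - lyapunovRate) * lyapunov v := by
  obtain ⟨k, rfl⟩ := Nat.exists_eq_add_of_le five_le
  rw [lyapunovUpper_of_two_le (by omega), lyapunovUpper_of_two_le (by omega),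
    show 5 + k - 1 = k + 4 by omega, show 5 + k + 1 = (k + 2) + 4 by ring,
    show 5 + k = (k + 1) + 4 by ring, lyapunov_add_four, lyapunov_add_four, lyapunov_add_four,
    lyapunovRate, pow_add, pow_add]
  have := one_le_lyapunov_base_pow k
  norm_num at this ⊢
  linarith

lemma lyapunovUpper_four_steps_le {v : ℕ} (six_le : 6 ≤ v) :
    1 / 4 * lyapunovUpper (v - 4) + 3 / 4 * lyapunovUpper (v + 1) ≤
      (1 - lyapunovRate) * lyapunov v := by
  obtain ⟨k, rfl⟩ := Nat.exists_eq_add_of_le six_le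
  match k with
  | 0 | 1 => norm_num [lyapunovUpper, lyapunov, lyapunovRate]
  | k + 2 =>
    rw [lyapunovUpper_of_two_le (by omega), lyapunovUpper_of_two_le (by omega),
      show 6 + (k + 2) - 4 = k + 4 by omega, show 6 + (k + 2) + 1 = (k + 5) + 4 by ring,
      show 6 + (k + 2) = (k + 4) + 4 by ring, lyapunov_add_four, lyapunov_add_four,
      lyapunov_add_four, lyapunovRate, pow_add _ k 5, pow_add _ k 4]
    have := one_le_lyapunov_base_pow k
    norm_num at this ⊢
    linarith

/-- Among the laws bounded by `m` that put mass at least `p` below `u`, the two-point law on `u` and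
`m` maximizes the mean of a monotone function. -/
lemma expect_comp_le_of_le_pr {α : Type*} [Fintype α] [Nonempty α] {f : α → ℕ} {g : ℕ → ℝ}
    (hg : Monotone g) {u m : ℕ} {p : ℝ} (hum : u ≤ m) (hfm : ∀ a, f a ≤ m)
    (hp : p ≤ pr fun a => f a ≤ u) : 𝔼 a, g (f a) ≤ p * g u + (1 - p) * g m := by
  have gap_nonneg : 0 ≤ g m - g u := sub_nonneg.2 (hg hum)
  calc 𝔼 a, g (f a) ≤ 𝔼 a, (g m - (g m - g u) * ind (f a ≤ u)) := by
        refine expect_le_expect fun a _ => ?_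
        by_cases h : f a ≤ u
        · rw [ind_pos h]
          linarith [hg h]
        · rw [ind_neg h]
          linarith [hg (hfm a)]
    _ = g m - (g m - g u) * pr fun a => f a ≤ u := by
        rw [expect_sub_distrib, Fintype.expect_const, ← mul_expect, pr]
    _ ≤ g m - (g m - g u) * p := sub_le_sub_left (mul_le_mul_of_nonneg_left hp gap_nonneg) _
    _ = _ := by ring

variable {n t : ℕ} {Λ : ℝ}

lemma expect_lyapunovUpper_le (hΛ : 0 < Λ) (ht : t < n) {ω : SymSigns (Fin n)}
    (hcap : potential Λ t ω ≠ 4 * n + 1) (two_le : 2 ≤ potential Λ t ω) :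
    𝔼 x, lyapunovUpper (potential Λ (t + 1) (resample ω ⟨t, ht⟩ x)) ≤
      (1 - lyapunovRate) * lyapunov (potential Λ t ω) := by
  have le_succ := potential_resample_succ_le hΛ ht ω
  rcases potential_drift hΛ ht hcap two_le with (⟨le_four, h⟩ | h) | ⟨six_le, h⟩
  · have := lyapunovUpper_quarter_le two_le le_four
    refine (expect_comp_le_of_le_pr lyapunovUpper_mono (by omega) le_succ h).trans ?_
    linarith
  · by_cases le_four : potential Λ t ω ≤ 4
    · have := lyapunovUpper_quarter_le two_le le_four
      refine (expect_comp_le_of_le_pr lyapunovUpper_mono (by omega) le_succ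
        (le_trans (by norm_num : (1 / 4 : ℝ) ≤ 9 / 16) h)).trans ?_
      linarith
    · have := lyapunovUpper_nine_sixteenths_le (not_le.1 le_four)
      refine (expect_comp_le_of_le_pr lyapunovUpper_mono (by omega) le_succ h).trans ?_
      linarith
  · have := lyapunovUpper_four_steps_le six_le
    refine (expect_comp_le_of_le_pr lyapunovUpper_mono (by omega) le_succ h).trans ?_
    linarith

lemma expect_lyapunov_le (hΛ : 0 < Λ) (ht : t < n) (ω : SymSigns (Fin n)) :
    𝔼 x, lyapunov (potential Λ (t + 1) (resample ω ⟨t, ht⟩ x)) ≤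
      lyapunovUpper (potential Λ t ω) := by
  by_cases hcap : potential Λ t ω = 4 * n + 1
  · rw [hcap, lyapunovUpper_of_two_le (by omega)]
    exact expect_le_of_forall_le fun x => lyapunov_mono (potential_le_cap _ _ _)
  by_cases two_le : 2 ≤ potential Λ t ω
  · rw [lyapunovUpper_of_two_le two_le]
    calc 𝔼 x, lyapunov (potential Λ (t + 1) (resample ω ⟨t, ht⟩ x))
        ≤ 𝔼 x, lyapunovUpper (potential Λ (t + 1) (resample ω ⟨t, ht⟩ x)) :=
          expect_le_expect fun x _ => lyapunov_le_lyapunovUpper _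
      _ ≤ (1 - lyapunovRate) * lyapunov (potential Λ t ω) :=
          expect_lyapunovUpper_le hΛ ht hcap two_le
      _ ≤ lyapunov (potential Λ t ω) := mul_le_of_le_one_left
          (zero_le_one.trans (one_le_lyapunov _)) (by linarith [lyapunovRate_pos])
  · have eq_one : potential Λ t ω = 1 := by
      have := one_le_potential (Λ := Λ) (t := t) (ω := ω)
      omega
    obtain ⟨I, J, heavy, weight_eq⟩ := exists_isHeavyPair hcap
    have half_le := heavy.half_le_pr_potential_le hΛ ht
    rw [weight_eq, eq_one] at half_le
    refine (expect_comp_le_of_le_pr lyapunov_mono one_le_two (fun x =>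
      (potential_resample_succ_le hΛ ht ω x).trans_eq (by rw [eq_one, one_add_one_eq_two]))
      half_le).trans ?_
    norm_num [eq_one, lyapunov_one, lyapunov_two, lyapunovUpper]

end Lyapunov

section BilinearForms

lemma mul_card_le_card_filter_of_le_sum {ι : Type*} {Y : Finset ι} {f : ι → ℝ} {m s : ℝ}
    (hm : 0 < m) (hs : 0 ≤ s) (hf : ∀ b ∈ Y, f b ≤ m) (h : s * #Y * m ≤ ∑ b ∈ Y, f b) :
    s * #Y / 2 ≤ #{b ∈ Y | s * m / 2 ≤ f b} := by
  refine le_of_mul_le_mul_right ?_ hm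
  have sum_le : ∑ b ∈ Y, f b ≤ ∑ b ∈ Y, (ind (s * m / 2 ≤ f b) * m + s * m / 2) := by
    refine sum_le_sum fun b hb => ?_
    by_cases hfb : s * m / 2 ≤ f b
    · rw [ind_pos hfb, one_mul]
      linarith [hf b hb, mul_nonneg hs hm.le]
    · rw [ind_neg hfb, zero_mul, zero_add]
      exact (not_le.1 hfb).le
  rw [sum_add_distrib, ← sum_mul, sum_ind, sum_const, nsmul_eq_mul] at sum_le
  linarith

lemma pr_half_card_le_sum_ind_le {α ι : Type*} [Fintype α] {Y : Finset ι} (hY : Y.Nonempty)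
    {E : ι → α → Prop} {p : ℝ} (h : ∀ b ∈ Y, pr (E b) ≤ p) :
    pr (fun a => (#Y : ℝ) / 2 ≤ ∑ b ∈ Y, ind (E b a)) ≤ 2 * p := by
  have card_pos : (0 : ℝ) < #Y := Nat.cast_pos.2 hY.card_pos
  refine (pr_le_expect_div (fun a => sum_nonneg fun _ _ => ind_nonneg _) (half_pos card_pos)).trans
    ((div_le_iff₀ (half_pos card_pos)).2 ?_)
  calc 𝔼 a, ∑ b ∈ Y, ind (E b a) = ∑ b ∈ Y, pr (E b) := expect_sum_comm _ _ _
    _ ≤ #Y * p := (sum_le_sum h).trans_eq (by rw [sum_const, nsmul_eq_mul])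
    _ = 2 * p * (#Y / 2) := by ring

/-- The Littlewood–Offord inequality is applied to each row with many large coefficients, and then,
when most of these rows give a large linear form in `x`, once more to `y`. -/
lemma expect_pr_abs_bilinear_lt_le {ι κ : Type*} [Fintype ι] [DecidableEq ι] [Fintype κ]
    [DecidableEq κ] {X : Finset ι} {Y : Finset κ} (c : κ → ι → ℝ) (d : κ → ℝ)
    (G : κ → (ι → Bool) → ℝ) (h : (ι → Bool) → ℝ) {r s : ℝ} (hr : 0 < r) (hs : 0 < s)
    (hX : X.Nonempty) (hY : Y.Nonempty)
    (hG : ∀ b ∈ Y, ∀ x, G b x = ∑ a, rad (x a) * c b a + d b)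
    (large : s * #Y * #X ≤ ∑ b ∈ Y, ∑ a ∈ X, ind (r ≤ |c b a|)) :
    𝔼 x, pr (fun y : κ → Bool => |∑ b, rad (y b) * G b x + h x| < r) ≤
      2 / √(s * #X / 2) + 1 / √(s * #Y / 4) := by
  have card_X_pos : (0 : ℝ) < #X := Nat.cast_pos.2 hX.card_pos
  have : (0 : ℝ) < #Y := Nat.cast_pos.2 hY.card_pos
  simp only [sum_ind] at large
  set Y' := {b ∈ Y | s * #X / 2 ≤ (#{a ∈ X | r ≤ |c b a|} : ℝ)}
  have card_Y'_ge : s * #Y / 2 ≤ #Y' := mul_card_le_card_filter_of_le_sum card_X_pos hs.le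
    (fun b _ => Nat.cast_le.2 (card_filter_le _ _)) large
  have hY' : Y'.Nonempty := card_pos.1 (Nat.cast_pos.1 (lt_of_lt_of_le (by positivity) card_Y'_ge))
  have pr_row_le : ∀ b ∈ Y', pr (fun x => |G b x| < r) ≤ 1 / √(s * #X / 2) := by
    intro b hb
    obtain ⟨hbY, many_large⟩ := mem_filter.1 hb
    simp only [hG b hbY]
    exact pr_abs_sum_rad_mul_add_lt_le (c b) hr (by positivity) many_large
      (fun a ha => (mem_filter.1 ha).2) (d b)
  have pr_le_ind_add : ∀ x, pr (fun y : κ → Bool => |∑ b, rad (y b) * G b x + h x| < r) ≤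
      ind ((#Y' : ℝ) / 2 ≤ ∑ b ∈ Y', ind (|G b x| < r)) + 1 / √(s * #Y / 4) := by
    intro x
    by_cases hx : (#Y' : ℝ) / 2 ≤ ∑ b ∈ Y', ind (|G b x| < r)
    · rw [ind_pos hx]
      exact (pr_le_one _).trans (le_add_of_nonneg_right (by positivity))
    · rw [ind_neg hx, zero_add]
      refine pr_abs_sum_rad_mul_add_lt_le (fun b => G b x) hr (by positivity)
        (S := {b ∈ Y' | r ≤ |G b x|}) ?_ (fun b hb => (mem_filter.1 hb).2) (h x)
      have card_add : (#{b ∈ Y' | |G b x| < r} : ℝ) + #{b ∈ Y' | r ≤ |G b x|} = #Y' := by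
        simp only [← not_lt]
        exact_mod_cast card_filter_add_card_filter_not (s := Y') fun b => |G b x| < r
      rw [sum_ind] at hx
      linarith
  calc 𝔼 x, pr (fun y : κ → Bool => |∑ b, rad (y b) * G b x + h x| < r)
      ≤ 𝔼 x, (ind ((#Y' : ℝ) / 2 ≤ ∑ b ∈ Y', ind (|G b x| < r)) + 1 / √(s * #Y / 4)) :=
        expect_le_expect fun x _ => pr_le_ind_add x
    _ = pr (fun x => (#Y' : ℝ) / 2 ≤ ∑ b ∈ Y', ind (|G b x| < r)) + 1 / √(s * #Y / 4) := by
        rw [expect_add_distrib, Fintype.expect_const, pr]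
    _ ≤ 2 * (1 / √(s * #X / 2)) + 1 / √(s * #Y / 4) :=
        add_le_add_left (pr_half_card_le_sum_ind_le hY' pr_row_le) _
    _ = _ := by rw [mul_one_div]

end BilinearForms

section Density

variable {n t : ℕ} {Λ : ℝ} {ω : SymSigns (Fin n)} {a b : Fin n}

/-- The minor of the leading `t × t` block obtained by deleting row `a` and column `b` is heavy. -/
def IsHeavyMinor (Λ : ℝ) (t : ℕ) (ω : SymSigns (Fin n)) (a b : Fin n) : Prop :=
  threshold Λ t ≤ |subPer (signMatrix ω) ((initSeg n t).erase a) ((initSeg n t).erase b)|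

/-- The lower half of the first `t` indices. -/
def lowerHalf (n t : ℕ) : Finset (Fin n) := initSeg n (t / 2)

/-- The upper half of the first `t` indices. -/
def upperHalf (n t : ℕ) : Finset (Fin n) := initSeg n t \ initSeg n (t / 2)

/-- A positive proportion of the minors with deleted row in the upper half and deleted column in the
lower half is heavy. -/
def IsDense (Λ : ℝ) (t : ℕ) (ω : SymSigns (Fin n)) : Prop :=
  lyapunovRate / 2 * #(upperHalf n t) * #(lowerHalf n t) ≤
    ∑ b ∈ upperHalf n t, ∑ a ∈ lowerHalf n t, ind (IsHeavyMinor Λ t ω b a)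

lemma lowerHalf_subset : lowerHalf n t ⊆ initSeg n t := initSeg_mono (Nat.div_le_self _ _)

lemma upperHalf_subset : upperHalf n t ⊆ initSeg n t := sdiff_subset

lemma card_lowerHalf (ht : t ≤ n) : #(lowerHalf n t) = t / 2 :=
  card_initSeg ((Nat.div_le_self _ _).trans ht)

lemma card_upperHalf (ht : t ≤ n) : #(upperHalf n t) = t - t / 2 := by
  rw [upperHalf, ← lowerHalf, card_sdiff_of_subset lowerHalf_subset, card_initSeg ht,
    card_lowerHalf ht]

lemma lowerHalf_nonempty (two_le : 2 ≤ t) (ht : t ≤ n) : (lowerHalf n t).Nonempty := by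
  rw [← card_pos, card_lowerHalf ht]
  omega

lemma upperHalf_nonempty (two_le : 2 ≤ t) (ht : t ≤ n) : (upperHalf n t).Nonempty := by
  rw [← card_pos, card_upperHalf ht]
  omega

lemma ne_of_mem_upperHalf_of_mem_lowerHalf (hb : b ∈ upperHalf n t) (ha : a ∈ lowerHalf n t) :
    b ≠ a :=
  (ne_of_mem_of_not_mem ha (mem_sdiff.1 hb).2).symm

lemma IsHeavyMinor.potential_eq_one (ha : a ∈ initSeg n t) (hb : b ∈ initSeg n t) (hab : a ≠ b)
    (h : IsHeavyMinor Λ t ω a b) : potential Λ t ω = 1 := by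
  have sdiff_eq : ({a} : Finset (Fin n)) \ {b} = {a} := by simpa using hab
  have heavy : IsHeavyPair Λ t ω {a} {b} :=
    { row_subset := singleton_subset_iff.2 ha
      col_subset := singleton_subset_iff.2 hb
      card_eq := rfl
      nonempty_sdiff := by
        rw [sdiff_eq]
        exact singleton_nonempty a
      le_abs := by
        rw [sdiff_singleton_eq_erase, sdiff_singleton_eq_erase]
        exact h }
  refine le_antisymm (heavy.potential_le.trans_eq ?_) one_le_potential
  rw [weight, sdiff_eq, card_singleton]

lemma IsDense.potential_eq_one (two_le : 2 ≤ t) (ht : t ≤ n) (h : IsDense Λ t ω) :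
    potential Λ t ω = 1 := by
  have card_lower_pos := (lowerHalf_nonempty two_le ht).card_pos
  have card_upper_pos := (upperHalf_nonempty two_le ht).card_pos
  have sum_pos : 0 < ∑ b ∈ upperHalf n t, ∑ a ∈ lowerHalf n t, ind (IsHeavyMinor Λ t ω b a) := by
    have := lyapunovRate_pos
    exact lt_of_lt_of_le (by positivity) h
  obtain ⟨b, hb, row_ne⟩ := exists_ne_zero_of_sum_ne_zero sum_pos.ne'
  obtain ⟨a, ha, ind_ne⟩ := exists_ne_zero_of_sum_ne_zero row_ne
  exact IsHeavyMinor.potential_eq_one (upperHalf_subset hb) (lowerHalf_subset ha)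
    (ne_of_mem_upperHalf_of_mem_lowerHalf hb ha) (not_imp_comm.1 ind_neg ind_ne)

end Density

section Exchangeability

variable {n t : ℕ} {Λ : ℝ} {a b u v : Fin n}

lemma isHeavyMinor_relabel {σ : Equiv.Perm (Fin n)}
    (hσ : ∀ i, σ i ∈ initSeg n t ↔ i ∈ initSeg n t) (ω : SymSigns (Fin n)) (a b : Fin n) :
    IsHeavyMinor Λ t (relabel σ ω) a b ↔ IsHeavyMinor Λ t ω (σ a) (σ b) := by
  rw [IsHeavyMinor, subPer_signMatrix_relabel, map_erase, map_erase, map_initSeg hσ]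
  rfl

lemma swap_mem_initSeg (ha : a ∈ initSeg n t) (hb : b ∈ initSeg n t) (i : Fin n) :
    Equiv.swap a b i ∈ initSeg n t ↔ i ∈ initSeg n t := by
  rw [Equiv.swap_apply_def]
  split_ifs <;> simp [*]

lemma exists_perm_initSeg_map_pair (ha : a ∈ initSeg n t) (hb : b ∈ initSeg n t)
    (hu : u ∈ initSeg n t) (hv : v ∈ initSeg n t) (hab : a ≠ b) (huv : u ≠ v) :
    ∃ σ : Equiv.Perm (Fin n), (∀ i, σ i ∈ initSeg n t ↔ i ∈ initSeg n t) ∧ σ u = a ∧ σ v = b := by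
  let c := Equiv.swap u a v
  have hc : c ∈ initSeg n t := (swap_mem_initSeg hu ha v).2 hv
  have hac : a ≠ c := by
    rw [← Equiv.swap_apply_left u a]
    exact (Equiv.swap u a).injective.ne huv
  refine ⟨Equiv.swap c b * Equiv.swap u a, fun i => ?_, ?_, ?_⟩
  · rw [Equiv.Perm.mul_apply, swap_mem_initSeg hc hb, swap_mem_initSeg hu ha]
  · rw [Equiv.Perm.mul_apply, Equiv.swap_apply_left, Equiv.swap_apply_of_ne_of_ne hac hab]
  · rw [Equiv.Perm.mul_apply, Equiv.swap_apply_left]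

lemma expect_lyapunov_mul_ind_not_isHeavyMinor_eq (ha : a ∈ initSeg n t) (hb : b ∈ initSeg n t)
    (hu : u ∈ initSeg n t) (hv : v ∈ initSeg n t) (hab : a ≠ b) (huv : u ≠ v) :
    𝔼 ω, lyapunov (potential Λ t ω) * ind (¬ IsHeavyMinor Λ t ω a b) =
      𝔼 ω, lyapunov (potential Λ t ω) * ind (¬ IsHeavyMinor Λ t ω u v) := by
  obtain ⟨σ, hσ, rfl, rfl⟩ := exists_perm_initSeg_map_pair ha hb hu hv hab huv
  refine Eq.trans ?_
    (expect_relabel σ fun ω => lyapunov (potential Λ t ω) * ind (¬ IsHeavyMinor Λ t ω u v))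
  simp only [potential_relabel hσ, isHeavyMinor_relabel hσ]

end Exchangeability

section TwoSteps

variable {n t : ℕ} {Λ : ℝ}

/-- The array `ω` with rows and columns `t` and `t + 1` replaced, first by `x`, then by `y`. -/
def resampleTwo (ω : SymSigns (Fin n)) (ht : t + 1 < n) (x y : Fin n → Bool) : SymSigns (Fin n) :=
  resample (resample ω ⟨t, Nat.lt_of_succ_lt ht⟩ x) ⟨t + 1, ht⟩ y

/-- The event that the minor deleting row `t` and column `t + 1` is heavy after two steps. -/
def IsHeavyAfterTwo (Λ : ℝ) (ω : SymSigns (Fin n)) (ht : t + 1 < n) (x y : Fin n → Bool) : Prop :=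
  IsHeavyMinor Λ (t + 2) (resampleTwo ω ht x y) ⟨t, Nat.lt_of_succ_lt ht⟩ ⟨t + 1, ht⟩

/-- The first-order minors of the leading `t × t` block, extended by `0`. -/
noncomputable def minorCoeff (ω : SymSigns (Fin n)) (t : ℕ) (b a : Fin n) : ℝ :=
  if a ∈ initSeg n t then
    subPer (signMatrix ω) ((initSeg n t).erase b) ((initSeg n t).erase a) else 0

/-- The coefficient of the sign `b` of the second new row in the minor deleting row `t` and column
`t + 1` after two steps, as a function of the first new row. -/
noncomputable def minorForm (ω : SymSigns (Fin n)) (t : ℕ) (b : Fin n) (x : Fin n → Bool) : ℝ :=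
  if b ∈ initSeg n t then ∑ a, rad (x a) * minorCoeff ω t b a
  else if b.val = t then subPer (signMatrix ω) (initSeg n t) (initSeg n t) else 0

lemma minorForm_of_mem (ω : SymSigns (Fin n)) {b : Fin n} (hb : b ∈ initSeg n t)
    (x : Fin n → Bool) : minorForm ω t b x = ∑ a, rad (x a) * minorCoeff ω t b a :=
  if_pos hb

lemma subPer_resample_insert_erase (ht : t < n) (ω : SymSigns (Fin n)) {b : Fin n}
    (hb : b ∈ initSeg n t) (x : Fin n → Bool) :
    subPer (signMatrix (resample ω ⟨t, ht⟩ x)) (initSeg n t)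
        ((insert ⟨t, ht⟩ (initSeg n t)).erase b) = minorForm ω t b x := by
  have notMem := notMem_initSeg ht
  rw [subPer_signMatrix_comm, erase_insert_of_ne (ne_of_mem_of_not_mem hb notMem).symm,
    subPer_resample_insert_left ω x (fun h => notMem (mem_of_mem_erase h)) notMem,
    minorForm_of_mem ω hb]
  simp only [minorCoeff, mul_ite, mul_zero, sum_ite_mem, univ_inter]

lemma subPer_resampleTwo_eq (ω : SymSigns (Fin n)) (ht : t + 1 < n) (x y : Fin n → Bool) :
    subPer (signMatrix (resampleTwo ω ht x y))
        ((initSeg n (t + 2)).erase ⟨t, Nat.lt_of_succ_lt ht⟩)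
        ((initSeg n (t + 2)).erase ⟨t + 1, ht⟩) =
      ∑ b, rad (y b) * minorForm ω t b x := by
  set u : Fin n := ⟨t, Nat.lt_of_succ_lt ht⟩
  set v : Fin n := ⟨t + 1, ht⟩
  have u_notMem : u ∉ initSeg n t := notMem_initSeg _
  have v_notMem : v ∉ insert u (initSeg n t) := by
    rw [← initSeg_succ]
    exact notMem_initSeg ht
  have v_notMem' : v ∉ initSeg n t := fun h => v_notMem (mem_insert_of_mem h)
  have v_ne_u : v ≠ u := fun h => v_notMem (h ▸ mem_insert_self _ _)
  have minorForm_self : minorForm ω t u x = subPer (signMatrix ω) (initSeg n t) (initSeg n t) := by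
    rw [minorForm, if_neg u_notMem, if_pos rfl]
  have minorForm_of_notMem : ∀ b ∉ insert u (initSeg n t), minorForm ω t b x = 0 := fun b hb => by
    rw [mem_insert, not_or] at hb
    rw [minorForm, if_neg hb.2, if_neg fun h => hb.1 (Fin.ext h)]
  rw [initSeg_succ (t := t + 1) ht, initSeg_succ (Nat.lt_of_succ_lt ht),
    erase_insert v_notMem, erase_insert_of_ne v_ne_u, erase_insert u_notMem, resampleTwo,
    subPer_resample_insert_left _ y v_notMem' v_notMem,
    ← sum_subset (subset_univ (insert u (initSeg n t))) fun b _ hb => by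
      rw [minorForm_of_notMem b hb, mul_zero],
    sum_insert u_notMem, sum_insert u_notMem, erase_insert u_notMem,
    subPer_resample_of_notMem ω x u_notMem u_notMem, minorForm_self]
  congr 1
  exact sum_congr rfl fun b hb => by rw [subPer_resample_insert_erase _ ω hb x]

lemma abs_minorForm_lt_of_not_isHeavyAfterTwo (hΛ : 0 < Λ) (ω : SymSigns (Fin n)) (ht : t + 1 < n)
    {x y : Fin n → Bool} (h : ¬ IsHeavyAfterTwo Λ ω ht x y) :
    |∑ b, rad (y b) * minorForm ω t b x| < threshold Λ t := by
  rw [← subPer_resampleTwo_eq ω ht]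
  exact (not_le.1 h).trans_le (threshold_antitone hΛ (Nat.le_add_right t 2))

/-- A bound of order `t ^ (-1 / 2)` for the probability that the minor deleting row `t` and column
`t + 1` is not heavy after two steps when the heavy minors are dense. -/
noncomputable def densityError (t : ℕ) : ℝ :=
  2 / √(lyapunovRate / 2 * (t / 2 : ℕ) / 2) + 1 / √(lyapunovRate / 2 * (t - t / 2 : ℕ) / 4)

lemma densityError_nonneg (t : ℕ) : 0 ≤ densityError t := by
  unfold densityError
  positivity

lemma IsDense.expect_pr_not_isHeavyAfterTwo_le (hΛ : 0 < Λ) (two_le : 2 ≤ t) (ht : t + 1 < n)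
    {ω : SymSigns (Fin n)} (h : IsDense Λ t ω) :
    𝔼 x, pr (fun y => ¬ IsHeavyAfterTwo Λ ω ht x y) ≤ densityError t := by
  have t_le : t ≤ n := by omega
  have bilinear_lt := expect_pr_abs_bilinear_lt_le (minorCoeff ω t) 0 (minorForm ω t) 0
    (threshold_pos hΛ t) (half_pos lyapunovRate_pos) (lowerHalf_nonempty two_le t_le)
    (upperHalf_nonempty two_le t_le)
    (fun b hb x => by rw [minorForm_of_mem ω (upperHalf_subset hb), Pi.zero_apply, add_zero])
    (h.trans_eq (sum_congr rfl fun b _ => sum_congr rfl fun a ha => by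
      rw [minorCoeff, if_pos (lowerHalf_subset ha), IsHeavyMinor]))
  rw [card_lowerHalf t_le, card_upperHalf t_le] at bilinear_lt
  refine (expect_le_expect fun x _ => pr_mono fun y hy => ?_).trans bilinear_lt
  rw [Pi.zero_apply, add_zero]
  exact abs_minorForm_lt_of_not_isHeavyAfterTwo hΛ ω ht hy

lemma pr_abs_sum_rad_mul_lt_le_half {ι : Type*} [Fintype ι] [DecidableEq ι] (c : ι → ℝ) {i : ι}
    {r : ℝ} (hi : r ≤ |c i|) : pr (fun x : ι → Bool => |∑ k, rad (x k) * c k| < r) ≤ 1 / 2 := by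
  have one_sub_le := le_pr_exists_le_abs {i} (fun _ (x : ι → Bool) => ∑ k, rad (x k) * c k) (r := r)
    fun j hj x y hxy hne => by
      obtain rfl := mem_singleton.1 hj
      have sub_eq : ∑ k, rad (x k) * c k - ∑ k, rad (y k) * c k =
          (rad (x j) - rad (y j)) * c j := by
        rw [← sum_sub_distrib, sum_eq_single j, sub_mul]
        · exact fun k _ hk => by rw [hxy k (by simpa using hk), sub_self]
        · exact fun h => absurd (mem_univ j) h
      rw [sub_eq, abs_mul, abs_rad_sub_rad hne]
      gcongr
  simp only [card_singleton, mem_singleton, exists_eq_left, ← not_lt, pr_not] at one_sub_le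
  linarith

/-- A potential of `1` means that one of the coefficients of the bilinear form is large. -/
lemma expect_pr_not_isHeavyAfterTwo_le (hΛ : 0 < Λ) (ht : t + 1 < n) {ω : SymSigns (Fin n)}
    (h : potential Λ t ω = 1) : 𝔼 x, pr (fun y => ¬ IsHeavyAfterTwo Λ ω ht x y) ≤ 3 / 4 := by
  obtain ⟨I, J, heavy, weight_eq⟩ := exists_isHeavyPair (by omega : potential Λ t ω ≠ 4 * n + 1)
  have card_I : #I = 1 := by
    have : #(I \ J) ≤ #I := card_le_card sdiff_subset
    rw [weight] at weight_eq
    have := heavy.nonempty_sdiff.card_pos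
    omega
  obtain ⟨b, rfl⟩ := card_eq_one.1 card_I
  obtain ⟨a, rfl⟩ := card_eq_one.1 (heavy.card_eq ▸ card_I)
  have hb := singleton_subset_iff.1 heavy.row_subset
  have ha := singleton_subset_iff.1 heavy.col_subset
  have le_abs_coeff : threshold Λ t ≤ |minorCoeff ω t b a| := by
    rw [minorCoeff, if_pos ha, ← sdiff_singleton_eq_erase, ← sdiff_singleton_eq_erase]
    exact heavy.le_abs
  have pr_form_le : pr (fun x => |minorForm ω t b x| < threshold Λ t) ≤ 1 / 2 := by
    simp only [minorForm_of_mem ω hb]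
    exact pr_abs_sum_rad_mul_lt_le_half _ le_abs_coeff
  have pr_le : ∀ x, pr (fun y => ¬ IsHeavyAfterTwo Λ ω ht x y) ≤
      1 / 2 + 1 / 2 * ind (|minorForm ω t b x| < threshold Λ t) := by
    intro x
    by_cases hx : |minorForm ω t b x| < threshold Λ t
    · rw [ind_pos hx]
      exact (pr_le_one _).trans (by norm_num)
    · rw [ind_neg hx, mul_zero, add_zero]
      exact (pr_mono fun y => abs_minorForm_lt_of_not_isHeavyAfterTwo hΛ ω ht).trans
        (pr_abs_sum_rad_mul_lt_le_half (fun b => minorForm ω t b x) (not_lt.1 hx))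
  refine (expect_le_expect fun x _ => pr_le x).trans ?_
  rw [expect_add_distrib, Fintype.expect_const, ← mul_expect, ← pr]
  linarith

lemma potential_resampleTwo_le (hΛ : 0 < Λ) (ω : SymSigns (Fin n)) (ht : t + 1 < n)
    (x y : Fin n → Bool) : potential Λ (t + 2) (resampleTwo ω ht x y) ≤ potential Λ t ω + 2 :=
  (potential_resample_succ_le hΛ ht _ y).trans
    (Nat.succ_le_succ (potential_resample_succ_le hΛ (Nat.lt_of_succ_lt ht) ω x))

lemma lyapunov_nonneg (v : ℕ) : 0 ≤ lyapunov v := zero_le_one.trans (one_le_lyapunov v)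

lemma expect_lyapunov_mul_ind_le_of_eq_one (hΛ : 0 < Λ) (ht : t + 1 < n) {ω : SymSigns (Fin n)}
    (h : potential Λ t ω = 1) {p : ℝ}
    (hp : 𝔼 x, pr (fun y => ¬ IsHeavyAfterTwo Λ ω ht x y) ≤ p) :
    𝔼 x, 𝔼 y, lyapunov (potential Λ (t + 2) (resampleTwo ω ht x y)) *
      ind (¬ IsHeavyAfterTwo Λ ω ht x y) ≤ lyapunov 3 * p := by
  have potential_le_three : ∀ x y, potential Λ (t + 2) (resampleTwo ω ht x y) ≤ 3 := fun x y =>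
    (potential_resampleTwo_le hΛ ω ht x y).trans_eq (by rw [h])
  calc 𝔼 x, 𝔼 y, lyapunov (potential Λ (t + 2) (resampleTwo ω ht x y)) *
        ind (¬ IsHeavyAfterTwo Λ ω ht x y)
      ≤ 𝔼 x, 𝔼 y, lyapunov 3 * ind (¬ IsHeavyAfterTwo Λ ω ht x y) :=
        expect_le_expect fun x _ => expect_le_expect fun y _ =>
          mul_le_mul_of_nonneg_right (lyapunov_mono (potential_le_three x y)) (ind_nonneg _)
    _ = lyapunov 3 * 𝔼 x, pr (fun y => ¬ IsHeavyAfterTwo Λ ω ht x y) := by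
        simp only [← mul_expect, pr]
    _ ≤ lyapunov 3 * p := mul_le_mul_of_nonneg_left hp (lyapunov_nonneg 3)

lemma expect_lyapunov_resampleTwo_le (hΛ : 0 < Λ) (ht : t + 1 < n) {ω : SymSigns (Fin n)}
    (hcap : potential Λ t ω ≠ 4 * n + 1) (two_le : 2 ≤ potential Λ t ω) :
    𝔼 x, 𝔼 y, lyapunov (potential Λ (t + 2) (resampleTwo ω ht x y)) ≤
      (1 - lyapunovRate) * lyapunov (potential Λ t ω) :=
  (expect_le_expect fun _ _ => expect_lyapunov_le hΛ ht _).trans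
    (expect_lyapunovUpper_le hΛ (Nat.lt_of_succ_lt ht) hcap two_le)

lemma expect_lyapunov_mul_ind_not_isHeavyAfterTwo_le (hΛ : 0 < Λ) (two_le : 2 ≤ t)
    (ht : t + 1 < n) (ω : SymSigns (Fin n)) :
    𝔼 x, 𝔼 y, lyapunov (potential Λ (t + 2) (resampleTwo ω ht x y)) *
        ind (¬ IsHeavyAfterTwo Λ ω ht x y) ≤
      (1 - lyapunovRate) * (lyapunov (potential Λ t ω) * ind (¬ IsDense Λ t ω)) +
        lyapunov 3 * densityError t +
        lyapunov (4 * n + 1) * ind (potential Λ t ω = 4 * n + 1) := by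
  have rate_nonneg : 0 ≤ 1 - lyapunovRate := sub_nonneg.2 lyapunovRate_lt_one.le
  have error_nonneg := mul_nonneg (lyapunov_nonneg 3) (densityError_nonneg t)
  have main_nonneg := mul_nonneg rate_nonneg
    (mul_nonneg (lyapunov_nonneg (potential Λ t ω)) (ind_nonneg (¬ IsDense Λ t ω)))
  have cap_nonneg := mul_nonneg (lyapunov_nonneg (4 * n + 1))
    (ind_nonneg (potential Λ t ω = 4 * n + 1))
  have drop_ind : 𝔼 x, 𝔼 y, lyapunov (potential Λ (t + 2) (resampleTwo ω ht x y)) *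
      ind (¬ IsHeavyAfterTwo Λ ω ht x y) ≤
      𝔼 x, 𝔼 y, lyapunov (potential Λ (t + 2) (resampleTwo ω ht x y)) :=
    expect_le_expect fun x _ => expect_le_expect fun y _ =>
      mul_le_of_le_one_right (lyapunov_nonneg _) (ind_le_one _)
  by_cases dense : IsDense Λ t ω
  · have := expect_lyapunov_mul_ind_le_of_eq_one hΛ ht
      (dense.potential_eq_one two_le (by omega))
      (dense.expect_pr_not_isHeavyAfterTwo_le hΛ two_le ht)
    linarith
  rw [ind_pos dense, mul_one] at main_nonneg ⊢
  by_cases hcap : potential Λ t ω = 4 * n + 1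
  · have le_cap : 𝔼 x, 𝔼 y, lyapunov (potential Λ (t + 2) (resampleTwo ω ht x y)) ≤
        lyapunov (4 * n + 1) :=
      expect_le_of_forall_le fun x => expect_le_of_forall_le fun y =>
        lyapunov_mono (potential_le_cap _ _ _)
    rw [ind_pos hcap, mul_one]
    linarith
  by_cases two_le_potential : 2 ≤ potential Λ t ω
  · have := expect_lyapunov_resampleTwo_le hΛ ht hcap two_le_potential
    linarith
  · have eq_one : potential Λ t ω = 1 := by
      have := one_le_potential (Λ := Λ) (t := t) (ω := ω)
      omega
    have := expect_lyapunov_mul_ind_le_of_eq_one hΛ ht eq_one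
      (expect_pr_not_isHeavyAfterTwo_le hΛ ht eq_one)
    have constants : lyapunov 3 * (3 / 4) ≤ 1 - lyapunovRate := by
      norm_num [lyapunov, lyapunovRate]
    rw [ind_neg hcap, mul_zero, add_zero, eq_one, lyapunov_one]
    linarith

end TwoSteps

section SparseMass

variable {n t : ℕ} {Λ : ℝ}

/-- The expected Lyapunov function on the event that the heavy minors are not dense. -/
noncomputable def sparseMass (n : ℕ) (Λ : ℝ) (t : ℕ) : ℝ :=
  𝔼 ω : SymSigns (Fin n), lyapunov (potential Λ t ω) * ind (¬ IsDense Λ t ω)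

lemma sparseMass_nonneg (Λ : ℝ) (t : ℕ) : 0 ≤ sparseMass n Λ t :=
  expect_nonneg fun _ _ => mul_nonneg (lyapunov_nonneg _) (ind_nonneg _)

lemma mul_ind_not_isDense_le_sum (ω : SymSigns (Fin n)) :
    (1 - lyapunovRate / 2) * #(upperHalf n t) * #(lowerHalf n t) * ind (¬ IsDense Λ t ω) ≤
      ∑ b ∈ upperHalf n t, ∑ a ∈ lowerHalf n t, ind (¬ IsHeavyMinor Λ t ω b a) := by
  by_cases dense : IsDense Λ t ω
  · rw [ind_neg (not_not.2 dense), mul_zero]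
    exact sum_nonneg fun b _ => sum_nonneg fun a _ => ind_nonneg _
  · simp only [ind_pos dense, mul_one, ind_not, sum_sub_distrib, sum_const, nsmul_eq_mul]
    linarith [not_le.1 dense]

/-- By exchangeability a single position controls the failure of density. -/
lemma mul_sparseMass_le (two_le : 2 ≤ t) (ht : t ≤ n) {u v : Fin n} (hu : u ∈ initSeg n t)
    (hv : v ∈ initSeg n t) (huv : u ≠ v) :
    (1 - lyapunovRate / 2) * sparseMass n Λ t ≤
      𝔼 ω : SymSigns (Fin n), lyapunov (potential Λ t ω) * ind (¬ IsHeavyMinor Λ t ω u v) := by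
  have card_pos : (0 : ℝ) < #(upperHalf n t) * #(lowerHalf n t) :=
    mul_pos (Nat.cast_pos.2 (upperHalf_nonempty two_le ht).card_pos)
      (Nat.cast_pos.2 (lowerHalf_nonempty two_le ht).card_pos)
  refine le_of_mul_le_mul_left ?_ card_pos
  calc (#(upperHalf n t) * #(lowerHalf n t) : ℝ) * ((1 - lyapunovRate / 2) * sparseMass n Λ t)
      = 𝔼 ω : SymSigns (Fin n), lyapunov (potential Λ t ω) *
          ((1 - lyapunovRate / 2) * #(upperHalf n t) * #(lowerHalf n t) *
            ind (¬ IsDense Λ t ω)) := by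
        rw [sparseMass, ← mul_assoc, mul_expect]
        exact expect_congr rfl fun ω _ => by ring
    _ ≤ 𝔼 ω : SymSigns (Fin n), lyapunov (potential Λ t ω) *
          ∑ b ∈ upperHalf n t, ∑ a ∈ lowerHalf n t, ind (¬ IsHeavyMinor Λ t ω b a) :=
        expect_le_expect fun ω _ =>
          mul_le_mul_of_nonneg_left (mul_ind_not_isDense_le_sum ω) (lyapunov_nonneg _)
    _ = ∑ b ∈ upperHalf n t, ∑ a ∈ lowerHalf n t, 𝔼 ω : SymSigns (Fin n),
          lyapunov (potential Λ t ω) * ind (¬ IsHeavyMinor Λ t ω b a) := by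
        simp only [mul_sum, expect_sum_comm]
    _ = ∑ _b ∈ upperHalf n t, ∑ _a ∈ lowerHalf n t, 𝔼 ω : SymSigns (Fin n),
          lyapunov (potential Λ t ω) * ind (¬ IsHeavyMinor Λ t ω u v) :=
        sum_congr rfl fun b hb => sum_congr rfl fun a ha =>
          expect_lyapunov_mul_ind_not_isHeavyMinor_eq (upperHalf_subset hb) (lowerHalf_subset ha)
            hu hv (ne_of_mem_upperHalf_of_mem_lowerHalf hb ha) huv
    _ = _ := by
        simp only [sum_const, nsmul_eq_mul]
        ring

lemma sparseMass_add_two_le (hΛ : 0 < Λ) (two_le : 2 ≤ t) (ht : t + 1 < n) :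
    sparseMass n Λ (t + 2) ≤ (1 - lyapunovRate / 2) * sparseMass n Λ t +
      2 * (lyapunov 3 * densityError t + lyapunov (4 * n + 1) *
        pr fun ω : SymSigns (Fin n) => potential Λ t ω = 4 * n + 1) := by
  set e := lyapunov 3 * densityError t + lyapunov (4 * n + 1) *
    pr fun ω : SymSigns (Fin n) => potential Λ t ω = 4 * n + 1
  have e_nonneg : 0 ≤ e := add_nonneg (mul_nonneg (lyapunov_nonneg 3) (densityError_nonneg t))
    (mul_nonneg (lyapunov_nonneg _) (pr_nonneg _))
  have one_step : (1 - lyapunovRate / 2) * sparseMass n Λ (t + 2) ≤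
      (1 - lyapunovRate) * sparseMass n Λ t + e :=
    calc (1 - lyapunovRate / 2) * sparseMass n Λ (t + 2)
        ≤ 𝔼 ω : SymSigns (Fin n), lyapunov (potential Λ (t + 2) ω) *
            ind (¬ IsHeavyMinor Λ (t + 2) ω ⟨t, Nat.lt_of_succ_lt ht⟩ ⟨t + 1, ht⟩) :=
          mul_sparseMass_le (by omega) ht (by simp [mem_initSeg]) (by simp [mem_initSeg]) (by simp)
      _ = 𝔼 ω : SymSigns (Fin n), 𝔼 x, 𝔼 y,
            lyapunov (potential Λ (t + 2) (resampleTwo ω ht x y)) *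
              ind (¬ IsHeavyAfterTwo Λ ω ht x y) := by
          rw [expect_resample_row ⟨t + 1, ht⟩, expect_resample_row ⟨t, Nat.lt_of_succ_lt ht⟩]
          rfl
      _ ≤ 𝔼 ω : SymSigns (Fin n),
            ((1 - lyapunovRate) * (lyapunov (potential Λ t ω) * ind (¬ IsDense Λ t ω)) +
              lyapunov 3 * densityError t +
              lyapunov (4 * n + 1) * ind (potential Λ t ω = 4 * n + 1)) :=
          expect_le_expect fun ω _ =>
            expect_lyapunov_mul_ind_not_isHeavyAfterTwo_le hΛ two_le ht ω
      _ = (1 - lyapunovRate) * sparseMass n Λ t + e := by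
          rw [expect_add_distrib, expect_add_distrib, Fintype.expect_const, ← mul_expect,
            ← mul_expect, ← pr, ← sparseMass, add_assoc]
  have mass_nonneg := sparseMass_nonneg (n := n) Λ t
  refine le_of_mul_le_mul_left (one_step.trans ?_)
    (by norm_num [lyapunovRate] : 0 < 1 - lyapunovRate / 2)
  unfold lyapunovRate
  nlinarith

end SparseMass

section SecondMoment

variable {ι κ : Type*} [Fintype ι] [DecidableEq ι] [Fintype κ]

lemma expect_eq_zero_of_flip_neg (i : ι) {f : (ι → Bool) → ℝ}
    (hf : ∀ x, f (Function.update x i (!x i)) = -f x) : 𝔼 x, f x = 0 := by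
  have flip_involutive : Function.Involutive fun x : ι → Bool => Function.update x i (!x i) :=
    fun x => by simp
  have expect_neg : 𝔼 x, f x = 𝔼 x, -f x :=
    Fintype.expect_equiv flip_involutive.toPerm _ _ fun x => by
      rw [Function.Involutive.coe_toPerm, hf, neg_neg]
  rw [expect_neg_distrib] at expect_neg
  linarith

lemma expect_rad_four_eq_zero {b b' c c' : ι} (h : b' ≠ b) (hc : c ≠ b) (hc' : c' ≠ b) :
    𝔼 x : ι → Bool, rad (x b) * rad (x b') * (rad (x c) * rad (x c')) = 0 :=
  expect_eq_zero_of_flip_neg b fun x => by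
    rw [Function.update_self, Function.update_of_ne h, Function.update_of_ne hc,
      Function.update_of_ne hc', rad_not]
    ring

lemma expect_rad_four {b b' c c' : ι} (hb : b ≠ b') :
    𝔼 x : ι → Bool, rad (x b) * rad (x b') * (rad (x c) * rad (x c')) =
      (if c = b ∧ c' = b' then 1 else 0) + (if c = b' ∧ c' = b then 1 else 0) := by
  have rad_four_self : ∀ x : ι → Bool, rad (x b) * rad (x b') * (rad (x b) * rad (x b')) = 1 :=
    fun x => by rw [mul_mul_mul_comm, rad_mul_self, rad_mul_self, one_mul]
  by_cases h : c = b ∧ c' = b'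
  · obtain ⟨rfl, rfl⟩ := h
    simp only [rad_four_self, Fintype.expect_const]
    simp [hb]
  by_cases h' : c = b' ∧ c' = b
  · obtain ⟨rfl, rfl⟩ := h'
    have rad_four_swap : ∀ x : ι → Bool,
        rad (x c') * rad (x c) * (rad (x c) * rad (x c')) = 1 := fun x => by
      rw [mul_comm (rad (x c)), rad_four_self]
    simp only [rad_four_swap, Fintype.expect_const]
    simp [hb]
  rw [if_neg h, if_neg h', add_zero]
  by_cases hcb : c = b ∨ c' = b
  · have hcb' : c ≠ b' ∧ c' ≠ b' := by grind
    refine (expect_congr rfl fun x _ => ?_).trans (expect_rad_four_eq_zero hb hcb'.1 hcb'.2)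
    rw [mul_comm (rad (x b))]
  · rw [not_or] at hcb
    exact expect_rad_four_eq_zero hb.symm hcb.1 hcb.2

lemma expect_sq_sum_rad_mul_rad_mul {h : ι → ι → ℝ} (h_comm : ∀ b b', h b b' = h b' b)
    (h_self : ∀ b, h b b = 0) :
    𝔼 x : ι → Bool, (∑ b, ∑ b', rad (x b) * rad (x b') * h b b') ^ 2 =
      2 * ∑ b, ∑ b', h b b' ^ 2 := by
  have sq_eq : ∀ x : ι → Bool, (∑ b, ∑ b', rad (x b) * rad (x b') * h b b') ^ 2 =
      ∑ b, ∑ b', ∑ c, ∑ c', h b b' * h c c' *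
        (rad (x b) * rad (x b') * (rad (x c) * rad (x c'))) := by
    intro x
    simp only [sq, sum_mul, mul_sum]
    exact sum_congr rfl fun b _ => sum_congr rfl fun b' _ =>
      sum_congr rfl fun c _ => sum_congr rfl fun c' _ => by ring
  simp only [sq_eq, expect_sum_comm, ← mul_expect]
  simp only [mul_sum]
  refine sum_congr rfl fun b _ => sum_congr rfl fun b' _ => ?_
  by_cases hb : b = b'
  · simp [hb, h_self]
  have moment_eq : ∀ c c', h b b' * h c c' *
      𝔼 x : ι → Bool, rad (x b) * rad (x b') * (rad (x c) * rad (x c')) =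
      (if c = b then if c' = b' then h b b' ^ 2 else 0 else 0) +
        (if c = b' then if c' = b then h b b' ^ 2 else 0 else 0) := by
    intro c c'
    rw [expect_rad_four hb]
    grind
  have sum_ite_ite : ∀ p q : ι,
      ∑ c, ∑ c', (if c = p then if c' = q then h b b' ^ 2 else 0 else 0) = h b b' ^ 2 := by
    intro p q
    rw [sum_eq_single p (fun c _ hc => by simp [hc]) (by simp)]
    simp
  simp only [moment_eq, sum_add_distrib, sum_ite_ite]
  ring

lemma sum_sq_sum_rad_mul (w : ι → κ → ℝ) (x : ι → Bool) :
    ∑ k, (∑ b, rad (x b) * w b k) ^ 2 = ∑ b, ∑ k, w b k ^ 2 +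
      ∑ b, ∑ b', rad (x b) * rad (x b') * (if b = b' then 0 else w b ⬝ᵥ w b') := by
  have gram_eq : ∀ b b', rad (x b) * rad (x b') * (w b ⬝ᵥ w b') =
      (if b = b' then w b ⬝ᵥ w b else 0) +
        rad (x b) * rad (x b') * (if b = b' then 0 else w b ⬝ᵥ w b') := by
    intro b b'
    by_cases hb : b = b'
    · subst hb
      simp [rad_mul_self]
    · simp [hb]
  calc ∑ k, (∑ b, rad (x b) * w b k) ^ 2
      = ∑ b, ∑ b', rad (x b) * rad (x b') * (w b ⬝ᵥ w b') := by
        simp only [sq, sum_mul, mul_sum, dotProduct]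
        rw [sum_comm]
        refine sum_congr rfl fun b _ => ?_
        rw [sum_comm]
        exact sum_congr rfl fun b' _ => sum_congr rfl fun k _ => by ring
    _ = _ := by
        simp only [gram_eq, sum_add_distrib]
        simp [dotProduct, sq]

/-- Chebyshev's inequality: the squared norm of a random signed sum has mean `μ`. -/
lemma pr_sum_sq_lt_half_le (w : ι → κ → ℝ) {μ : ℝ} (hμ : 0 < μ)
    (sum_eq : ∑ b, ∑ k, w b k ^ 2 = μ) :
    pr (fun x : ι → Bool => ∑ k, (∑ b, rad (x b) * w b k) ^ 2 < μ / 2) ≤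
      8 * (∑ b, ∑ b', (w b ⬝ᵥ w b') ^ 2) / μ ^ 2 := by
  let h : ι → ι → ℝ := fun b b' => if b = b' then 0 else w b ⬝ᵥ w b'
  have h_comm : ∀ b b', h b b' = h b' b := fun b b' => by
    simp only [h, eq_comm (a := b), dotProduct_comm (w b)]
  have h_sq_le : ∀ b b', h b b' ^ 2 ≤ (w b ⬝ᵥ w b') ^ 2 := fun b b' => by
    simp only [h]
    split_ifs
    · rw [zero_pow two_ne_zero]
      exact sq_nonneg _
    · exact le_rfl
  calc pr (fun x : ι → Bool => ∑ k, (∑ b, rad (x b) * w b k) ^ 2 < μ / 2)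
      ≤ pr fun x : ι → Bool => μ ^ 2 / 4 ≤ (∑ b, ∑ b', rad (x b) * rad (x b') * h b b') ^ 2 := by
        refine pr_mono fun x hx => ?_
        rw [sum_sq_sum_rad_mul, sum_eq] at hx
        nlinarith
    _ ≤ (2 * ∑ b, ∑ b', h b b' ^ 2) / (μ ^ 2 / 4) := by
        rw [← expect_sq_sum_rad_mul_rad_mul h_comm fun b => if_pos rfl]
        exact pr_le_expect_div (fun x => sq_nonneg _) (by positivity)
    _ ≤ (2 * ∑ b, ∑ b', (w b ⬝ᵥ w b') ^ 2) / (μ ^ 2 / 4) := by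
        gcongr ?_ / _
        exact mul_le_mul_of_nonneg_left
          (sum_le_sum fun b _ => sum_le_sum fun b' _ => h_sq_le b b') two_pos.le
    _ = _ := by
        field_simp
        ring

end SecondMoment

section SmallBall

variable {ι κ : Type*} [Fintype ι] [DecidableEq ι] [Fintype κ]

lemma dotProduct_self_eq_sum_sq (v : κ → ℝ) : v ⬝ᵥ v = ∑ k, v k ^ 2 := by
  simp only [dotProduct, sq]

lemma sq_dotProduct_le (v w : κ → ℝ) : (v ⬝ᵥ w) ^ 2 ≤ (v ⬝ᵥ v) * (w ⬝ᵥ w) := by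
  rw [dotProduct_self_eq_sum_sq, dotProduct_self_eq_sum_sq]
  exact sum_mul_sq_le_sq_mul_sq univ v w

/-- The one-dimensional Littlewood–Offord inequality for the projection onto a vector `v` that is
correlated with many of the `w b`. -/
lemma pr_sum_sq_lt_le_of_correlated (w : ι → κ → ℝ) {v : κ → ℝ} {W s θ : ℝ} (hW : 0 < W)
    (hs : 0 < s) (hθ : 0 ≤ θ) (hι : 0 < Fintype.card ι) (hv : 0 < v ⬝ᵥ v)
    (hw : ∀ b, ∑ k, w b k ^ 2 ≤ W)
    (correlated : s * Fintype.card ι * ((v ⬝ᵥ v) * W) ≤ ∑ b, (v ⬝ᵥ w b) ^ 2) :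
    pr (fun x : ι → Bool => ∑ k, (∑ b, rad (x b) * w b k) ^ 2 < θ * W) ≤
      (√θ / √(s / 2) + 1) / √(s / 2 * Fintype.card ι) := by
  have scale_pos : 0 < (v ⬝ᵥ v) * W := mul_pos hv hW
  have many_large := mul_card_le_card_filter_of_le_sum (Y := univ) scale_pos hs.le
    (fun b _ => (sq_dotProduct_le v (w b)).trans
      (mul_le_mul_of_nonneg_left ((dotProduct_self_eq_sum_sq _).trans_le (hw b)) hv.le)) correlated
  have littlewood_offord := pr_abs_sum_rad_mul_lt_le (fun b => v ⬝ᵥ w b)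
    (ρ := √(s / 2 * ((v ⬝ᵥ v) * W))) (s := s / 2 * Fintype.card ι)
    (R := √(θ * ((v ⬝ᵥ v) * W))) (by positivity) (by positivity) (by positivity)
    (le_of_eq_of_le (by rw [card_univ]; ring) many_large) (fun b hb => by
      rw [← Real.sqrt_sq_eq_abs]
      exact Real.sqrt_le_sqrt (le_of_eq_of_le (by ring) (mem_filter.1 hb).2))
  rw [Real.sqrt_mul hθ, Real.sqrt_mul (half_pos hs).le, mul_div_mul_right _ _
    (Real.sqrt_pos.2 scale_pos).ne', ← Real.sqrt_mul hθ] at littlewood_offord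
  refine (pr_mono fun x hx => ?_).trans littlewood_offord
  have projection_eq : ∑ b, rad (x b) * (v ⬝ᵥ w b) = v ⬝ᵥ fun k => ∑ b, rad (x b) * w b k := by
    simp only [dotProduct, mul_sum]
    rw [sum_comm]
    exact sum_congr rfl fun k _ => sum_congr rfl fun b _ => by ring
  rw [← Real.sqrt_sq_eq_abs, projection_eq]
  refine Real.sqrt_lt_sqrt (sq_nonneg _) ((sq_dotProduct_le _ _).trans_lt ?_)
  rw [mul_left_comm, dotProduct_self_eq_sum_sq fun k => ∑ b, rad (x b) * w b k]
  exact mul_lt_mul_of_pos_left hx hv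

/-- Either the Gram matrix of the `w b` has small Hilbert–Schmidt norm and the second moment method
applies, or many of the `w b` are correlated with a single one of them. -/
lemma pr_sum_sq_lt_le (w : ι → κ → ℝ) {W δ η θ : ℝ} (hW : 0 < W) (hδ : 0 < δ) (hη : 0 < η)
    (hθ : 0 ≤ θ) (hι : 0 < Fintype.card ι) (hw : ∀ b, ∑ k, w b k ^ 2 ≤ W)
    (le_sum : δ * Fintype.card ι * W ≤ ∑ b, ∑ k, w b k ^ 2)
    (hθδ : 2 * θ ≤ δ * Fintype.card ι)
    (hη_le : (√θ / √(η * δ / 32) + 1) / √(η * δ / 32 * Fintype.card ι) ≤ η) :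
    pr (fun x : ι → Bool => ∑ k, (∑ b, rad (x b) * w b k) ^ 2 < θ * W) ≤ η := by
  have : (0 : ℝ) < Fintype.card ι := Nat.cast_pos.2 hι
  set μ := ∑ b, ∑ k, w b k ^ 2 with sum_eq
  have hμ : 0 < μ := lt_of_lt_of_le (by positivity) le_sum
  by_cases gram_small : ∑ b, ∑ b', (w b ⬝ᵥ w b') ^ 2 ≤ η * μ ^ 2 / 16
  · have threshold_le : θ * W ≤ μ / 2 := by nlinarith
    refine (pr_mono fun x hx => hx.trans_le threshold_le).trans
      ((pr_sum_sq_lt_half_le w hμ sum_eq.symm).trans ?_)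
    rw [div_le_iff₀ (by positivity)]
    nlinarith [sq_nonneg μ]
  · obtain ⟨b₀, hb₀⟩ : ∃ b₀, η / 16 * μ * (w b₀ ⬝ᵥ w b₀) < ∑ b, (w b₀ ⬝ᵥ w b) ^ 2 := by
      by_contra! uncorrelated
      refine gram_small ((sum_le_sum fun b _ => uncorrelated b).trans_eq ?_)
      simp only [← mul_sum, dotProduct_self_eq_sum_sq, ← sum_eq]
      ring
    have norm_pos : 0 < w b₀ ⬝ᵥ w b₀ := by
      refine (dotProduct_self_eq_sum_sq (w b₀) ▸ sum_nonneg fun k _ => sq_nonneg _).lt_of_ne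
        fun norm_eq => ?_
      rw [← norm_eq, mul_zero] at hb₀
      refine hb₀.not_ge (sum_nonpos fun b _ => (sq_dotProduct_le _ _).trans_eq ?_)
      rw [← norm_eq, zero_mul]
    have correlated : η * δ / 16 * Fintype.card ι * ((w b₀ ⬝ᵥ w b₀) * W) ≤
        ∑ b, (w b₀ ⬝ᵥ w b) ^ 2 :=
      calc η * δ / 16 * Fintype.card ι * ((w b₀ ⬝ᵥ w b₀) * W)
          = η / 16 * (δ * Fintype.card ι * W) * (w b₀ ⬝ᵥ w b₀) := by ring
        _ ≤ η / 16 * μ * (w b₀ ⬝ᵥ w b₀) := by gcongr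
        _ ≤ _ := hb₀.le
    have := pr_sum_sq_lt_le_of_correlated w hW (by positivity) hθ hι norm_pos hw correlated
    rw [show η * δ / 16 / 2 = η * δ / 32 by ring] at this
    exact this.trans hη_le

end SmallBall

section MinorMass

variable {n k : ℕ} {A : Finset (Fin n)}

/-- The total squared size of the minors with rows `A` and columns among the first `k`. -/
noncomputable def minorMass (k : ℕ) (ω : SymSigns (Fin n)) (A : Finset (Fin n)) : ℝ :=
  ∑ B ∈ powersetCard #A (initSeg n k), subPer (signMatrix ω) A B ^ 2

/-- The variant of `minorMass` that leaves out the principal minor. -/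
noncomputable def offPrincipalMass (k : ℕ) (ω : SymSigns (Fin n)) (A : Finset (Fin n)) : ℝ :=
  ∑ B ∈ (powersetCard #A (initSeg n k)).erase A, subPer (signMatrix ω) A B ^ 2

lemma offPrincipalMass_le_minorMass (k : ℕ) (ω : SymSigns (Fin n)) (A : Finset (Fin n)) :
    offPrincipalMass k ω A ≤ minorMass k ω A :=
  sum_le_sum_of_subset_of_nonneg (erase_subset _ _) fun _ _ _ => sq_nonneg _

lemma minorMass_empty (k : ℕ) (ω : SymSigns (Fin n)) : minorMass k ω ∅ = 1 := by
  simp [minorMass, subPer]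

lemma offPrincipalMass_mono (ω : SymSigns (Fin n)) (A : Finset (Fin n)) :
    Monotone fun k => offPrincipalMass k ω A := fun _ _ h =>
  sum_le_sum_of_subset_of_nonneg
    (erase_subset_erase _ (powersetCard_mono (initSeg_mono h))) fun _ _ _ => sq_nonneg _

lemma offPrincipalMass_resample (hk : k < n) (ω : SymSigns (Fin n)) (x : Fin n → Bool)
    (hA : A ⊆ initSeg n k) :
    offPrincipalMass k (resample ω ⟨k, hk⟩ x) A = offPrincipalMass k ω A :=
  sum_congr rfl fun B hB => by
    have hB' : B ⊆ initSeg n k := (mem_powersetCard.1 (mem_of_mem_erase hB)).1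
    rw [subPer_resample_of_notMem ω x (notMem_mono hA (notMem_initSeg hk))
      (notMem_mono hB' (notMem_initSeg hk))]

/-- The coefficients of the entry in column `b` of a new row in the expansions, along that row, of
the minors with one more row than `A` and with columns `B` among the first `k`. -/
noncomputable def extensionCoeff (k : ℕ) (ω : SymSigns (Fin n)) (A : Finset (Fin n)) (b : Fin n)
    (B : Finset (Fin n)) : ℝ :=
  if B ∈ powersetCard (#A + 1) (initSeg n k) ∧ b ∈ B then subPer (signMatrix ω) A (B.erase b) else 0

lemma sum_sq_extensionCoeff (ω : SymSigns (Fin n)) (A : Finset (Fin n)) {b : Fin n}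
    (hb : b ∈ initSeg n k) :
    ∑ B, extensionCoeff k ω A b B ^ 2 =
      ∑ B ∈ powersetCard #A (initSeg n k) with b ∉ B, subPer (signMatrix ω) A B ^ 2 :=
  calc ∑ B, extensionCoeff k ω A b B ^ 2
      = ∑ B ∈ powersetCard (#A + 1) (initSeg n k) with b ∈ B,
          subPer (signMatrix ω) A (B.erase b) ^ 2 := by
        simp only [extensionCoeff, ite_pow, zero_pow two_ne_zero]
        exact (sum_filter _ _).symm.trans (sum_congr (by ext B; simp) fun _ _ => rfl)
    _ = _ := by
        refine sum_bij' (fun B _ => B.erase b) (fun B _ => insert b B) ?_ ?_ ?_ ?_ fun _ _ => rfl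
        · intro B hB
          simp only [mem_filter, mem_powersetCard] at hB ⊢
          exact ⟨⟨(erase_subset _ _).trans hB.1.1, by rw [card_erase_of_mem hB.2, hB.1.2]; rfl⟩,
            notMem_erase _ _⟩
        · intro B hB
          simp only [mem_filter, mem_powersetCard] at hB ⊢
          exact ⟨⟨insert_subset hb hB.1.1, by rw [card_insert_of_notMem hB.2, hB.1.2]⟩,
            mem_insert_self _ _⟩
        · exact fun B hB => insert_erase (mem_filter.1 hB).2
        · exact fun B hB => erase_insert (mem_filter.1 hB).2

lemma sum_sq_extensionCoeff_le (k : ℕ) (ω : SymSigns (Fin n)) (A : Finset (Fin n)) (b : Fin n) :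
    ∑ B, extensionCoeff k ω A b B ^ 2 ≤ minorMass k ω A := by
  by_cases hb : b ∈ initSeg n k
  · rw [sum_sq_extensionCoeff ω A hb]
    exact sum_le_sum_of_subset_of_nonneg (filter_subset _ _) fun _ _ _ => sq_nonneg _
  · have coeff_eq_zero : ∀ B, extensionCoeff k ω A b B = 0 := fun B =>
      if_neg fun h => hb ((mem_powersetCard.1 h.1).1 h.2)
    simp only [coeff_eq_zero, zero_pow two_ne_zero, sum_const_zero]
    exact sum_nonneg fun _ _ => sq_nonneg _

/-- A set of `#A` columns extends by one of the first `k` columns in `k - #A` ways. -/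
lemma sub_card_mul_minorMass_le (hk : k ≤ n) (ω : SymSigns (Fin n)) (A : Finset (Fin n)) :
    ((k - #A : ℕ) : ℝ) * minorMass k ω A ≤ ∑ b, ∑ B, extensionCoeff k ω A b B ^ 2 :=
  calc ((k - #A : ℕ) : ℝ) * minorMass k ω A
      = ∑ B ∈ powersetCard #A (initSeg n k), ∑ b ∈ initSeg n k with b ∉ B,
          subPer (signMatrix ω) A B ^ 2 := by
        rw [minorMass, mul_sum]
        refine sum_congr rfl fun B hB => ?_
        obtain ⟨hB_sub, card_eq⟩ := mem_powersetCard.1 hB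
        rw [sum_const, nsmul_eq_mul, filter_notMem_eq_sdiff, card_sdiff_of_subset hB_sub,
          card_initSeg hk, card_eq]
    _ = ∑ b ∈ initSeg n k, ∑ B, extensionCoeff k ω A b B ^ 2 := by
        rw [sum_congr rfl fun b hb => sum_sq_extensionCoeff ω A hb]
        simp only [sum_filter]
        exact sum_comm
    _ ≤ _ := sum_le_sum_of_subset_of_nonneg (subset_univ _) fun _ _ _ =>
        sum_nonneg fun _ _ => sq_nonneg _

lemma sum_rad_mul_extensionCoeff (hk : k < n) (ω : SymSigns (Fin n)) (x : Fin n → Bool)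
    (hA : A ⊆ initSeg n k) {B : Finset (Fin n)} (hB : B ∈ powersetCard (#A + 1) (initSeg n k)) :
    ∑ b, rad (x b) * extensionCoeff k ω A b B =
      subPer (signMatrix (resample ω ⟨k, hk⟩ x)) (insert ⟨k, hk⟩ A) B := by
  rw [subPer_resample_insert_left ω x (notMem_mono hA (notMem_initSeg hk))
    (notMem_mono (mem_powersetCard.1 hB).1 (notMem_initSeg hk)), ← sum_subset (subset_univ B)]
  · exact sum_congr rfl fun b hb => by rw [extensionCoeff, if_pos ⟨hB, hb⟩]
  · exact fun b _ hb => by rw [extensionCoeff, if_neg fun h => hb h.2, mul_zero]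

lemma sum_sq_sum_rad_mul_extensionCoeff_le (hk : k < n) (ω : SymSigns (Fin n)) (x : Fin n → Bool)
    (hA : A ⊆ initSeg n k) :
    ∑ B, (∑ b, rad (x b) * extensionCoeff k ω A b B) ^ 2 ≤
      offPrincipalMass (k + 1) (resample ω ⟨k, hk⟩ x) (insert ⟨k, hk⟩ A) := by
  have hkA : (⟨k, hk⟩ : Fin n) ∉ A := notMem_mono hA (notMem_initSeg hk)
  rw [offPrincipalMass, card_insert_of_notMem hkA,
    ← sum_subset (subset_univ (powersetCard (#A + 1) (initSeg n k)))]
  · rw [sum_congr rfl fun B hB => by rw [sum_rad_mul_extensionCoeff hk ω x hA hB]]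
    refine sum_le_sum_of_subset_of_nonneg (fun B hB => ?_) fun _ _ _ => sq_nonneg _
    refine mem_erase.2 ⟨?_, powersetCard_mono (initSeg_mono k.le_succ) hB⟩
    rintro rfl
    exact notMem_initSeg hk ((mem_powersetCard.1 hB).1 (mem_insert_self _ _))
  · intro B _ hB
    rw [sum_eq_zero fun b _ => ?_, zero_pow two_ne_zero]
    rw [extensionCoeff, if_neg fun h => hB h.1, mul_zero]

end MinorMass

section Growth

variable {n d k f : ℕ} {δ η θ Λ : ℝ} {ω : SymSigns (Fin n)}

/-- At time `k` there is a set of between `k - d - f` and `k - d` rows whose non-principal minors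
have mass at least `θ` per row. The empty set, whose only minor is principal, is always allowed. -/
def HasGrown (d : ℕ) (θ : ℝ) (k f : ℕ) (ω : SymSigns (Fin n)) : Prop :=
  ∃ A ⊆ initSeg n k, #A + d ≤ k ∧ k ≤ #A + d + f ∧ (A = ∅ ∨ θ ^ #A ≤ offPrincipalMass k ω A)

lemma pow_card_le_minorMass {A : Finset (Fin n)} (h : A = ∅ ∨ θ ^ #A ≤ offPrincipalMass k ω A) :
    θ ^ #A ≤ minorMass k ω A := by
  rcases h with rfl | h
  · rw [minorMass_empty, card_empty, pow_zero]
  · exact h.trans (offPrincipalMass_le_minorMass _ _ _)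

lemma HasGrown.of_delay (hk : k < n) (h : HasGrown d θ k f ω) (x : Fin n → Bool) :
    HasGrown d θ (k + 1) (f + 1) (resample ω ⟨k, hk⟩ x) := by
  obtain ⟨A, hA, le_time, time_le, mass_le⟩ := h
  refine ⟨A, hA.trans (initSeg_mono k.le_succ), by omega, by omega, mass_le.imp_right fun h => ?_⟩
  rw [← offPrincipalMass_resample hk ω x hA] at h
  exact h.trans (offPrincipalMass_mono _ _ k.le_succ)

/-- The numerical conditions under which the mass grows by a factor `θ` in one step of the growth,
with failure probability at most `η`; the growth starts at time `d`. -/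
structure IsGrowthRegime (n d : ℕ) (δ η θ : ℝ) : Prop where
  δ_pos : 0 < δ
  η_pos : 0 < η
  one_le_θ : 1 ≤ θ
  mul_le_delay : δ * n ≤ d
  two_mul_le : 2 * θ ≤ δ * n
  smallBall_le : (√θ / √(η * δ / 32) + 1) / √(η * δ / 32 * n) ≤ η

lemma HasGrown.pr_not_succ_le (regime : IsGrowthRegime n d δ η θ) (hk : k < n)
    (h : HasGrown d θ k f ω) :
    pr (fun x => ¬ HasGrown d θ (k + 1) f (resample ω ⟨k, hk⟩ x)) ≤ η := by
  obtain ⟨A, hA, le_time, time_le, mass_le⟩ := h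
  have θ_pos : 0 < θ := one_pos.trans_le regime.one_le_θ
  have pow_le := pow_card_le_minorMass mass_le
  have mass_pos : 0 < minorMass k ω A := (pow_pos θ_pos _).trans_le pow_le
  have card_eq : (Fintype.card (Fin n) : ℝ) = n := by rw [Fintype.card_fin]
  have mul_mass_le : δ * n * minorMass k ω A ≤ ∑ b, ∑ B, extensionCoeff k ω A b B ^ 2 := by
    refine le_trans ?_ (sub_card_mul_minorMass_le hk.le ω A)
    refine mul_le_mul_of_nonneg_right (regime.mul_le_delay.trans ?_) mass_pos.le
    exact_mod_cast (by omega : d ≤ k - #A)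
  have small_ball := pr_sum_sq_lt_le (extensionCoeff k ω A) mass_pos regime.δ_pos regime.η_pos
    θ_pos.le (by rw [Fintype.card_fin]; omega) (sum_sq_extensionCoeff_le k ω A)
    (by rwa [card_eq]) (by rw [card_eq]; exact regime.two_mul_le)
    (by rw [card_eq]; exact regime.smallBall_le)
  refine (pr_mono fun x not_grown => ?_).trans small_ball
  by_contra! large
  have hkA : (⟨k, hk⟩ : Fin n) ∉ A := notMem_mono hA (notMem_initSeg hk)
  have card_insert := card_insert_of_notMem hkA
  refine not_grown ⟨insert ⟨k, hk⟩ A, initSeg_succ hk ▸ insert_subset_insert _ hA, by omega,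
    by omega, Or.inr ?_⟩
  refine le_trans ?_ (large.trans (sum_sq_sum_rad_mul_extensionCoeff_le hk ω x hA))
  rw [card_insert, pow_succ']
  exact mul_le_mul_of_nonneg_left pow_le θ_pos.le

/-- A growth by time `k + 1` with one more delay can only fail if the growth by time `k` has failed
with at most one delay less. -/
lemma pr_not_hasGrown_resample_le (regime : IsGrowthRegime n d δ η θ) (hk : k < n)
    (ω : SymSigns (Fin n)) :
    pr (fun x => ¬ HasGrown d θ (k + 1) (f + 1) (resample ω ⟨k, hk⟩ x)) ≤
      ind (¬ HasGrown d θ k (f + 1) ω) + η * ind (¬ HasGrown d θ k f ω) := by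
  have η_pos := regime.η_pos
  by_cases grown : HasGrown d θ k f ω
  · simp only [pr, ind_neg (not_not.2 (grown.of_delay hk _)), Fintype.expect_const]
    exact add_nonneg (ind_nonneg _) (mul_nonneg η_pos.le (ind_nonneg _))
  rw [ind_pos grown, mul_one]
  by_cases grown_succ : HasGrown d θ k (f + 1) ω
  · exact (grown_succ.pr_not_succ_le regime hk).trans (le_add_of_nonneg_left (ind_nonneg _))
  · rw [ind_pos grown_succ]
    exact (pr_le_one _).trans (le_add_of_nonneg_right η_pos.le)

lemma pr_not_hasGrown_le (regime : IsGrowthRegime n d δ η θ) (j f : ℕ) (hj : d + j ≤ n) :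
    pr (fun ω : SymSigns (Fin n) => ¬ HasGrown d θ (d + j) f ω) ≤ 2 ^ j * η ^ f := by
  have η_pos := regime.η_pos
  induction j generalizing f with
  | zero =>
    have grown : ∀ ω : SymSigns (Fin n), HasGrown d θ (d + 0) f ω := fun ω =>
      ⟨∅, empty_subset _, by simp, by simp, Or.inl rfl⟩
    simp only [pr, ind_neg (not_not.2 (grown _)), Fintype.expect_const]
    positivity
  | succ j ih =>
    cases f with
    | zero =>
      refine (pr_le_one _).trans ?_
      rw [pow_zero, mul_one]
      exact one_le_pow₀ one_le_two
    | succ f =>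
      have hk : d + j < n := by omega
      rw [pr, expect_resample_row ⟨d + j, hk⟩]
      refine (expect_le_expect fun ω _ => pr_not_hasGrown_resample_le regime hk ω).trans ?_
      rw [expect_add_distrib, ← mul_expect]
      calc _ ≤ 2 ^ j * η ^ (f + 1) + η * (2 ^ j * η ^ f) :=
            add_le_add (ih _ hk.le) (mul_le_mul_of_nonneg_left (ih _ hk.le) η_pos.le)
        _ = _ := by ring

/-- There are at most `2 ^ n` minors with given rows, so one of them carries a `2 ^ n`-th of the
mass. -/
lemma exists_le_abs_subPer {A : Finset (Fin n)} (hΛ : 0 < Λ)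
    (h : Λ ^ 2 * 2 ^ n ≤ offPrincipalMass k ω A) :
    ∃ B ⊆ initSeg n k, #B = #A ∧ B ≠ A ∧ Λ ≤ |subPer (signMatrix ω) A B| := by
  let candidates := (powersetCard #A (initSeg n k)).erase A
  have card_le : (#candidates : ℝ) ≤ 2 ^ n := by
    have := card_le_univ candidates
    rw [Fintype.card_finset, Fintype.card_fin] at this
    exact_mod_cast this
  have candidates_nonempty : candidates.Nonempty := by
    by_contra hempty
    have candidates_eq : (powersetCard #A (initSeg n k)).erase A = ∅ :=
      not_nonempty_iff_eq_empty.1 hempty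
    rw [offPrincipalMass, candidates_eq, sum_empty] at h
    exact h.not_gt (by positivity)
  obtain ⟨B, hB, sq_le⟩ := exists_le_of_sum_le candidates_nonempty
    (f := fun _ => Λ ^ 2) (g := fun B => subPer (signMatrix ω) A B ^ 2) (by
      rw [sum_const, nsmul_eq_mul, mul_comm]
      exact (mul_le_mul_of_nonneg_left card_le (sq_nonneg Λ)).trans h)
  obtain ⟨hBA, hBp⟩ := mem_erase.1 hB
  obtain ⟨hB_sub, hB_card⟩ := mem_powersetCard.1 hBp
  exact ⟨B, hB_sub, hB_card, hBA, (le_abs_self Λ).trans (sq_le_sq.1 sq_le)⟩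

lemma isHeavyPair_sdiff {A B : Finset (Fin n)} (hΛ : 0 < Λ) (hA : A ⊆ initSeg n k)
    (hB : B ⊆ initSeg n k) (card_eq : #B = #A) (hBA : B ≠ A)
    (le_abs : Λ ≤ |subPer (signMatrix ω) A B|) :
    IsHeavyPair Λ k ω (initSeg n k \ A) (initSeg n k \ B) where
  row_subset := sdiff_subset
  col_subset := sdiff_subset
  card_eq := by rw [card_sdiff_of_subset hA, card_sdiff_of_subset hB, card_eq]
  nonempty_sdiff := by
    rw [sdiff_nonempty]
    intro hsub
    refine hBA (eq_of_subset_of_card_le (fun b hb => ?_) card_eq.ge)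
    by_contra hbA
    exact (mem_sdiff.1 (hsub (mem_sdiff.2 ⟨hB hb, hbA⟩))).2 hb
  le_abs := by
    rw [Finset.sdiff_sdiff_eq_self hA, Finset.sdiff_sdiff_eq_self hB]
    refine le_trans ?_ le_abs
    exact mul_le_of_le_one_right hΛ.le (pow_le_one₀ (by norm_num) (by norm_num))

lemma HasGrown.potential_le (hθ : 1 ≤ θ) (hΛ : 0 < Λ) (hΛθ : Λ ^ 2 * 2 ^ n ≤ θ ^ (k - d - f))
    (hk : d + f < k) (hkn : k ≤ n) (h : HasGrown d θ k f ω) : potential Λ k ω ≤ 4 * (d + f) := by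
  obtain ⟨A, hA, le_time, time_le, mass_le⟩ := h
  have hA_ne : A ≠ ∅ := by
    rintro rfl
    rw [card_empty] at time_le
    omega
  have pow_le : θ ^ (k - d - f) ≤ θ ^ #A := pow_le_pow_right₀ hθ (by omega)
  obtain ⟨B, hB, card_eq, hBA, le_abs⟩ :=
    exists_le_abs_subPer hΛ (hΛθ.trans (pow_le.trans (mass_le.resolve_left hA_ne)))
  refine (isHeavyPair_sdiff hΛ hA hB card_eq hBA le_abs).potential_le.trans ?_
  have card_rows : #(initSeg n k \ A) = k - #A := by
    rw [card_sdiff_of_subset hA, card_initSeg hkn]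
  have card_diff : #((initSeg n k \ A) \ (initSeg n k \ B)) ≤ #(initSeg n k \ A) :=
    card_le_card sdiff_subset
  rw [weight]
  omega

lemma pr_not_potential_le_le (regime : IsGrowthRegime n d δ η θ) (hΛ : 0 < Λ)
    (hΛθ : Λ ^ 2 * 2 ^ n ≤ θ ^ (k - d - f)) (hk : d + f < k) (hkn : k ≤ n) :
    pr (fun ω : SymSigns (Fin n) => ¬ potential Λ k ω ≤ 4 * (d + f)) ≤ 2 ^ n * η ^ f := by
  obtain ⟨j, rfl⟩ := Nat.exists_eq_add_of_le (by omega : d ≤ k)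
  have η_pos := regime.η_pos
  calc pr (fun ω : SymSigns (Fin n) => ¬ potential Λ (d + j) ω ≤ 4 * (d + f))
      ≤ pr fun ω : SymSigns (Fin n) => ¬ HasGrown d θ (d + j) f ω :=
        pr_mono fun ω => mt fun h => h.potential_le regime.one_le_θ hΛ hΛθ hk hkn
    _ ≤ 2 ^ j * η ^ f := pr_not_hasGrown_le regime j f hkn
    _ ≤ 2 ^ n * η ^ f := by
        gcongr
        · exact one_le_two
        · omega

end Growth

section Decoupling

/-- Two copies of the variables outside `S` are coupled through the common variables in `S`, so that
terms depending only on the latter cancel in the difference. -/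
lemma sq_pr_abs_sub_lt_le {ι : Type*} [Fintype ι] [DecidableEq ι] (S : Finset ι)
    (F : (ι → Bool) → ℝ) (a r : ℝ) :
    (pr fun x => |F x - a| < r) ^ 2 ≤
      𝔼 x', 𝔼 x, pr fun y => |F (S.piecewise y x) - F (S.piecewise y x')| < 2 * r := by
  let E (y x : ι → Bool) : Prop := |F (S.piecewise y x) - a| < r
  calc (pr fun x => |F x - a| < r) ^ 2
      = (𝔼 y, 𝔼 x, ind (E y x)) ^ 2 := by rw [pr, expect_piecewise S, expect_comm]
    _ ≤ 𝔼 y, (𝔼 x, ind (E y x)) ^ 2 := sq_expect_le_expect_sq _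
    _ = 𝔼 y, 𝔼 x', 𝔼 x, ind (E y x ∧ E y x') := by
        simp only [ind_and, ← expect_mul, ← mul_expect, sq]
    _ = 𝔼 x', 𝔼 x, 𝔼 y, ind (E y x ∧ E y x') := by
        rw [expect_comm]
        exact expect_congr rfl fun x' _ => expect_comm _ _ _
    _ ≤ _ := by
        refine expect_le_expect fun x' _ => expect_le_expect fun x _ => pr_mono fun y h => ?_
        calc |F (S.piecewise y x) - F (S.piecewise y x')|
            ≤ |F (S.piecewise y x) - a| + |F (S.piecewise y x') - a| := by
              rw [abs_sub_comm (F (S.piecewise y x')) a]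
              exact abs_sub_le _ _ _
          _ < 2 * r := by linarith [h.1, h.2]

end Decoupling

section LastRow

variable {n t : ℕ} {Λ : ℝ}

/-- The part involving only the signs in `S` of the quadratic form that arises in the expansion
along a new row and column `t`. -/
noncomputable def minorQuadForm (ω : SymSigns (Fin n)) (t : ℕ) (S : Finset (Fin n))
    (x : Fin n → Bool) : ℝ :=
  ∑ b ∈ S, ∑ a ∈ S, rad (x b) * rad (x a) *
    subPer (signMatrix ω) ((initSeg n t).erase a) ((initSeg n t).erase b)

lemma minorQuadForm_congr (ω : SymSigns (Fin n)) {S : Finset (Fin n)} {x y : Fin n → Bool}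
    (h : ∀ i ∈ S, x i = y i) : minorQuadForm ω t S x = minorQuadForm ω t S y :=
  sum_congr rfl fun b hb => sum_congr rfl fun a ha => by rw [h b hb, h a ha]

/-- The coefficient of the sign `b` in the upper half, in the part of the quadratic form that is
bilinear in the two halves. -/
noncomputable def crossForm (ω : SymSigns (Fin n)) (t : ℕ) (b : Fin n) (x : Fin n → Bool) : ℝ :=
  ∑ a ∈ lowerHalf n t, rad (x a) *
    (2 * subPer (signMatrix ω) ((initSeg n t).erase b) ((initSeg n t).erase a))

lemma crossForm_congr (ω : SymSigns (Fin n)) {x y : Fin n → Bool} (b : Fin n)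
    (h : ∀ i ∈ lowerHalf n t, x i = y i) : crossForm ω t b x = crossForm ω t b y :=
  sum_congr rfl fun a ha => by rw [h a ha]

lemma disjoint_lowerHalf_upperHalf : Disjoint (lowerHalf n t) (upperHalf n t) := disjoint_sdiff

lemma minorQuadForm_initSeg (ω : SymSigns (Fin n)) (x : Fin n → Bool) :
    minorQuadForm ω t (initSeg n t) x =
      minorQuadForm ω t (lowerHalf n t) x + minorQuadForm ω t (upperHalf n t) x +
        ∑ b ∈ upperHalf n t, rad (x b) * crossForm ω t b x := by
  let L := lowerHalf n t
  let H := upperHalf n t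
  let P (a b : Fin n) : ℝ := subPer (signMatrix ω) ((initSeg n t).erase a) ((initSeg n t).erase b)
  have P_comm : ∀ a b, P a b = P b a := fun a b => subPer_signMatrix_comm ω _ _
  have initSeg_eq : initSeg n t = L ∪ H := (union_sdiff_of_subset lowerHalf_subset).symm
  have cross_symm : ∑ b ∈ L, ∑ a ∈ H, rad (x b) * rad (x a) * P a b =
      ∑ b ∈ H, ∑ a ∈ L, rad (x b) * rad (x a) * P a b := by
    rw [sum_comm]
    exact sum_congr rfl fun b _ => sum_congr rfl fun a _ => by
      rw [P_comm b a, mul_comm (rad (x a))]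
  have cross_eq : ∑ b ∈ H, rad (x b) * crossForm ω t b x =
      2 * ∑ b ∈ H, ∑ a ∈ L, rad (x b) * rad (x a) * P a b := by
    simp only [crossForm, mul_sum]
    refine sum_congr rfl fun b _ => sum_congr rfl fun a _ => ?_
    change rad (x b) * (rad (x a) * (2 * P b a)) = _
    rw [P_comm b a]
    ring
  calc minorQuadForm ω t (initSeg n t) x
      = ∑ b ∈ L ∪ H, ∑ a ∈ L ∪ H, rad (x b) * rad (x a) * P a b := by
        rw [minorQuadForm, ← initSeg_eq]
    _ = (∑ b ∈ L, ∑ a ∈ L, rad (x b) * rad (x a) * P a b +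
          ∑ b ∈ H, ∑ a ∈ H, rad (x b) * rad (x a) * P a b) +
          2 * ∑ b ∈ H, ∑ a ∈ L, rad (x b) * rad (x a) * P a b := by
        simp only [sum_union disjoint_lowerHalf_upperHalf, sum_add_distrib, cross_symm, L, H]
        ring
    _ = _ := by rw [← cross_eq]; rfl

lemma perm_resample_last (ht : t < n) (last : t + 1 = n) (ω : SymSigns (Fin n))
    (x : Fin n → Bool) :
    perm (signMatrix (resample ω ⟨t, ht⟩ x)) =
      rad (x ⟨t, ht⟩) * subPer (signMatrix ω) (initSeg n t) (initSeg n t) +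
        minorQuadForm ω t (initSeg n t) x := by
  have univ_eq : univ = insert (⟨t, ht⟩ : Fin n) (initSeg n t) := by
    rw [← initSeg_succ ht, last, initSeg_self]
  rw [← subPer_univ, univ_eq,
    subPer_resample_insert_insert ω x (notMem_initSeg ht) (notMem_initSeg ht), minorQuadForm]

lemma perm_resample_piecewise (ht : t < n) (last : t + 1 = n) (ω : SymSigns (Fin n))
    (x y : Fin n → Bool) :
    perm (signMatrix (resample ω ⟨t, ht⟩ ((upperHalf n t).piecewise y x))) =
      (rad (x ⟨t, ht⟩) * subPer (signMatrix ω) (initSeg n t) (initSeg n t) +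
        minorQuadForm ω t (lowerHalf n t) x) + minorQuadForm ω t (upperHalf n t) y +
        ∑ b ∈ upperHalf n t, rad (y b) * crossForm ω t b x := by
  set z := (upperHalf n t).piecewise y x
  have z_upper : ∀ i ∈ upperHalf n t, z i = y i := fun i hi => piecewise_eq_of_mem _ _ _ hi
  have z_lower : ∀ i ∈ lowerHalf n t, z i = x i := fun i hi =>
    piecewise_eq_of_notMem _ _ _ (disjoint_left.1 disjoint_lowerHalf_upperHalf hi)
  have z_last : z ⟨t, ht⟩ = x ⟨t, ht⟩ :=
    piecewise_eq_of_notMem _ _ _ fun h => notMem_initSeg ht (upperHalf_subset h)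
  have cross_eq : ∑ b ∈ upperHalf n t, rad (z b) * crossForm ω t b z =
      ∑ b ∈ upperHalf n t, rad (y b) * crossForm ω t b x :=
    sum_congr rfl fun b hb => by rw [z_upper b hb, crossForm_congr ω b z_lower]
  rw [perm_resample_last ht last, minorQuadForm_initSeg, minorQuadForm_congr ω z_upper,
    minorQuadForm_congr ω z_lower, z_last, cross_eq]
  ring

lemma IsDense.expect_pr_abs_sum_crossForm_sub_lt_le (hΛ : 0 < Λ) (two_le : 2 ≤ t) (ht : t ≤ n)
    {ω : SymSigns (Fin n)} (h : IsDense Λ t ω) (x' : Fin n → Bool) (g : (Fin n → Bool) → ℝ) :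
    𝔼 x, pr (fun y : Fin n → Bool =>
      |∑ b ∈ upperHalf n t, rad (y b) * (crossForm ω t b x - crossForm ω t b x') + g x| <
        2 * threshold Λ t) ≤ densityError t := by
  let c (b a : Fin n) : ℝ := if a ∈ lowerHalf n t then
    2 * subPer (signMatrix ω) ((initSeg n t).erase b) ((initSeg n t).erase a) else 0
  let G (b : Fin n) (x : Fin n → Bool) : ℝ :=
    if b ∈ upperHalf n t then crossForm ω t b x - crossForm ω t b x' else 0
  have crossForm_eq : ∀ b x, crossForm ω t b x = ∑ a, rad (x a) * c b a := fun b x => by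
    simp only [c, mul_ite, mul_zero, sum_ite_mem, univ_inter, crossForm]
  have sum_G : ∀ x y : Fin n → Bool, ∑ b, rad (y b) * G b x =
      ∑ b ∈ upperHalf n t, rad (y b) * (crossForm ω t b x - crossForm ω t b x') := fun x y => by
    simp only [G, mul_ite, mul_zero, sum_ite_mem, univ_inter]
  have heavy_iff : ∀ b, ∀ a ∈ lowerHalf n t,
      IsHeavyMinor Λ t ω b a ↔ 2 * threshold Λ t ≤ |c b a| := fun b a ha => by
    simp only [c, if_pos ha]
    rw [abs_mul, abs_two, mul_le_mul_iff_right₀ two_pos, IsHeavyMinor]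
  have bilinear_lt := expect_pr_abs_bilinear_lt_le c (fun b => -crossForm ω t b x') G g
    (mul_pos two_pos (threshold_pos hΛ t)) (half_pos lyapunovRate_pos)
    (lowerHalf_nonempty two_le ht) (upperHalf_nonempty two_le ht)
    (fun b hb x => by rw [← crossForm_eq, ← sub_eq_add_neg]; exact if_pos hb)
    (h.trans_eq (sum_congr rfl fun b _ => sum_congr rfl fun a ha => by rw [heavy_iff b a ha]))
  simpa only [sum_G, card_lowerHalf ht, card_upperHalf ht, densityError] using bilinear_lt

lemma IsDense.pr_abs_perm_sub_lt_le (hΛ : 0 < Λ) (two_le : 2 ≤ t) (ht : t < n)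
    (last : t + 1 = n) {ω : SymSigns (Fin n)} (h : IsDense Λ t ω) (a : ℝ) :
    pr (fun x => |perm (signMatrix (resample ω ⟨t, ht⟩ x)) - a| < threshold Λ t) ≤
      √(densityError t) := by
  let q (x : Fin n → Bool) : ℝ :=
    rad (x ⟨t, ht⟩) * subPer (signMatrix ω) (initSeg n t) (initSeg n t) +
      minorQuadForm ω t (lowerHalf n t) x
  refine Real.le_sqrt_of_sq_le <| (sq_pr_abs_sub_lt_le (upperHalf n t) _ a _).trans <|
    expect_le_of_forall_le fun x' => ?_
  refine le_trans (le_of_eq ?_)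
    (h.expect_pr_abs_sum_crossForm_sub_lt_le hΛ two_le ht.le x' fun x => q x - q x')
  refine expect_congr rfl fun x _ => congrArg pr (funext fun y => ?_)
  simp only [perm_resample_piecewise ht last, mul_sub, sum_sub_distrib, q]
  congr! 2
  ring

end LastRow

section FixedParameters

variable {n k : ℕ} {Λ : ℝ}

/-- A common bound for the `densityError t` with `n / 2 ≤ t`. -/
noncomputable def densityErrorBound (n : ℕ) : ℝ := 24 / √(lyapunovRate * n)

lemma densityErrorBound_nonneg (n : ℕ) : 0 ≤ densityErrorBound n := by
  unfold densityErrorBound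
  positivity

lemma densityError_le {t : ℕ} (two_le : 2 ≤ t) (hn : 0 < n) (ht : n ≤ 2 * t) :
    densityError t ≤ densityErrorBound n := by
  have rate_pos := lyapunovRate_pos
  have : 0 < √(lyapunovRate * n) := by positivity
  have sqrt_div_eight : √(lyapunovRate * n) / 8 = √(lyapunovRate * (n / 64)) := by
    rw [← mul_div_assoc, Real.sqrt_div (by positivity), show (64 : ℝ) = 8 ^ 2 by norm_num,
      Real.sqrt_sq (by norm_num)]
  have lower_le : √(lyapunovRate * n) / 8 ≤ √(lyapunovRate / 2 * (t / 2 : ℕ) / 2) := by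
    have : (n : ℝ) ≤ 8 * (t / 2 : ℕ) := by exact_mod_cast (by omega : n ≤ 8 * (t / 2))
    rw [sqrt_div_eight]
    exact Real.sqrt_le_sqrt (by nlinarith)
  have upper_le : √(lyapunovRate * n) / 8 ≤ √(lyapunovRate / 2 * (t - t / 2 : ℕ) / 4) := by
    have : (n : ℝ) ≤ 8 * (t - t / 2 : ℕ) := by exact_mod_cast (by omega : n ≤ 8 * (t - t / 2))
    rw [sqrt_div_eight]
    exact Real.sqrt_le_sqrt (by nlinarith)
  calc densityError t
      ≤ 2 / (√(lyapunovRate * n) / 8) + 1 / (√(lyapunovRate * n) / 8) := by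
        unfold densityError
        gcongr
    _ = densityErrorBound n := by
        unfold densityErrorBound
        field_simp
        norm_num

lemma one_sub_lyapunovRate_nonneg : 0 ≤ 1 - lyapunovRate / 2 := by norm_num [lyapunovRate]

lemma sparseMass_add_two_mul_le (hΛ : 0 < Λ) (hn : n ≤ 2 * k) {ξ : ℝ}
    (hξ : pr (fun ω : SymSigns (Fin n) => potential Λ k ω = 4 * n + 1) ≤ ξ) {j : ℕ}
    (hj : k + 2 * j + 1 ≤ n) :
    sparseMass n Λ (k + 2 * j) ≤ (1 - lyapunovRate / 2) ^ j * sparseMass n Λ k +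
      4 / lyapunovRate * (lyapunov 3 * densityErrorBound n + lyapunov (4 * n + 1) * ξ) := by
  set E := lyapunov 3 * densityErrorBound n + lyapunov (4 * n + 1) * ξ
  have rate_pos := lyapunovRate_pos
  have E_nonneg : 0 ≤ E := add_nonneg
    (mul_nonneg (lyapunov_nonneg _) (densityErrorBound_nonneg n))
    (mul_nonneg (lyapunov_nonneg _) ((pr_nonneg _).trans hξ))
  induction j with
  | zero =>
    rw [mul_zero, add_zero, pow_zero, one_mul]
    exact le_add_of_nonneg_right (by positivity)
  | succ j ih =>
    have cap_le : pr (fun ω : SymSigns (Fin n) => potential Λ (k + 2 * j) ω = 4 * n + 1) ≤ ξ :=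
      (pr_mono fun ω => potential_eq_cap_of_le hΛ (Nat.le_add_right k _) (by omega)).trans hξ
    have error_le : lyapunov 3 * densityError (k + 2 * j) + lyapunov (4 * n + 1) *
        pr (fun ω : SymSigns (Fin n) => potential Λ (k + 2 * j) ω = 4 * n + 1) ≤ E :=
      add_le_add
        (mul_le_mul_of_nonneg_left (densityError_le (by omega) (by omega) (by omega))
          (lyapunov_nonneg _))
        (mul_le_mul_of_nonneg_left cap_le (lyapunov_nonneg _))
    calc sparseMass n Λ (k + 2 * j + 2)
        ≤ (1 - lyapunovRate / 2) * sparseMass n Λ (k + 2 * j) + 2 * E :=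
          (sparseMass_add_two_le hΛ (by omega) (by omega)).trans (by linarith)
      _ ≤ (1 - lyapunovRate / 2) *
            ((1 - lyapunovRate / 2) ^ j * sparseMass n Λ k + 4 / lyapunovRate * E) + 2 * E := by
          gcongr
          · exact one_sub_lyapunovRate_nonneg
          · exact ih (by omega)
      _ = _ := by
          field_simp
          ring

lemma sparseMass_le {m : ℕ} {ξ : ℝ}
    (hξ : pr (fun ω : SymSigns (Fin n) => ¬ potential Λ k ω ≤ m) ≤ ξ) :
    sparseMass n Λ k ≤ lyapunov m + lyapunov (4 * n + 1) * ξ := by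
  have lyapunov_le : ∀ ω : SymSigns (Fin n), lyapunov (potential Λ k ω) ≤
      lyapunov m + lyapunov (4 * n + 1) * ind (¬ potential Λ k ω ≤ m) := fun ω => by
    by_cases h : potential Λ k ω ≤ m
    · rw [ind_neg (not_not.2 h), mul_zero, add_zero]
      exact lyapunov_mono h
    · rw [ind_pos h, mul_one]
      exact (lyapunov_mono (potential_le_cap Λ k ω)).trans
        (le_add_of_nonneg_left (lyapunov_nonneg m))
  calc sparseMass n Λ k
      ≤ 𝔼 ω : SymSigns (Fin n),
          (lyapunov m + lyapunov (4 * n + 1) * ind (¬ potential Λ k ω ≤ m)) :=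
        expect_le_expect fun ω _ =>
          (mul_le_of_le_one_right (lyapunov_nonneg _) (ind_le_one _)).trans (lyapunov_le ω)
    _ = lyapunov m + lyapunov (4 * n + 1) *
          pr (fun ω : SymSigns (Fin n) => ¬ potential Λ k ω ≤ m) := by
        rw [expect_add_distrib, Fintype.expect_const, ← mul_expect, pr]
    _ ≤ _ := by
        gcongr
        exact lyapunov_nonneg _

lemma pr_abs_perm_sub_lt_le_sparseMass_add {t : ℕ} (hΛ : 0 < Λ) (two_le : 2 ≤ t)
    (last : t + 1 = n) (a : ℝ) :
    pr (fun ω : SymSigns (Fin n) => |perm (signMatrix ω) - a| < threshold Λ t) ≤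
      sparseMass n Λ t + √(densityError t) := by
  have ht : t < n := by omega
  have pr_le : ∀ ω : SymSigns (Fin n),
      pr (fun x => |perm (signMatrix (resample ω ⟨t, ht⟩ x)) - a| < threshold Λ t) ≤
        lyapunov (potential Λ t ω) * ind (¬ IsDense Λ t ω) + √(densityError t) := fun ω => by
    by_cases dense : IsDense Λ t ω
    · rw [ind_neg (not_not.2 dense), mul_zero, zero_add]
      exact dense.pr_abs_perm_sub_lt_le hΛ two_le ht last a
    · rw [ind_pos dense, mul_one]
      exact (pr_le_one _).trans <| (one_le_lyapunov _).trans <|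
        le_add_of_nonneg_right (Real.sqrt_nonneg _)
  rw [pr, expect_resample_row ⟨t, ht⟩]
  refine (expect_le_expect fun ω _ => pr_le ω).trans_eq ?_
  rw [expect_add_distrib, Fintype.expect_const, sparseMass]

/-- Growth in the first `k` rounds, descent in the next `2 * j`, and decoupling in the last. -/
lemma pr_abs_perm_sub_lt_threshold_le {d f j : ℕ} {δ η θ : ℝ} (regime : IsGrowthRegime n d δ η θ)
    (hΛ : 0 < Λ) (hΛθ : Λ ^ 2 * 2 ^ n ≤ θ ^ (k - d - f)) (hk : d + f < k)
    (rounds : k + 2 * j + 1 = n) (two_le : 2 ≤ k) (hn : n ≤ 2 * k) (a : ℝ) :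
    pr (fun ω : SymSigns (Fin n) => |perm (signMatrix ω) - a| < threshold Λ (k + 2 * j)) ≤
      (1 - lyapunovRate / 2) ^ j *
        (lyapunov (4 * (d + f)) + lyapunov (4 * n + 1) * (2 ^ n * η ^ f)) +
      4 / lyapunovRate *
        (lyapunov 3 * densityErrorBound n + lyapunov (4 * n + 1) * (2 ^ n * η ^ f)) +
      √(densityErrorBound n) := by
  have growth := pr_not_potential_le_le regime hΛ hΛθ hk (by omega)
  have cap_le : pr (fun ω : SymSigns (Fin n) => potential Λ k ω = 4 * n + 1) ≤ 2 ^ n * η ^ f :=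
    (pr_mono fun ω h => by omega).trans growth
  refine (pr_abs_perm_sub_lt_le_sparseMass_add hΛ (by omega) rounds a).trans (add_le_add ?_ ?_)
  · refine (sparseMass_add_two_mul_le hΛ hn cap_le rounds.le).trans (add_le_add_left ?_ _)
    exact mul_le_mul_of_nonneg_left (sparseMass_le growth)
      (pow_nonneg one_sub_lyapunovRate_nonneg j)
  · exact Real.sqrt_le_sqrt (densityError_le (by omega) (by omega) (by omega))

end FixedParameters

section Parameters

open Filter

variable {n : ℕ} {ε γ δ η : ℝ}

lemma eventually_natCast_rpow_neg_le {s c : ℝ} (hs : 0 < s) (hc : 0 < c) :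
    ∀ᶠ n : ℕ in atTop, (n : ℝ) ^ (-s) ≤ c :=
  ((tendsto_rpow_neg_atTop hs).comp tendsto_natCast_atTop_atTop).eventually_le_const hc

lemma eventually_exp_neg_mul_le_rpow {b c : ℝ} (hb : 0 < b) (hc : 0 < c) (s : ℝ) :
    ∀ᶠ n : ℕ in atTop, Real.exp (-b * n) ≤ c * (n : ℝ) ^ s := by
  filter_upwards [tendsto_natCast_atTop_atTop.eventually
    ((isLittleO_exp_neg_mul_rpow_atTop hb s).bound hc)] with n hn
  rwa [Real.norm_of_nonneg (Real.exp_pos _).le,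
    Real.norm_of_nonneg (Real.rpow_nonneg n.cast_nonneg _)] at hn

lemma eventually_densityErrorBound_le {s c : ℝ} (hs : s < 1 / 2) (hc : 0 < c) :
    ∀ᶠ n : ℕ in atTop, densityErrorBound n ≤ c * (n : ℝ) ^ (-s) := by
  have sqrt_pos : 0 < √lyapunovRate := Real.sqrt_pos.2 lyapunovRate_pos
  filter_upwards [eventually_natCast_rpow_neg_le (sub_pos.2 hs)
    (c := √lyapunovRate / 24 * c) (by positivity), eventually_gt_atTop 0] with n rpow_le hn
  have hn₀ : (0 : ℝ) < n := by exact_mod_cast hn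
  calc densityErrorBound n
      = 24 / √lyapunovRate * (n : ℝ) ^ (-(1 / 2) : ℝ) := by
        unfold densityErrorBound
        rw [Real.sqrt_mul lyapunovRate_pos.le, Real.rpow_neg hn₀.le, ← Real.sqrt_eq_rpow]
        field_simp
    _ = 24 / √lyapunovRate * ((n : ℝ) ^ (-(1 / 2 - s)) * (n : ℝ) ^ (-s)) := by
        rw [← Real.rpow_add hn₀]
        ring_nf
    _ ≤ 24 / √lyapunovRate * (√lyapunovRate / 24 * c * (n : ℝ) ^ (-s)) := by gcongr
    _ = c * (n : ℝ) ^ (-s) := by field_simp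

lemma lyapunov_le_exp (v : ℕ) : lyapunov v ≤ 2 * Real.exp (v / 20) :=
  calc lyapunov v ≤ 2 * (21 / 20) ^ v := lyapunov_le_pow v
    _ ≤ 2 * Real.exp (1 / 20) ^ v := by
        gcongr
        linarith [Real.add_one_le_exp (1 / 20 : ℝ)]
    _ = 2 * Real.exp (v / 20) := by rw [← Real.exp_nat_mul, mul_one_div]

lemma pow_mul_lyapunov_le {d f j : ℕ} (hδ : δ = lyapunovRate * γ / 2)
    (hd : (d : ℝ) ≤ δ * n + 1) (hf : (f : ℝ) ≤ δ * n + 1) (hj : γ * n - 1 ≤ j) :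
    (1 - lyapunovRate / 2) ^ j * lyapunov (4 * (d + f)) ≤
      6 * Real.exp (-(3 / 10 * lyapunovRate * γ) * n) := by
  have rate_pos := lyapunovRate_pos
  have exponent_le : -(j * (lyapunovRate / 2)) + (4 * (d + f) : ℕ) / 20 ≤
      1 + -(3 / 10 * lyapunovRate * γ) * n := by
    have rate_le : lyapunovRate ≤ 1 / 10 := by norm_num [lyapunovRate]
    subst hδ
    push_cast
    nlinarith
  calc (1 - lyapunovRate / 2) ^ j * lyapunov (4 * (d + f))
      ≤ Real.exp (-(lyapunovRate / 2)) ^ j * (2 * Real.exp ((4 * (d + f) : ℕ) / 20)) := by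
        gcongr
        · exact lyapunov_nonneg _
        · exact one_sub_lyapunovRate_nonneg
        · exact Real.one_sub_le_exp_neg _
        · exact lyapunov_le_exp _
    _ = 2 * Real.exp (-(j * (lyapunovRate / 2)) + (4 * (d + f) : ℕ) / 20) := by
        rw [← Real.exp_nat_mul, Real.exp_add, mul_neg]
        ring
    _ ≤ 2 * Real.exp (1 + -(3 / 10 * lyapunovRate * γ) * n) := by gcongr
    _ = 2 * Real.exp 1 * Real.exp (-(3 / 10 * lyapunovRate * γ) * n) := by
        rw [Real.exp_add]
        ring
    _ ≤ 6 * Real.exp (-(3 / 10 * lyapunovRate * γ) * n) := by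
        gcongr
        linarith [Real.exp_one_lt_three]

lemma lyapunov_mul_two_pow_mul_le {f : ℕ} (hη : 0 < η) (h : η ^ f ≤ (1 / 8) ^ n) :
    lyapunov (4 * n + 1) * (2 ^ n * η ^ f) ≤ 3 * (1 / 2) ^ n :=
  calc lyapunov (4 * n + 1) * (2 ^ n * η ^ f)
      ≤ 2 * (21 / 20) ^ (4 * n + 1) * (2 ^ n * (1 / 8) ^ n) := by
        gcongr
        exact lyapunov_le_pow _
    _ = 21 / 10 * ((21 / 20) ^ 4 * 2 * (1 / 8)) ^ n := by
        rw [pow_succ, pow_mul, mul_pow, mul_pow]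
        ring
    _ ≤ 3 * (1 / 2) ^ n := by gcongr <;> norm_num

lemma eventually_errorBound_le_rpow {b : ℝ} (hb : 0 < b) : ∀ᶠ n : ℕ in atTop,
    ∀ q A X : ℝ, q ≤ 1 → 0 ≤ X → q * A ≤ 6 * Real.exp (-b * n) → X ≤ 3 * (1 / 2) ^ n →
      q * (A + X) + 4 / lyapunovRate * (lyapunov 3 * densityErrorBound n + X) +
        √(densityErrorBound n) ≤ (n : ℝ) ^ (-(1 / 8) : ℝ) := by
  have rate_pos := lyapunovRate_pos
  filter_upwards [eventually_exp_neg_mul_le_rpow hb (c := 1 / 24) (by norm_num) (-(1 / 8)),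
    eventually_exp_neg_mul_le_rpow (Real.log_pos one_lt_two) (c := lyapunovRate / 96)
      (by positivity) (-(1 / 8)),
    eventually_densityErrorBound_le (s := 1 / 8) (c := lyapunovRate / 32) (by norm_num)
      (by positivity),
    eventually_densityErrorBound_le (s := 1 / 4) (c := 1 / 16) (by norm_num) (by norm_num)]
    with n exp_le exp_log_le density_le density_le_sq q A X hq hX hA hX_le
  set y : ℝ := (n : ℝ) ^ (-(1 / 8) : ℝ) with hy
  have y_nonneg : 0 ≤ y := by positivity
  have X_le : X ≤ lyapunovRate / 32 * y := by
    have half_pow : ((1 : ℝ) / 2) ^ n = Real.exp (-Real.log 2 * n) := by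
      rw [mul_comm, Real.exp_nat_mul, Real.exp_neg, Real.exp_log two_pos, one_div]
    linarith
  have sqrt_le : √(densityErrorBound n) ≤ y / 4 := by
    refine Real.sqrt_le_iff.2 ⟨by positivity, density_le_sq.trans_eq ?_⟩
    rw [div_pow, hy, ← Real.rpow_natCast, ← Real.rpow_mul n.cast_nonneg]
    norm_num
    ring
  have descent_le : 4 / lyapunovRate * (lyapunov 3 * densityErrorBound n + X) ≤ 3 / 8 * y :=
    calc 4 / lyapunovRate * (lyapunov 3 * densityErrorBound n + X)
        ≤ 4 / lyapunovRate * (2 * (lyapunovRate / 32 * y) + lyapunovRate / 32 * y) := by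
          gcongr
          · exact densityErrorBound_nonneg n
          · norm_num [lyapunov]
      _ = 3 / 8 * y := by
          field_simp
          ring
  have mul_X_le : q * X ≤ 1 / 32 * y :=
    calc q * X ≤ X := mul_le_of_le_one_left hX hq
      _ ≤ lyapunovRate / 32 * y := X_le
      _ ≤ 1 / 32 * y := by
          gcongr
          exact lyapunovRate_lt_one.le
  rw [mul_add]
  linarith

lemma isGrowthRegime_rpow {d : ℕ} (hδ : 0 < δ) (hη : 0 < η) (hε : ε ≤ 2) (hn : 0 < n)
    (hd : δ * n ≤ d) (rpow_half_le : (n : ℝ) ^ (-(ε / 2)) ≤ δ / 2)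
    (rpow_quarter_le : (n : ℝ) ^ (-(ε / 4)) ≤ η * (η * δ / 32) / 2)
    (rpow_le : (n : ℝ) ^ (-(1 / 2) : ℝ) ≤ η * √(η * δ / 32) / 2) :
    IsGrowthRegime n d δ η ((n : ℝ) ^ (1 - ε / 2)) where
  δ_pos := hδ
  η_pos := hη
  one_le_θ := Real.one_le_rpow (by exact_mod_cast hn) (by linarith)
  mul_le_delay := hd
  two_mul_le := by
    rw [sub_eq_add_neg, Real.rpow_add (by exact_mod_cast hn), Real.rpow_one]
    nlinarith [n.cast_nonneg (α := ℝ)]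
  smallBall_le := by
    have hn₀ : (0 : ℝ) < n := by exact_mod_cast hn
    set m := η * δ / 32 with hm
    have m_pos : 0 < m := by positivity
    have sqrt_n_pos : 0 < √(n : ℝ) := Real.sqrt_pos.2 hn₀
    have sqrt_rpow : √((n : ℝ) ^ (1 - ε / 2)) = √n * (n : ℝ) ^ (-(ε / 4)) := by
      rw [Real.sqrt_eq_rpow, Real.sqrt_eq_rpow, ← Real.rpow_mul hn₀.le, ← Real.rpow_add hn₀]
      ring_nf
    have one_le : 1 ≤ η / 2 * √(m * n) := by
      rw [Real.rpow_neg hn₀.le, ← Real.sqrt_eq_rpow, inv_eq_one_div, div_le_iff₀ sqrt_n_pos]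
        at rpow_le
      rw [Real.sqrt_mul m_pos.le]
      linarith
    have radius_le : √((n : ℝ) ^ (1 - ε / 2)) / √m ≤ η / 2 * √(m * n) :=
      calc √((n : ℝ) ^ (1 - ε / 2)) / √m
          ≤ √n * (η * m / 2) / √m := by
            rw [sqrt_rpow]
            gcongr
        _ = η / 2 * √(m * n) := by
            rw [Real.sqrt_mul m_pos.le, div_eq_iff (Real.sqrt_pos.2 m_pos).ne']
            linear_combination -(√n * η / 2) * Real.mul_self_sqrt m_pos.le
    rw [div_le_iff₀ (by positivity)]
    linarith

lemma rpow_mul_five_pow_le_rpow_pow {M : ℕ} (hε : 0 < ε) (hε_le : ε ≤ 1 / 2) (hn : 0 < n)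
    (hM : (1 - 3 * (ε / 8)) * n ≤ M) (five_le : 5 ≤ (n : ℝ) ^ ε) :
    (n : ℝ) ^ ((n : ℝ) - 2 * ε * n) * 5 ^ n ≤ ((n : ℝ) ^ (1 - ε / 2)) ^ M := by
  have hn₀ : (0 : ℝ) < n := by exact_mod_cast hn
  have exponent_le : (n : ℝ) - 2 * ε * n + ε * n ≤ (1 - ε / 2) * M :=
    calc (n : ℝ) - 2 * ε * n + ε * n
        ≤ (1 - ε / 2) * ((1 - 3 * (ε / 8)) * n) := by
          nlinarith [mul_pos hε hn₀, mul_pos (mul_pos hε hε) hn₀]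
      _ ≤ (1 - ε / 2) * M := mul_le_mul_of_nonneg_left hM (by linarith)
  calc (n : ℝ) ^ ((n : ℝ) - 2 * ε * n) * 5 ^ n
      ≤ (n : ℝ) ^ ((n : ℝ) - 2 * ε * n) * ((n : ℝ) ^ ε) ^ n := by gcongr
    _ = (n : ℝ) ^ ((n : ℝ) - 2 * ε * n + ε * n) := by
        rw [← Real.rpow_natCast, ← Real.rpow_mul hn₀.le, ← Real.rpow_add hn₀]
    _ ≤ (n : ℝ) ^ ((1 - ε / 2) * M) :=
        Real.rpow_le_rpow_of_exponent_le (by exact_mod_cast hn) exponent_le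
    _ = ((n : ℝ) ^ (1 - ε / 2)) ^ M := by rw [← Real.rpow_natCast, ← Real.rpow_mul hn₀.le]

lemma rpow_lt_threshold {M t : ℕ} (hε : 0 < ε) (hε_le : ε ≤ 1 / 2) (hn : 0 < n) (ht : t ≤ n)
    (hM : (1 - 3 * (ε / 8)) * n ≤ M) (five_le : 5 ≤ (n : ℝ) ^ ε) :
    (n : ℝ) ^ ((n : ℝ) / 2 - ε * n) <
      threshold √(((n : ℝ) ^ (1 - ε / 2)) ^ M / 2 ^ n) t := by
  have hn₀ : (0 : ℝ) < n := by exact_mod_cast hn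
  set B := ((n : ℝ) ^ (1 - ε / 2)) ^ M
  have : 0 < B := by positivity
  have sq_lt : (n : ℝ) ^ ((n : ℝ) - 2 * ε * n) < B / 2 ^ n * ((2 / 3) ^ n) ^ 2 :=
    calc (n : ℝ) ^ ((n : ℝ) - 2 * ε * n)
        ≤ B / 5 ^ n := (le_div_iff₀ (by positivity)).2
          (rpow_mul_five_pow_le_rpow_pow hε hε_le hn hM five_le)
      _ < B / (9 / 2) ^ n := by
          gcongr
          norm_num
      _ = B / 2 ^ n * ((2 / 3) ^ n) ^ 2 := by
          rw [← pow_mul, mul_comm n, pow_mul, div_mul_eq_mul_div, mul_div_assoc, ← div_pow,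
            div_eq_mul_inv, ← inv_pow]
          norm_num
  have sq_rpow : ((n : ℝ) ^ ((n : ℝ) / 2 - ε * n)) ^ 2 = (n : ℝ) ^ ((n : ℝ) - 2 * ε * n) := by
    rw [← Real.rpow_natCast, ← Real.rpow_mul hn₀.le]
    push_cast
    ring_nf
  refine lt_of_lt_of_le (lt_of_pow_lt_pow_left₀ 2 (by positivity) ?_)
    (mul_le_mul_of_nonneg_left
      (pow_le_pow_of_le_one (by norm_num) (by norm_num) ht) (Real.sqrt_nonneg _))
  rwa [mul_pow, Real.sq_sqrt (by positivity), sq_rpow]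

/-- The final `2 * j + 1` rounds and the two delays of length `d` take up at most `3 * γ * n` of
the `n` rounds. -/
lemma exists_rounds (hδ : 0 ≤ δ) (hδγ : δ ≤ γ / 20) (hγ : γ ≤ 1 / 16) (hn : 100 ≤ γ * n) :
    ∃ d j k : ℕ, k + 2 * j + 1 = n ∧ d + d < k ∧ 2 ≤ k ∧ n ≤ 2 * k ∧ γ * n - 1 ≤ j ∧
      δ * n ≤ d ∧ d ≤ δ * n + 1 ∧ (1 - 3 * γ) * n ≤ (k - d - d : ℕ) := by
  have δn_le : δ * n ≤ γ / 20 * n := by gcongr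
  have γn_le : γ * n ≤ 1 / 16 * n := by gcongr
  have j_le : (⌊γ * n⌋₊ : ℝ) ≤ γ * n := Nat.floor_le (by linarith)
  have le_j : γ * n - 1 ≤ ⌊γ * n⌋₊ := by linarith [Nat.lt_floor_add_one (γ * n)]
  have d_le : (⌈δ * n⌉₊ : ℝ) ≤ δ * n + 1 := (Nat.ceil_lt_add_one (by positivity)).le
  have le_d : δ * n ≤ ⌈δ * n⌉₊ := Nat.le_ceil _
  generalize ⌊γ * n⌋₊ = j at j_le le_j
  generalize ⌈δ * n⌉₊ = d at d_le le_d
  have room : ((2 * j + 1 + 2 * d : ℕ) : ℝ) ≤ 3 * γ * n := by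
    push_cast
    linarith
  have half_room : 2 * (2 * j + 1 + 2 * d) + 10 ≤ n := by
    have : ((2 * (2 * j + 1 + 2 * d) + 10 : ℕ) : ℝ) ≤ n := by
      push_cast at room ⊢
      linarith
    exact_mod_cast this
  have growth_rounds : ((n - 1 - 2 * j - d - d : ℕ) : ℝ) + (2 * j + 1 + 2 * d : ℕ) = n := by
    exact_mod_cast (by omega : n - 1 - 2 * j - d - d + (2 * j + 1 + 2 * d) = n)
  exact ⟨d, j, n - 1 - 2 * j, by omega, by omega, by omega, by omega, le_j, le_d, d_le,
    by linarith⟩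

lemma rpow_one_div_pow_le {b : ℝ} {d : ℕ} (hb : 0 < b) (hb_le : b ≤ 1) (hδ : 0 < δ)
    (hd : δ * n ≤ d) : (b ^ (1 / δ)) ^ d ≤ b ^ n :=
  calc (b ^ (1 / δ)) ^ d = b ^ (1 / δ * d) := by rw [← Real.rpow_natCast, ← Real.rpow_mul hb.le]
    _ ≤ b ^ (n : ℝ) := by
        refine Real.rpow_le_rpow_of_exponent_ge hb hb_le ?_
        rw [one_div_mul_eq_div, le_div_iff₀ hδ]
        linarith
    _ = b ^ n := Real.rpow_natCast b n

/-- The parameters are `γ = ε / 8`, `δ = lyapunovRate * γ / 2` and `η = 8 ^ (-1 / δ)`: the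
contraction during `2 * j ≈ 2 * γ * n` rounds beats the value of `lyapunov` at the weight `8 * d`
with `d ≈ δ * n`, and `η ^ d ≤ 8 ^ (-n)` beats the union bound. -/
theorem eventually_prob_abs_perm_sub_le_le (hε : 0 < ε) (hε_le : ε ≤ 1 / 2) :
    ∀ᶠ n : ℕ in atTop, ∀ a : ℝ,
      prob n (fun M => |perm M - a| ≤ (n : ℝ) ^ ((n : ℝ) / 2 - ε * n)) ≤
        (n : ℝ) ^ (-(1 / 8) : ℝ) := by
  have rate_pos := lyapunovRate_pos
  obtain ⟨γ, hγ⟩ : ∃ γ, γ = ε / 8 := ⟨_, rfl⟩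
  have γ_pos : 0 < γ := by linarith
  obtain ⟨δ, hδ⟩ : ∃ δ, δ = lyapunovRate * γ / 2 := ⟨_, rfl⟩
  have δ_pos : 0 < δ := by rw [hδ]; positivity
  have δ_le : δ ≤ γ / 20 := by
    have rate_le : lyapunovRate ≤ 1 / 10 := by norm_num [lyapunovRate]
    rw [hδ]
    nlinarith
  obtain ⟨η, hη⟩ : ∃ η : ℝ, η = (1 / 8) ^ (1 / δ) := ⟨_, rfl⟩
  have η_pos : 0 < η := by rw [hη]; positivity
  filter_upwards [eventually_errorBound_le_rpow (b := 3 / 10 * lyapunovRate * γ) (by positivity),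
    eventually_natCast_rpow_neg_le (s := ε / 2) (c := δ / 2) (by positivity) (by positivity),
    eventually_natCast_rpow_neg_le (s := ε / 4) (c := η * (η * δ / 32) / 2) (by positivity)
      (by positivity),
    eventually_natCast_rpow_neg_le (s := 1 / 2) (c := η * √(η * δ / 32) / 2) (by norm_num)
      (by positivity),
    ((tendsto_rpow_atTop hε).comp tendsto_natCast_atTop_atTop).eventually_ge_atTop 5,
    (tendsto_natCast_atTop_atTop.const_mul_atTop γ_pos).eventually_ge_atTop 100]
    with n error_le rpow_half_le rpow_quarter_le rpow_le five_le hn a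
  have n_pos : 0 < n := Nat.pos_of_ne_zero fun h => by norm_num [h] at hn
  obtain ⟨d, j, k, rounds, hk, two_le, n_le, le_j, le_d, d_le, le_growth⟩ :=
    exists_rounds δ_pos.le δ_le (by linarith) hn
  have regime := isGrowthRegime_rpow δ_pos η_pos (by linarith) n_pos le_d rpow_half_le
    rpow_quarter_le rpow_le
  have ratio_pos : 0 < ((n : ℝ) ^ (1 - ε / 2)) ^ (k - d - d) / 2 ^ n := by positivity
  have le_threshold := rpow_lt_threshold (t := k + 2 * j) hε hε_le n_pos (by omega)
    (by rwa [← hγ]) five_le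
  have bound := pr_abs_perm_sub_lt_threshold_le regime (Real.sqrt_pos.2 ratio_pos)
    (by rw [Real.sq_sqrt ratio_pos.le, div_mul_cancel₀ _ (by positivity)]) hk rounds two_le n_le a
  rw [prob_eq_pr]
  refine (pr_mono fun ω h => h.trans_lt le_threshold).trans <|
    bound.trans (error_le _ _ _ ?_ ?_ ?_ ?_)
  · exact pow_le_one₀ one_sub_lyapunovRate_nonneg (by linarith)
  · exact mul_nonneg (lyapunov_nonneg _) (by positivity)
  · exact pow_mul_lyapunov_le hδ d_le d_le le_j
  · exact lyapunov_mul_two_pow_mul_le η_pos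
      (hη ▸ rpow_one_div_pow_le (by norm_num) (by norm_num) δ_pos le_d)

end Parameters

end PermanentAnticoncentration

/-- Anti-concentration version of the main theorem: there is a constant `c > 0` such that
for every `ε > 0` and all `n` sufficiently large with respect to `ε`, for every real `a`,
`Pr(|per M_n - a| ≤ n^(n/2-εn)) ≤ n^(-c)`; in particular `Pr(per M_n = a) ≤ n^(-c)`. -/
theorem per_anticoncentration :
    ∃ c : ℝ, 0 < c ∧ ∀ ε : ℝ, 0 < ε → ∃ n₀ : ℕ, ∀ n : ℕ, n₀ ≤ n → ∀ a : ℝ,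
      prob n (fun M => |perm M - a| ≤ (n : ℝ) ^ ((n : ℝ) / 2 - ε * n)) ≤ (n : ℝ) ^ (-c) ∧
      prob n (fun M => perm M = a) ≤ (n : ℝ) ^ (-c) := by
  refine ⟨1 / 8, by norm_num, fun ε hε => ?_⟩
  obtain ⟨n₀, small_ball⟩ := Filter.eventually_atTop.1 <|
    PermanentAnticoncentration.eventually_prob_abs_perm_sub_le_le (ε := min ε (1 / 2))
      (lt_min hε (by norm_num)) (min_le_right _ _)
  refine ⟨max n₀ 1, fun n hn a => ?_⟩
  have small_ball := small_ball n ((le_max_left _ _).trans hn) a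
  constructor
  · refine (PermanentAnticoncentration.prob_mono fun M hM => hM.trans ?_).trans small_ball
    have one_le : (1 : ℝ) ≤ n := by exact_mod_cast (le_max_right _ _).trans hn
    refine Real.rpow_le_rpow_of_exponent_le one_le (sub_le_sub_left ?_ _)
    exact mul_le_mul_of_nonneg_right (min_le_left _ _) n.cast_nonneg
  · refine (PermanentAnticoncentration.prob_mono fun M hM => ?_).trans small_ball
    rw [hM, sub_self, abs_zero]
    positivity
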